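/- arXiv:1401.0684 — 2 statements merged into one kernel-verified Lean document; each statement's English description precedes it below -/
import Mathlib

section
/- For each ancillary c of a labeled anchored tree T-bar there is at least one anchor of T-bar whose label is smaller than the label of c and at least one anchor of T-bar whose label is greater than the label of c. -/
open Set

universe u

/-- A topological embedding of a simple graph in the plane: vertices are mapped to
distinct points and every edge is realized by a simple arc joining the images of its
endpoints, such that two arcs of distinct edges meet only in common endpoints and no
vertex point lies in the interior of an arc. -/
structure PlaneEmbedding {V : Type u} (G : SimpleGraph V) where
  pos : V → ℝ × ℝ
  pos_inj : Function.Injective pos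
  arc : ∀ ⦃u v : V⦄, G.Adj u v → Set (ℝ × ℝ)
  arc_symm : ∀ ⦃u v : V⦄ (h : G.Adj u v), arc h.symm = arc h
  arc_curve : ∀ ⦃u v : V⦄ (h : G.Adj u v), ∃ f : ℝ → ℝ × ℝ,
    ContinuousOn f (Set.Icc 0 1) ∧ Set.InjOn f (Set.Icc 0 1) ∧
    f 0 = pos u ∧ f 1 = pos v ∧ f '' Set.Icc 0 1 = arc h
  arc_inter : ∀ ⦃u v w z : V⦄ (h₁ : G.Adj u v) (h₂ : G.Adj w z),
    s(u, v) ≠ s(w, z) → arc h₁ ∩ arc h₂ ⊆ ({pos u, pos v} ∩ {pos w, pos z} : Set (ℝ × ℝ))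
  pos_arc : ∀ ⦃u v : V⦄ (h : G.Adj u v) (w : V), pos w ∈ arc h → w = u ∨ w = v

/-- A graph is planar if it admits a topological embedding in the plane. -/
def SimpleGraph.IsPlanar {V : Type u} (G : SimpleGraph V) : Prop :=
  Nonempty (PlaneEmbedding G)

/-- The point set covered by a plane embedding. -/
def PlaneEmbedding.drawing {V : Type u} {G : SimpleGraph V} (E : PlaneEmbedding G) :
    Set (ℝ × ℝ) :=
  Set.range E.pos ∪ ⋃ (u : V) (v : V) (h : G.Adj u v), E.arc h

/-- A face of a plane embedding is a connected component of the complement of the drawing. -/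
def PlaneEmbedding.IsFace {V : Type u} {G : SimpleGraph V} (E : PlaneEmbedding G)
    (F : Set (ℝ × ℝ)) : Prop :=
  ∃ p, p ∉ E.drawing ∧ F = connectedComponentIn E.drawingᶜ p

/-- A vertex is incident to a face if its point lies on the boundary of the face. -/
def PlaneEmbedding.VertexOnFace {V : Type u} {G : SimpleGraph V} (E : PlaneEmbedding G)
    (v : V) (F : Set (ℝ × ℝ)) : Prop :=
  E.pos v ∈ closure F

/-- Maximum degree at most `d`. -/
def SimpleGraph.MaxDegreeLE {V : Type u} (G : SimpleGraph V) (d : ℕ) : Prop :=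
  ∀ v : V, (G.neighborSet v).ncard ≤ d

/-- A graph is triconnected (3-connected) if it has more than three vertices, is
connected, and stays connected after removing any two vertices. -/
def SimpleGraph.IsTriconnected {V : Type u} (G : SimpleGraph V) : Prop :=
  3 < Nat.card V ∧ G.Connected ∧
    ∀ u v : V, (G.induce {w : V | w ≠ u ∧ w ≠ v}).Connected

/-- A graph is biconnected (2-connected) if it has more than two vertices, is
connected, and stays connected after removing any single vertex. -/
def SimpleGraph.IsBiconnected {V : Type u} (G : SimpleGraph V) : Prop :=
  2 < Nat.card V ∧ G.Connected ∧ ∀ u : V, (G.induce {w : V | w ≠ u}).Connected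

/-- A graph is subhamiltonian if it is a spanning subgraph of a planar hamiltonian graph. -/
def SimpleGraph.IsSubhamiltonian {V : Type u} [Fintype V] (G : SimpleGraph V) : Prop :=
  ∃ H : SimpleGraph V, G ≤ H ∧ H.IsPlanar ∧ (letI := Classical.decEq V; H.IsHamiltonian)

/-- The graph consisting of the edges of the cyclic vertex sequence `σ`. -/
def cyclicSuccGraph {W : Type u} (σ : ZMod (Nat.card W) ≃ W) : SimpleGraph W :=
  SimpleGraph.fromRel fun u v => ∃ i, u = σ i ∧ v = σ (i + 1)

/-- The cyclic ordering `σ` of all vertices of `G` is a subhamiltonian cycle for `G` if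
adding the edges between consecutive vertices of `σ` keeps the graph planar. -/
def SimpleGraph.IsSubhamiltonianCycle {W : Type u} (G : SimpleGraph W)
    (σ : ZMod (Nat.card W) ≃ W) : Prop :=
  SimpleGraph.IsPlanar (G ⊔ cyclicSuccGraph σ)

/-- The edges (pairs of consecutive vertices) of the cyclic sequence `σ`. -/
def cycleEdges {W : Type u} (σ : ZMod (Nat.card W) ≃ W) : Set (Sym2 W) :=
  {e | ∃ i, e = s(σ i, σ (i + 1))}

/-- The subhamiltonian cycle `σ` crosses the face `F` at position `i` if the two
consecutive vertices `σ i` and `σ (i+1)` are both incident to `F` but not adjacent. -/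
def CrossesFaceAt {V : Type u} {G : SimpleGraph V} (E : PlaneEmbedding G)
    (σ : ZMod (Nat.card V) ≃ V) (F : Set (ℝ × ℝ)) (i : ZMod (Nat.card V)) : Prop :=
  E.VertexOnFace (σ i) F ∧ E.VertexOnFace (σ (i + 1)) F ∧ ¬ G.Adj (σ i) (σ (i + 1))

/-- A separating triangle: a triangle whose removal disconnects the graph. -/
def SimpleGraph.IsSepTriangle {V : Type u} (G : SimpleGraph V) (a b c : V) : Prop :=
  G.Adj a b ∧ G.Adj b c ∧ G.Adj a c ∧
    ¬ (G.induce {v : V | v ≠ a ∧ v ≠ b ∧ v ≠ c}).Connected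

section Triangle

variable {V : Type u} {G : SimpleGraph V} (E : PlaneEmbedding G) {a b c : V}

/-- The Jordan curve formed by the drawing of the triangle `a b c`. -/
def triangleDrawing (hab : G.Adj a b) (hbc : G.Adj b c) (hac : G.Adj a c) :
    Set (ℝ × ℝ) :=
  E.arc hab ∪ E.arc hbc ∪ E.arc hac

/-- The vertices strictly inside the triangle `a b c` (bounded side of the Jordan curve). -/
def insideTriangle (hab : G.Adj a b) (hbc : G.Adj b c) (hac : G.Adj a c) : Set V :=
  {v | v ≠ a ∧ v ≠ b ∧ v ≠ c ∧
    Bornology.IsBounded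
      (connectedComponentIn (triangleDrawing E hab hbc hac)ᶜ (E.pos v))}

/-- The vertices strictly outside the triangle `a b c` (unbounded side of the Jordan curve). -/
def outsideTriangle (hab : G.Adj a b) (hbc : G.Adj b c) (hac : G.Adj a c) : Set V :=
  {v | v ≠ a ∧ v ≠ b ∧ v ≠ c ∧
    ¬ Bornology.IsBounded
      (connectedComponentIn (triangleDrawing E hab hbc hac)ᶜ (E.pos v))}

end Triangle
section Blocks

variable {V : Type u} {G : SimpleGraph V} {v0 : V}

/-- The point set covered by the drawing of the edges of a closed walk. -/
def cycleDrawing (E : PlaneEmbedding G) (w : G.Walk v0 v0) : Set (ℝ × ℝ) :=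
  {p | ∃ (u v : V) (h : G.Adj u v), s(u, v) ∈ w.edges ∧ p ∈ E.arc h}

/-- The vertices of `G` strictly inside the cycle `w` (in the bounded part of the
complement of the Jordan curve drawn by `w`). -/
def insideCycle (E : PlaneEmbedding G) (w : G.Walk v0 v0) : Set V :=
  {u | u ∉ w.support ∧
    Bornology.IsBounded (connectedComponentIn (cycleDrawing E w)ᶜ (E.pos u))}

/-- `in(C)`: the subgraph of `G` induced by the vertices strictly inside the cycle. -/
def innerGraph (E : PlaneEmbedding G) (w : G.Walk v0 v0) :
    SimpleGraph ↥(insideCycle E w) :=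
  G.induce (insideCycle E w)

/-- `in⁺(C)`: the subgraph of `G` induced by the cycle together with the vertices
strictly inside it. -/
def closedInnerSet (E : PlaneEmbedding G) (w : G.Walk v0 v0) : Set V :=
  {u | u ∈ w.support} ∪ insideCycle E w

/-- The graph `in(C)` with all its bridges deleted; its connected components are the
bridge-blocks of `in(C)`. -/
def bridgelessInner (E : PlaneEmbedding G) (w : G.Walk v0 v0) :
    SimpleGraph ↥(insideCycle E w) :=
  (innerGraph E w).deleteEdges {e | (innerGraph E w).IsBridge e}

/-- Block-vertices: the bridge-blocks of `in(C)`, i.e. the connected components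
obtained after deleting all bridges of `in(C)`. -/
abbrev BlockVertex (E : PlaneEmbedding G) (w : G.Walk v0 v0) :=
  (bridgelessInner E w).ConnectedComponent

/-- The block-vertex (bridge-block) containing a given vertex of `in(C)`. -/
def blockOf (E : PlaneEmbedding G) (w : G.Walk v0 v0) (u : ↥(insideCycle E w)) :
    BlockVertex E w :=
  (bridgelessInner E w).connectedComponentMk u

/-- A block-vertex is an anchor if it is adjacent (in `G`) to a vertex of the cycle. -/
def IsAnchor (E : PlaneEmbedding G) (w : G.Walk v0 v0) (b : BlockVertex E w) : Prop :=
  ∃ u : ↥(insideCycle E w), blockOf E w u = b ∧ ∃ z ∈ w.support, G.Adj ↑u z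

/-- The graph on block-vertices: two blocks are adjacent iff some edge of `in(C)`
joins them. -/
def blockGraph (E : PlaneEmbedding G) (w : G.Walk v0 v0) :
    SimpleGraph (BlockVertex E w) :=
  SimpleGraph.fromRel fun b b' => ∃ u u' : ↥(insideCycle E w),
    blockOf E w u = b ∧ blockOf E w u' = b' ∧ (innerGraph E w).Adj u u'

/-- The ancillaries: block-vertices that are not anchors. -/
def ancillarySet (E : PlaneEmbedding G) (w : G.Walk v0 v0) : Set (BlockVertex E w) :=
  {b | ¬ IsAnchor E w b}

/-- The forest formed by the ancillaries. -/
def ancForest (E : PlaneEmbedding G) (w : G.Walk v0 v0) :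
    SimpleGraph ↥(ancillarySet E w) :=
  (blockGraph E w).induce (ancillarySet E w)

/-- The trees of the forest of ancillaries. -/
abbrev TreeIndex (E : PlaneEmbedding G) (w : G.Walk v0 v0) :=
  (ancForest E w).ConnectedComponent

/-- The ancillaries belonging to the tree `t` of the forest of ancillaries. -/
def ancillariesOf (E : PlaneEmbedding G) (w : G.Walk v0 v0) (t : TreeIndex E w) :
    Set (BlockVertex E w) :=
  {b | ∃ h : b ∈ ancillarySet E w, (ancForest E w).connectedComponentMk ⟨b, h⟩ = t}

/-- The anchors of the anchored tree of `t`: the anchors adjacent to at least one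
ancillary of `t`. -/
def anchorsOf (E : PlaneEmbedding G) (w : G.Walk v0 v0) (t : TreeIndex E w) :
    Set (BlockVertex E w) :=
  {x | IsAnchor E w x ∧ ∃ b ∈ ancillariesOf E w t, (blockGraph E w).Adj x b}

/-- The vertex set of the anchored tree of `t`. -/
def anchoredTreeSet (E : PlaneEmbedding G) (w : G.Walk v0 v0) (t : TreeIndex E w) :
    Set (BlockVertex E w) :=
  ancillariesOf E w t ∪ anchorsOf E w t

/-- The anchored tree of `t`: the tree `t` together with its anchors. -/
def anchoredTree (E : PlaneEmbedding G) (w : G.Walk v0 v0) (t : TreeIndex E w) :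
    SimpleGraph ↥(anchoredTreeSet E w t) :=
  (blockGraph E w).induce (anchoredTreeSet E w t)

end Blocks

/-- `v` lies on the (unique) path from `r` to `u` in the tree `T`; for trees this
expresses that `u` belongs to the subtree rooted at `v` when `T` is rooted at `r`. -/
def InSubtree {W : Type u} (T : SimpleGraph W) (r v u : W) : Prop :=
  ∀ p : T.Walk r u, p.IsPath → v ∈ p.support

/-- `lab` is the labeling of the tree `T`, rooted at `r`, by a pre-order traversal
(with respect to some ordering of the children of each vertex): labels are distinct,
the root gets label `0`, and the labels of each subtree form a contiguous interval
starting at the label of its root. -/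
def IsPreorderLabeling {W : Type u} (T : SimpleGraph W) (r : W) (lab : W → ℕ) : Prop :=
  Function.Injective lab ∧ lab r = 0 ∧
    ∀ v : W, lab '' {u | InSubtree T r v u} =
      Set.Ico (lab v) (lab v + Nat.card {u | InSubtree T r v u})

section Helpers

variable {V : Type u} {G : SimpleGraph V} {v0 : V}

/-- A neighbour of an inner vertex that is not on the cycle is inner. -/
theorem inside_of_adj (E : PlaneEmbedding G) (w : G.Walk v0 v0) {a b : V}
    (ha : a ∈ insideCycle E w) (hab : G.Adj a b) (hb : b ∉ w.support) :
    b ∈ insideCycle E w := by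
  obtain ⟨ha1, ha2⟩ := ha
  refine ⟨hb, ?_⟩
  obtain ⟨f, hf, -, hf0, hf1, hfi⟩ := E.arc_curve hab
  have hconn : IsPreconnected (E.arc hab) := by
    rw [← hfi]
    exact isPreconnected_Icc.image f hf
  have hpa : E.pos a ∈ E.arc hab := by
    rw [← hfi, ← hf0]
    exact ⟨0, by simp, rfl⟩
  have hpb : E.pos b ∈ E.arc hab := by
    rw [← hfi, ← hf1]
    exact ⟨1, by simp, rfl⟩
  have hsub : E.arc hab ⊆ (cycleDrawing E w)ᶜ := by
    rintro p hp ⟨u, v, h, huv, hpu⟩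
    have hu := w.fst_mem_support_of_mem_edges huv
    have hv := w.snd_mem_support_of_mem_edges huv
    have hne : s(a, b) ≠ s(u, v) := by
      intro he
      rcases Sym2.eq_iff.1 he with ⟨rfl, rfl⟩ | ⟨rfl, rfl⟩
      · exact ha1 hu
      · exact ha1 hv
    obtain ⟨h1, h2⟩ := E.arc_inter hab h hne ⟨hp, hpu⟩
    rcases h1 with h1 | h1 <;> rcases h2 with h2 | h2 <;>
      · have h3 := E.pos_inj (h1.symm.trans h2)
        subst h3
        contradiction
  have hmem := hconn.subset_connectedComponentIn hpa hsub hpb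
  rw [← connectedComponentIn_eq hmem]
  exact ha2

theorem bridgeless_le (E : PlaneEmbedding G) (w : G.Walk v0 v0) {a b : ↥(insideCycle E w)}
    (hbr : (innerGraph E w).IsBridge s(a, b)) :
    bridgelessInner E w ≤ (innerGraph E w).deleteEdges {s(a, b)} := by
  intro x y h
  rw [bridgelessInner, SimpleGraph.deleteEdges_adj] at h
  rw [SimpleGraph.deleteEdges_adj]
  refine ⟨h.1, fun h' => h.2 ?_⟩
  rw [Set.mem_singleton_iff] at h'
  rw [h']
  exact hbr

theorem reach_same_block (E : PlaneEmbedding G) (w : G.Walk v0 v0)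
    {a b x y : ↥(insideCycle E w)}
    (hbr : (innerGraph E w).IsBridge s(a, b)) (h : blockOf E w x = blockOf E w y) :
    ((innerGraph E w).deleteEdges {s(a, b)}).Reachable x y :=
  (SimpleGraph.ConnectedComponent.exact h).mono (bridgeless_le E w hbr)

/-- Two blocks joined by a block walk avoiding `c` are connected without using a given
bridge at `c`. -/
theorem reach_of_walk (E : PlaneEmbedding G) (w : G.Walk v0 v0) (t : TreeIndex E w)
    {a b : ↥(insideCycle E w)} (hbr : (innerGraph E w).IsBridge s(a, b))
    (c : ↥(anchoredTreeSet E w t)) (hac : blockOf E w a = c)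
    {u u' : ↥(anchoredTreeSet E w t)} (p : (anchoredTree E w t).Walk u u')
    (hp : c ∉ p.support) :
    ∀ x y : ↥(insideCycle E w), blockOf E w x = u → blockOf E w y = u' →
      ((innerGraph E w).deleteEdges {s(a, b)}).Reachable x y := by
  induction p with
  | nil =>
    intro x y hx hy
    exact reach_same_block E w hbr (hx.trans hy.symm)
  | @cons u m u' hadj p ih =>
    intro x y hx hy
    rw [SimpleGraph.Walk.support_cons, List.mem_cons, not_or] at hp
    have hm : c ≠ m := fun h => hp.2 (h ▸ p.start_mem_support)
    have hadj' : (blockGraph E w).Adj u m := hadj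
    have key : ∃ q q' : ↥(insideCycle E w), blockOf E w q = u ∧ blockOf E w q' = m ∧
        (innerGraph E w).Adj q q' := by
      rw [blockGraph, SimpleGraph.fromRel_adj] at hadj'
      rcases hadj'.2 with ⟨q, q', h1, h2, h3⟩ | ⟨q, q', h1, h2, h3⟩
      · exact ⟨q, q', h1, h2, h3⟩
      · exact ⟨q', q, h2, h1, h3.symm⟩
    obtain ⟨q, q', h1, h2, h3⟩ := key
    have hqa : ((innerGraph E w).deleteEdges {s(a, b)}).Adj q q' := by
      rw [SimpleGraph.deleteEdges_adj]
      refine ⟨h3, fun he => ?_⟩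
      rcases Sym2.eq_iff.1 (Set.mem_singleton_iff.1 he) with ⟨rfl, rfl⟩ | ⟨rfl, rfl⟩
      · exact hp.1 (Subtype.ext (hac.symm.trans h1))
      · exact hm (Subtype.ext (hac.symm.trans h2))
    exact ((reach_same_block E w hbr (hx.trans h1.symm)).trans hqa.reachable).trans
      (ih hp.2 q' y h2 hy)

/-- At most one edge joins `c` to the part of the anchored tree on the side of the root. -/
theorem unique_exit (E : PlaneEmbedding G) (w : G.Walk v0 v0) (t : TreeIndex E w)
    (r c : ↥(anchoredTreeSet E w t))
    {a b a' b' : ↥(insideCycle E w)} (ha : blockOf E w a = c) (ha' : blockOf E w a' = c)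
    (hab : (innerGraph E w).Adj a b) (hab' : (innerGraph E w).Adj a' b')
    (hb : ∃ h : blockOf E w b ∈ anchoredTreeSet E w t,
      ¬ InSubtree (anchoredTree E w t) r c ⟨_, h⟩)
    (hb' : ∃ h : blockOf E w b' ∈ anchoredTreeSet E w t,
      ¬ InSubtree (anchoredTree E w t) r c ⟨_, h⟩) : b = b' := by
  by_contra hne
  obtain ⟨hb1, hb2⟩ := hb
  obtain ⟨hb1', hb2'⟩ := hb'
  simp only [InSubtree, not_forall] at hb2 hb2'
  obtain ⟨p, -, hp⟩ := hb2
  obtain ⟨p', -, hp'⟩ := hb2'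
  have hbc : blockOf E w b ≠ c := fun h => hp (by
    have : c = ⟨_, hb1⟩ := Subtype.ext h.symm
    rw [this]; exact p.end_mem_support)
  have hbc' : blockOf E w b' ≠ c := fun h => hp' (by
    have : c = ⟨_, hb1'⟩ := Subtype.ext h.symm
    rw [this]; exact p'.end_mem_support)
  have hbr : (innerGraph E w).IsBridge s(a, b) := by
    by_contra hbr
    have hadj : (bridgelessInner E w).Adj a b := by
      rw [bridgelessInner, SimpleGraph.deleteEdges_adj]
      exact ⟨hab, hbr⟩
    have : blockOf E w a = blockOf E w b :=
      SimpleGraph.ConnectedComponent.sound hadj.reachable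
    exact hbc (this.symm.trans ha)
  have h1 := reach_same_block E w hbr (ha.trans ha'.symm)
  have h2 : ((innerGraph E w).deleteEdges {s(a, b)}).Adj a' b' := by
    rw [SimpleGraph.deleteEdges_adj]
    refine ⟨hab', fun he => ?_⟩
    rcases Sym2.eq_iff.1 (Set.mem_singleton_iff.1 he) with ⟨h, h'⟩ | ⟨h, h'⟩
    · exact hne h'.symm
    · exact hbc' (h' ▸ ha)
  have h3 := reach_of_walk E w t hbr c ha (p'.reverse.append p)
    (by
      rw [SimpleGraph.Walk.mem_support_append_iff, SimpleGraph.Walk.support_reverse,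
        List.mem_reverse]
      tauto) b' b rfl rfl
  exact hbr ((h1.trans h2.reachable).trans h3)

theorem blockGraph_adj_of (E : PlaneEmbedding G) (w : G.Walk v0 v0)
    {a b : ↥(insideCycle E w)} (hab : (innerGraph E w).Adj a b)
    (hne : blockOf E w a ≠ blockOf E w b) :
    (blockGraph E w).Adj (blockOf E w a) (blockOf E w b) := by
  rw [blockGraph, SimpleGraph.fromRel_adj]
  exact ⟨hne, Or.inl ⟨a, b, rfl, rfl, hab⟩⟩

/-- A block adjacent to an ancillary of `t` belongs to the anchored tree of `t`. -/
theorem mem_anchoredTreeSet_of_adj (E : PlaneEmbedding G) (w : G.Walk v0 v0)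
    (t : TreeIndex E w) {x y : BlockVertex E w} (hx : x ∈ ancillariesOf E w t)
    (hxy : (blockGraph E w).Adj x y) : y ∈ anchoredTreeSet E w t := by
  by_cases hy : IsAnchor E w y
  · exact Or.inr ⟨hy, x, hx, hxy.symm⟩
  · obtain ⟨h, rfl⟩ := hx
    refine Or.inl ⟨hy, ?_⟩
    apply SimpleGraph.ConnectedComponent.sound
    have : (ancForest E w).Adj ⟨y, hy⟩ ⟨x, h⟩ := hxy.symm
    exact this.reachable

/-- The vertices of `G` lying in a block of the subtree of `c`. -/
def lowerSet' (E : PlaneEmbedding G) (w : G.Walk v0 v0) (t : TreeIndex E w)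
    (r c : ↥(anchoredTreeSet E w t)) : Set V :=
  {v | ∃ (h : v ∈ insideCycle E w) (h' : blockOf E w ⟨v, h⟩ ∈ anchoredTreeSet E w t),
    InSubtree (anchoredTree E w t) r c ⟨_, h'⟩}

theorem exit_edge (E : PlaneEmbedding G) (w : G.Walk v0 v0) (t : TreeIndex E w)
    (r c : ↥(anchoredTreeSet E w t))
    (hS : ∀ u, InSubtree (anchoredTree E w t) r c u → ↑u ∈ ancillariesOf E w t)
    {a b : V} (ha : a ∈ lowerSet' E w t r c) (hb : b ∉ lowerSet' E w t r c)
    (hab : G.Adj a b) :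
    ∃ (ha' : a ∈ insideCycle E w) (hb' : b ∈ insideCycle E w),
      blockOf E w ⟨a, ha'⟩ = c ∧
      ∃ h : blockOf E w ⟨b, hb'⟩ ∈ anchoredTreeSet E w t,
        ¬ InSubtree (anchoredTree E w t) r c ⟨_, h⟩ := by
  obtain ⟨ha1, ha2, ha3⟩ := ha
  have hanc := hS _ ha3
  have hbs : b ∉ w.support := fun h => hanc.1 ⟨⟨a, ha1⟩, rfl, b, h, hab⟩
  have hb1 := inside_of_adj E w ha1 hab hbs
  have hadj : (innerGraph E w).Adj ⟨a, ha1⟩ ⟨b, hb1⟩ := hab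
  have hne : blockOf E w ⟨a, ha1⟩ ≠ blockOf E w ⟨b, hb1⟩ := by
    intro he
    apply hb
    refine ⟨hb1, he ▸ ha2, ?_⟩
    have : (⟨blockOf E w ⟨b, hb1⟩, he ▸ ha2⟩ : ↥(anchoredTreeSet E w t)) = ⟨_, ha2⟩ :=
      Subtype.ext he.symm
    rw [this]
    exact ha3
  have hblk := blockGraph_adj_of E w hadj hne
  have hb2 := mem_anchoredTreeSet_of_adj E w t hanc hblk
  have hb3 : ¬ InSubtree (anchoredTree E w t) r c ⟨_, hb2⟩ := fun h => hb ⟨hb1, hb2, h⟩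
  refine ⟨ha1, hb1, ?_, hb2, hb3⟩
  by_contra hac
  simp only [InSubtree, not_forall] at hb3
  obtain ⟨p, -, hp⟩ := hb3
  have hadjT : (anchoredTree E w t).Adj ⟨_, hb2⟩ ⟨_, ha2⟩ := hblk.symm
  classical
  have hin := ha3 (p.concat hadjT).bypass (SimpleGraph.Walk.bypass_isPath _)
  have hin' := SimpleGraph.Walk.support_bypass_subset_support _ hin
  rw [SimpleGraph.Walk.support_concat, List.mem_append,
    List.mem_singleton] at hin'
  rcases hin' with h | h
  · exact hp h
  · exact hac (by rw [h])

end Helpers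

/-- For each ancillary `c` of a labeled anchored tree (rooted at an
anchor, with labels given by a pre-order traversal) there is an anchor with smaller
label and an anchor with greater label. -/
theorem ancillary_label_between_anchor_labels {V : Type u} {G : SimpleGraph V}
    (hbic : G.IsBiconnected) (hdeg : G.MaxDegreeLE 4) (E : PlaneEmbedding G)
    {v0 : V} (w : G.Walk v0 v0) (hw : w.IsCycle) (t : TreeIndex E w)
    (r : ↥(anchoredTreeSet E w t)) (hr : ↑r ∈ anchorsOf E w t)
    (lab : ↥(anchoredTreeSet E w t) → ℕ)
    (hlab : IsPreorderLabeling (anchoredTree E w t) r lab)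
    (c : ↥(anchoredTreeSet E w t)) (hc : ↑c ∈ ancillariesOf E w t) :
    (∃ x : ↥(anchoredTreeSet E w t), ↑x ∈ anchorsOf E w t ∧ lab x < lab c) ∧
    (∃ y : ↥(anchoredTreeSet E w t), ↑y ∈ anchorsOf E w t ∧ lab c < lab y) := by
  obtain ⟨hinj, hroot, hint⟩ := hlab
  have hcr : c ≠ r := by
    rintro rfl
    exact hc.1 hr.1
  refine ⟨⟨r, hr, ?_⟩, ?_⟩
  · rw [hroot]
    refine Nat.pos_of_ne_zero fun h => hcr (hinj (h.trans hroot.symm))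
  by_contra hno
  have hS : ∀ u, InSubtree (anchoredTree E w t) r c u → ↑u ∈ ancillariesOf E w t := by
    intro u hu
    rcases u.2 with h | h
    · exact h
    · exfalso
      apply hno
      refine ⟨u, h, ?_⟩
      have hm : lab u ∈ lab '' {u | InSubtree (anchoredTree E w t) r c u} := ⟨u, hu, rfl⟩
      rw [hint c] at hm
      refine lt_of_le_of_ne hm.1 fun he => ?_
      have := hinj he
      subst this
      exact hc.1 h.1
  obtain ⟨x, hx⟩ : ∃ x, blockOf E w x = c := by
    exact Quot.exists_rep (c : BlockVertex E w)
  have hxU : (x : V) ∈ lowerSet' E w t r c := by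
    refine ⟨x.2, hx ▸ c.2, ?_⟩
    have : (⟨blockOf E w x, hx ▸ c.2⟩ : ↥(anchoredTreeSet E w t)) = c := Subtype.ext hx
    have hcc : InSubtree (anchoredTree E w t) r c c := fun p _ => p.end_mem_support
    exact this.symm ▸ hcc
  have hv0 : v0 ∉ lowerSet' E w t r c := by
    rintro ⟨h, -⟩
    exact h.1 w.start_mem_support
  obtain ⟨-, hconn, hbi⟩ := hbic
  obtain ⟨p⟩ := hconn.preconnected (x : V) v0
  obtain ⟨d, -, hd1, hd2⟩ := p.exists_boundary_dart _ hxU hv0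
  obtain ⟨ha, hb, hac, hbn⟩ := exit_edge E w t r c hS hd1 hd2 d.adj
  have hx' : (x : V) ≠ d.snd := fun h => hd2 (h ▸ hxU)
  have hv' : v0 ≠ d.snd := fun h => hb.1 (h ▸ w.start_mem_support)
  obtain ⟨q⟩ := (hbi d.snd).preconnected ⟨x, hx'⟩ ⟨v0, hv'⟩
  obtain ⟨d', -, hd1', hd2'⟩ :=
    q.exists_boundary_dart (Subtype.val ⁻¹' lowerSet' E w t r c) hxU hv0
  have hadj' : G.Adj d'.fst d'.snd := d'.adj
  obtain ⟨ha', hb', hac', hbn'⟩ := exit_edge E w t r c hS hd1' hd2' hadj'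
  have := unique_exit E w t r c (a := ⟨_, ha⟩) (b := ⟨_, hb⟩) (a' := ⟨_, ha'⟩)
    (b' := ⟨_, hb'⟩) hac hac' d.adj hadj' hbn hbn'
  exact d'.snd.2 (congrArg Subtype.val this).symm
end

section
/- Every planar graph of maximum degree 4 admits a two-page book embedding, i.e., there is a linear order of its vertices and a partition of its edges into two sets (pages) such that no two edges assigned to the same page have endpoints that alternate in the linear order. -/
open Set

universe u

/-- Two edges drawn on the same page of a book embedding cross iff their endpoints
alternate along the spine. -/
def Alternates {W : Type u} (x : W → ℝ) (e e' : Sym2 W) : Prop :=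
  ∃ a b p q : W, e = s(a, b) ∧ e' = s(p, q) ∧ x a < x p ∧ x p < x b ∧ x b < x q

namespace FP

abbrev Pt := ℤ × ℤ
abbrev Da := Pt × Fin 4

def dir : Fin 4 → Pt := ![(1,0),(0,1),(-1,0),(0,-1)]
def sg (d : Da) : Da := (d.1, d.2 + 1)
def al (d : Da) : Da := (d.1 + dir d.2, d.2 + 2)

theorem al_al (d : Da) : al (al d) = d := by
  obtain ⟨⟨a, b⟩, i⟩ := d
  fin_cases i <;> simp [al, dir]

theorem al_ne (d : Da) : al d ≠ d := by
  obtain ⟨⟨a, b⟩, i⟩ := d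
  fin_cases i <;> simp [al, dir]

theorem al_inj {d e : Da} : al d = al e ↔ d = e :=
  ⟨fun h => by rw [← al_al d, h, al_al], fun h => by rw [h]⟩

theorem exists_potential (z : Da → ZMod 2) (hal : ∀ d, z (al d) = z d)
    (hfin : {d | z d ≠ 0}.Finite) (hev : ∀ p, z (p,0) + z (p,1) + z (p,2) + z (p,3) = 0) :
    ∃ I : Da → ZMod 2, (∀ d, I (sg d) = I d + z (sg d)) ∧ (∀ d, I (al d) = I d + z d) := by
  obtain ⟨m, hm⟩ : ∃ m : ℤ, ∀ a b i, a < m → z ((a,b),i) = 0 := by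
    obtain ⟨m, hm⟩ := (hfin.image (fun d => d.1.1)).bddBelow
    refine ⟨m, fun a b i h => ?_⟩
    by_contra hz
    have := hm ⟨((a,b),i), hz, rfl⟩
    simp at this
    omega
  have h2 : ∀ x : ZMod 2, x + x = 0 := by decide
  let J : ℤ → ℤ → ZMod 2 := fun a b => ∑ c ∈ Finset.Icc m a, z ((c,b),1)
  have J1 : ∀ a b, J a b = J (a-1) b + z ((a,b),1) := by
    intro a b
    by_cases h : a < m
    · have e1 : Finset.Icc m a = ∅ := Finset.Icc_eq_empty (by omega)
      have e2 : Finset.Icc m (a-1) = ∅ := Finset.Icc_eq_empty (by omega)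
      simp [J, e1, e2, hm a b 1 h]
    · have : Finset.Icc m a = insert a (Finset.Icc m (a-1)) := by
        ext x; simp; omega
      simp only [J]
      rw [this, Finset.sum_insert (by simp), add_comm]
  have r2 : ∀ a b, z ((a,b),2) = z ((a-1,b),0) := by
    intro a b
    have := hal ((a,b),2)
    simp [al, dir] at this
    rw [← this]; congr 1
  have r3 : ∀ a b, z ((a,b),3) = z ((a,b-1),1) := by
    intro a b
    have := hal ((a,b),3)
    simp [al, dir] at this
    rw [← this]; congr 1
  have J2 : ∀ a b, J a b + J a (b-1) + z ((a,b),0) = 0 := by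
    intro a b
    by_cases h : a < m
    · have e1 : Finset.Icc m a = ∅ := Finset.Icc_eq_empty (by omega)
      simp [J, e1, hm a b 0 h]
    · have h' : m - 1 ≤ a := by omega
      clear h
      induction a, h' using Int.leInduction with
      | base => simp [J, hm (m-1) b 0 (by omega)]
      | succ a ha ih =>
        have k1 := J1 (a+1) b
        have k2 := J1 (a+1) (b-1)
        have k3 := hev (a+1,b)
        rw [r2, r3] at k3
        simp only [add_sub_cancel_right] at k1 k2 k3
        rw [k1, k2]
        generalize J a b = A at *
        generalize J a (b-1) = B at *
        generalize z ((a,b),0) = C at *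
        generalize z ((a+1,b),0) = C at *
        generalize z ((a+1,b),1) = C at *
        generalize z ((a+1,b-1),1) = C at *
        clear k1 k2
        revert k3 ih
        revert A B C
        decide +revert
  refine ⟨fun d => ![J d.1.1 d.1.2, J (d.1.1-1) d.1.2, J (d.1.1-1) (d.1.2-1), J d.1.1 (d.1.2-1)] d.2, ?_, ?_⟩
  · rintro ⟨⟨a, b⟩, i⟩
    have k1 := J1 a b
    have k2 := J1 a (b-1)
    have k3 := J2 a b
    have k4 := J2 (a-1) b
    have e2 := r2 a b
    have e3 := r3 a b
    fin_cases i <;> simp [sg]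
    all_goals grind
  · rintro ⟨⟨a, b⟩, i⟩
    have k1 := J1 a b
    have k2 := J1 a (b-1)
    have k3 := J2 a b
    have k4 := J2 (a-1) b
    have e2 := r2 a b
    have e3 := r3 a b
    fin_cases i <;> simp [al, dir]
    all_goals grind

end FP

namespace FP
open scoped List

open Classical in
def nx (E : Set Da) (d d' : Da) : Prop := d' = if d ∈ E then sg (al d) else sg d

structure Contour (X : Set Pt) (E : Set Da) (L : List Da) : Prop where
  fin : X.Finite
  al_mem : ∀ d ∈ E, al d ∈ E
  base : ∀ d ∈ E, d.1 ∈ X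
  nodup : L.Nodup
  mem : ∀ d, d ∈ L ↔ d.1 ∈ X
  chain : Cycle.Chain (nx E) (L : Cycle Da)
  conn : ∀ p ∈ X, ∀ q ∈ X, ∃ y : Da → ZMod 2, (∀ d, y (al d) = y d) ∧ (∀ d, y d ≠ 0 → d ∈ E) ∧
    ∀ r, y (r,0) + y (r,1) + y (r,2) + y (r,3) = (if r = p then 1 else 0) + (if r = q then 1 else 0)

theorem chain_sum {E : Set Da} (J z : Da → ZMod 2) (hJ : ∀ d d', nx E d d' → J d' = J d + z d') :
    ∀ (l : List Da) (e : Da), List.IsChain (nx E) (e :: l) →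
      ∀ x, (e :: l).getLast? = some x → J x = J e + (l.map z).sum
  | [], e, _, x, hx => by simp at hx; simp [hx]
  | a :: l, e, h, x, hx => by
    rw [List.isChain_cons_cons] at h
    have := chain_sum J z hJ l a h.2 x (by simpa using hx)
    rw [this, hJ _ _ h.1, List.map_cons, List.sum_cons, add_assoc]

theorem Contour.isChain {X E L} (h : Contour X E L) : List.IsChain (nx E) L := by
  cases L with
  | nil => exact List.isChain_nil
  | cons a l =>
    have := h.chain
    rw [Cycle.chain_coe_cons] at this
    have h3 : (a :: l) <:+: a :: (l ++ [a]) := ⟨[], [a], by simp⟩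
    exact this.infix h3

theorem Contour.rot {X E L L'} (h : Contour X E L) (hr : L ~r L') : Contour X E L' := by
  refine ⟨h.fin, h.al_mem, h.base, (hr.nodup_iff).1 h.nodup, fun d => by rw [← hr.mem_iff, h.mem], ?_, h.conn⟩
  have := h.chain
  rwa [Cycle.coe_eq_coe.2 hr] at this

theorem Contour.nonalt {X E L} (h : Contour X E L) {e f : Da} (he : e ∉ E) (hf : f ∉ E)
    (hef : e ≠ f) (hef' : e ≠ al f) : ¬ [e, f, al e, al f] <+ L := by
  intro hs
  have hLm : ∀ d ∈ [e, f, al e, al f], d.1 ∈ X := fun d hd => (h.mem d).1 (hs.subset hd)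
  -- the tree chain joining the ends of f
  obtain ⟨y, y1, y2, y3⟩ := h.conn f.1 (hLm _ (by simp)) (al f).1 (hLm _ (by simp))
  have haf : al f ∉ E := fun h' => hf (by simpa [al_al] using h.al_mem _ h')
  have hae : al e ∉ E := fun h' => he (by simpa [al_al] using h.al_mem _ h')
  classical
  let g : Da → ZMod 2 := fun d => if d = f ∨ d = al f then 1 else 0
  have hgE : ∀ d ∈ E, g d = 0 := by
    intro d hd
    simp only [g]; rw [if_neg]; rintro (rfl | rfl) <;> contradiction
  have g1 : ∀ d, g (al d) = g d := by
    intro d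
    have : (al d = f ∨ al d = al f) ↔ (d = f ∨ d = al f) := by
      rw [al_inj]
      constructor
      · rintro (h | h)
        · right; rw [← h, al_al]
        · left; exact h
      · rintro (h | h)
        · right; exact h
        · left; rw [h, al_al]
    simp only [g, this]
  have hz2 : ∀ a b : ZMod 2, a + b ≠ 0 → a ≠ 0 ∨ b ≠ 0 := by decide
  obtain ⟨I, I1, I2⟩ := exists_potential (fun d => y d + g d) (fun d => by simp [y1, g1]) (by
    apply Set.Finite.subset (s := {d : Da | d.1 ∈ X})
    · exact (h.fin.prod (Set.finite_univ (α := Fin 4))).subset (fun d hd => ⟨hd, trivial⟩)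
    · intro d hd
      rcases hz2 _ _ hd with hd | hd
      · exact h.base _ (y2 _ hd)
      · by_cases hh : d = f ∨ d = al f
        · rcases hh with rfl | rfl
          · exact hLm _ (by simp)
          · exact hLm _ (by simp)
        · simp [g, hh] at hd) (by
    intro p
    have key : g (p,0) + g (p,1) + g (p,2) + g (p,3) =
        (if p = f.1 then 1 else 0) + (if p = (al f).1 then 1 else 0) := by
      have hx : ∀ d : Da, g d = (if d = f then 1 else 0) + (if d = al f then 1 else 0) := by
        intro d
        simp only [g]
        have := al_ne f
        grind
      have hy : ∀ d : Da, (if ((p,0) : Da) = d then (1 : ZMod 2) else 0) + (if ((p,1) : Da) = d then 1 else 0)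
          + (if ((p,2) : Da) = d then 1 else 0) + (if ((p,3) : Da) = d then 1 else 0) = if p = d.1 then 1 else 0 := by
        rintro ⟨q, i⟩
        by_cases hpq : p = q
        · subst hpq
          fin_cases i <;> simp
        · simp [hpq]
      rw [hx, hx, hx, hx, ← hy f, ← hy (al f)]
      ring
    have h3 := y3 p
    have h2 : ∀ x : ZMod 2, x + x = 0 := by decide
    calc _ = (y (p,0) + y (p,1) + y (p,2) + y (p,3)) + (g (p,0) + g (p,1) + g (p,2) + g (p,3)) := by ring
      _ = 0 := by rw [key, h3, h2])
  let z' : Da → ZMod 2 := g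
  let J : Da → ZMod 2 := fun d => if d ∈ E then I d + (y d + g d) else I d
  have h2 : ∀ x : ZMod 2, x + x = 0 := by decide
  have hJ : ∀ d d', nx E d d' → J d' = J d + g d' := by
    intro d d' hn
    have hsE : I d' = J d + (y d' + g d') := by
      unfold nx at hn
      split_ifs at hn with hd
      · simp only [J, if_pos hd]
        rw [hn, I1, I2]
      · simp only [J, if_neg hd]
        rw [hn, I1]
    by_cases hd' : d' ∈ E
    · simp only [J, if_pos hd']
      rw [hsE]
      simp only [J, hgE _ hd']
      rw [add_assoc _ _ (y d' + 0), h2]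
    · have : y d' = 0 := by
        by_contra hh; exact hd' (y2 _ hh)
      simp only [J, if_neg hd']
      rw [hsE, this, zero_add]
  have hJe : J (al e) = J e := by
    simp only [J, if_neg he, if_neg hae, I2]
    have : y e = 0 := by
      by_contra hh; exact he (y2 _ hh)
    simp [this, g, hef, hef']
  -- decomposition
  obtain ⟨r1, r2, rfl, m1, s1⟩ := List.cons_sublist_iff.1 hs
  obtain ⟨r3, r4, rfl, m2, s2⟩ := List.cons_sublist_iff.1 s1
  obtain ⟨r5, r6, rfl, m3, s3⟩ := List.cons_sublist_iff.1 s2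
  obtain ⟨a1, b1, rfl⟩ := List.append_of_mem m1
  obtain ⟨a2, b2, rfl⟩ := List.append_of_mem m2
  obtain ⟨a3, b3, rfl⟩ := List.append_of_mem m3
  have hc := h.isChain
  have hn := h.nodup
  have hafm : al f ∈ r6 := by simpa using s3
  have hin : e :: (b1 ++ a2 ++ f :: (b2 ++ a3 ++ [al e])) <:+:
      (a1 ++ e :: b1 ++ (a2 ++ f :: b2 ++ (a3 ++ al e :: b3 ++ r6))) := ⟨a1, b3 ++ r6, by simp⟩
  have hsum := chain_sum J g hJ _ _ (hc.infix hin) (al e) (by simp [List.getLast?_cons, List.getLast?_append])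
  rw [hJe] at hsum
  have hg0 : ∀ l : List Da, (∀ d ∈ l, d ≠ f ∧ d ≠ al f) → (l.map g).sum = 0 := by
    intro l hl
    apply List.sum_eq_zero
    simp only [List.mem_map]
    rintro _ ⟨d, hd, rfl⟩
    simp [g, (hl d hd).1, (hl d hd).2]
  have hgf : g f = 1 := by simp [g]
  rw [List.map_append, List.sum_append, List.map_cons, List.sum_cons, hg0, hg0, hgf] at hsum
  · simp at hsum
  · intro d hd
    constructor
    · rintro rfl
      simp [List.nodup_append, List.nodup_cons] at hn hd
      grind
    · rintro rfl
      simp [List.nodup_append, List.nodup_cons, al_inj] at hn hd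
      grind
  · intro d hd
    constructor
    · rintro rfl
      simp [List.nodup_append, List.nodup_cons] at hn hd
      grind
    · rintro rfl
      simp [List.nodup_append, List.nodup_cons, al_inj] at hn hd
      grind

end FP

namespace FP
open scoped List

theorem Contour.single (p : Pt) : Contour {p} ∅ [(p,0),(p,1),(p,2),(p,3)] := by
  refine ⟨Set.finite_singleton p, by simp, by simp, by simp, ?_, ?_, ?_⟩
  · rintro ⟨q, i⟩
    fin_cases i <;> simp
  · rw [Cycle.chain_coe_cons]
    simp [nx, sg]
  · intro a ha b hb
    refine ⟨fun _ => 0, by simp, by simp, ?_⟩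
    simp only [Set.mem_singleton_iff] at ha hb
    subst ha hb
    have : (1 : ZMod 2) + 1 = 0 := by decide
    intro r
    split_ifs <;> simp [this]

theorem isChain_congr {α : Type*} {R S : α → α → Prop} :
    ∀ (l : List α) (c : α), (∀ a ∈ l, ∀ b, R a b → S a b) → List.IsChain R (l ++ [c]) → List.IsChain S (l ++ [c])
  | [], c, _, _ => by simp
  | [a], c, h, h' => by
    simp at h' ⊢
    exact h a (by simp) _ h'
  | a :: b :: l, c, h, h' => by
    simp only [List.cons_append, List.isChain_cons_cons] at h' ⊢
    refine ⟨h a (by simp) _ h'.1, ?_⟩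
    exact isChain_congr (b :: l) c (fun x hx => h x (by simp at hx ⊢; tauto)) h'.2

theorem Contour.join {X₁ X₂ E₁ E₂ A B Y d} (h₁ : Contour X₁ E₁ (A ++ d :: B))
    (h₂ : Contour X₂ E₂ (Y ++ [al d])) (hd : Disjoint X₁ X₂) :
    Contour (X₁ ∪ X₂) (E₁ ∪ E₂ ∪ {d, al d}) (A ++ d :: (Y ++ [al d]) ++ B) := by
  have hd1 : d.1 ∈ X₁ := (h₁.mem d).1 (by simp)
  have hd2 : (al d).1 ∈ X₂ := (h₂.mem (al d)).1 (by simp)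
  have hdis : ∀ p ∈ X₁, p ∉ X₂ := fun p hp hp' => Set.disjoint_left.1 hd hp hp'
  have hdE1 : d ∉ E₁ := fun h => hdis _ (h₁.base _ (h₁.al_mem _ h)) hd2
  have hadE2 : al d ∉ E₂ := fun h => hdis _ hd1 (by simpa [al_al] using h₂.base _ (h₂.al_mem _ h))
  have hn1 := h₁.nodup
  have hn2 := h₂.nodup
  refine ⟨h₁.fin.union h₂.fin, ?_, ?_, ?_, ?_, ?_, ?_⟩
  · rintro e ((he | he) | he)
    · exact Or.inl (Or.inl (h₁.al_mem _ he))
    · exact Or.inl (Or.inr (h₂.al_mem _ he))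
    · right
      rcases he with rfl | rfl
      · simp
      · simp [al_al]
  · rintro e ((he | he) | he)
    · exact Or.inl (h₁.base _ he)
    · exact Or.inr (h₂.base _ he)
    · rcases he with rfl | rfl
      · exact Or.inl hd1
      · exact Or.inr hd2
  · have hx : ∀ e ∈ A ++ d :: B, ∀ f ∈ Y ++ [al d], e ≠ f := by
      rintro e he f hf rfl
      exact hdis _ ((h₁.mem _).1 he) ((h₂.mem _).1 hf)
    have : (A ++ d :: B ++ (Y ++ [al d])).Nodup := List.nodup_append.2 ⟨hn1, hn2, hx⟩
    refine (List.Perm.nodup_iff ?_).1 this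
    have : A ++ d :: B ++ (Y ++ [al d]) = A ++ [d] ++ (B ++ (Y ++ [al d])) := by simp
    rw [this]
    have : A ++ d :: (Y ++ [al d]) ++ B = A ++ [d] ++ ((Y ++ [al d]) ++ B) := by simp
    rw [this]
    exact List.Perm.append_left _ List.perm_append_comm
  · intro e
    have a1 := h₁.mem e
    have a2 := h₂.mem e
    simp only [Set.mem_union, ← a1, ← a2]
    simp only [List.mem_append, List.mem_cons]
    tauto
  · have c1 : Cycle.Chain (nx E₁) ((d :: (B ++ A) : List Da) : Cycle Da) := by
      have := h₁.chain
      rwa [Cycle.coe_eq_coe.2 (List.isRotated_append (l := A) (l' := d :: B))] at this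
    have c2 : Cycle.Chain (nx E₂) ((al d :: Y : List Da) : Cycle Da) := by
      have := h₂.chain
      rwa [Cycle.coe_eq_coe.2 (List.isRotated_append (l := Y) (l' := [al d]))] at this
    have : (A ++ d :: (Y ++ [al d]) ++ B) ~r (d :: (Y ++ [al d] ++ B ++ A)) := by
      have := List.isRotated_append (l := A) (l' := d :: (Y ++ [al d]) ++ B)
      simpa using this
    rw [Cycle.coe_eq_coe.2 this]
    rw [Cycle.chain_coe_cons] at c1 c2 ⊢
    have n1 : ∀ e ∈ B ++ A, e ≠ d ∧ e ≠ al d ∧ e ∉ E₂ := by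
      intro e he
      have hm : e ∈ A ++ d :: B := by simp at he ⊢; tauto
      have he1 := (h₁.mem e).1 hm
      refine ⟨?_, fun h => hdis _ he1 (h ▸ hd2), fun h => hdis _ he1 (h₂.base _ h)⟩
      rintro rfl
      simp [List.nodup_append, List.nodup_cons] at hn1 he
      grind
    have n2 : ∀ e ∈ Y, e ≠ d ∧ e ≠ al d ∧ e ∉ E₁ := by
      intro e he
      have hm : e ∈ Y ++ [al d] := by simp; tauto
      have he1 := (h₂.mem e).1 hm
      refine ⟨fun h => hdis _ (h ▸ hd1) he1, ?_, fun h => hdis _ (h₁.base _ h) he1⟩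
      rintro rfl
      simp [List.nodup_append] at hn2
      grind
    have k1 : List.IsChain (nx (E₁ ∪ E₂ ∪ {d, al d})) (al d :: ((B ++ A) ++ [d])) := by
      rw [List.isChain_cons] at c1 ⊢
      constructor
      · intro y hy
        have := c1.1 y hy
        simp only [nx, hdE1, if_false] at this
        simp [nx, al_al, this]
      · refine isChain_congr _ _ ?_ c1.2
        intro a ha b hb
        simp only [nx] at hb ⊢
        rw [hb]
        have := n1 a ha
        congr 1
        simp [this]
    have k2 : List.IsChain (nx (E₁ ∪ E₂ ∪ {d, al d})) (d :: (Y ++ [al d])) := by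
      rw [List.isChain_cons] at c2 ⊢
      constructor
      · intro y hy
        have := c2.1 y hy
        simp only [nx, hadE2, if_false] at this
        simp [nx, this]
      · refine isChain_congr _ _ ?_ c2.2
        intro a ha b hb
        simp only [nx] at hb ⊢
        rw [hb]
        have := n2 a ha
        congr 1
        simp [this]
    have : d :: (Y ++ [al d] ++ B ++ A ++ [d]) = (d :: Y) ++ al d :: (B ++ A ++ [d]) := by simp
    rw [this, List.isChain_split]
    exact ⟨by simpa using k2, k1⟩
  · -- connectivity
    have h2 : ∀ x : ZMod 2, x + x = 0 := by decide
    have key : ∀ p ∈ X₁ ∪ X₂, ∃ y : Da → ZMod 2, (∀ e, y (al e) = y e) ∧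
        (∀ e, y e ≠ 0 → e ∈ E₁ ∪ E₂ ∪ {d, al d}) ∧
        ∀ r, y (r,0) + y (r,1) + y (r,2) + y (r,3) =
          (if r = p then 1 else 0) + (if r = d.1 then 1 else 0) := by
      rintro p (hp | hp)
      · obtain ⟨y, a, b, c⟩ := h₁.conn p hp d.1 hd1
        exact ⟨y, a, fun e he => Or.inl (Or.inl (b e he)), c⟩
      · obtain ⟨y, a, b, c⟩ := h₂.conn p hp (al d).1 hd2
        classical
        refine ⟨fun e => y e + ((if e = d then 1 else 0) + (if e = al d then 1 else 0)), ?_, ?_, ?_⟩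
        · intro e
          have e1 : (al e = d) ↔ (e = al d) := by
            constructor
            · rintro rfl; rw [al_al]
            · rintro rfl; rw [al_al]
          have e2 : (al e = al d) ↔ (e = d) := al_inj
          simp only [a, e1, e2]
          ring
        · intro e he
          by_cases hy : y e = 0
          · right
            by_contra hh
            simp at hh
            simp [hy, hh] at he
          · exact Or.inl (Or.inr (b e hy))
        · intro r
          have hy : ∀ d : Da, (if ((r,0) : Da) = d then (1 : ZMod 2) else 0) + (if ((r,1) : Da) = d then 1 else 0)
              + (if ((r,2) : Da) = d then 1 else 0) + (if ((r,3) : Da) = d then 1 else 0) = if r = d.1 then 1 else 0 := by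
            rintro ⟨q, i⟩
            by_cases hpq : r = q
            · subst hpq
              fin_cases i <;> simp
            · simp [hpq]
          have k1 := hy d
          have k2 := hy (al d)
          have k3 := c r
          have k4 := h2 (if r = (al d).1 then 1 else 0)
          linear_combination k1 + k2 + k3 + k4
    intro p hp q hq
    obtain ⟨y, a, b, c⟩ := key p hp
    obtain ⟨y', a', b', c'⟩ := key q hq
    refine ⟨fun e => y e + y' e, fun e => by simp only [a, a'], ?_, ?_⟩
    · intro e he
      by_cases hy : y e = 0
      · exact b' e (by simpa [hy] using he)
      · exact b e hy
    · intro r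
      have k3 := c r
      have k3' := c' r
      have k4 := h2 (if r = d.1 then 1 else 0)
      linear_combination k3 + k3' + k4

/-- One lattice step. -/
def LStep (p q : Pt) : Prop := ∃ i, q = p + dir i

theorem Contour.exists {S : Set Pt} (hS : S.Finite) {b : Pt} (hb : b ∈ S)
    (hc : ∀ p ∈ S, Relation.ReflTransGen (fun p q => LStep p q ∧ q ∈ S) b p) :
    ∃ E L, Contour S E L := by
  have key : ∀ n ≤ S.ncard, 1 ≤ n → ∃ X E L, Contour X E L ∧ X ⊆ S ∧ b ∈ X ∧ X.ncard = n := by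
    intro n
    induction n with
    | zero => omega
    | succ n ih =>
      intro hn _
      rcases Nat.eq_zero_or_pos n with rfl | hpos
      · exact ⟨_, _, _, Contour.single b, by simpa using hb, by simp, by simp⟩
      · obtain ⟨X, E, L, hC, hX, hbX, hcard⟩ := ih (by omega) hpos
        have : ∃ p ∈ X, ∃ q ∈ S, q ∉ X ∧ LStep p q := by
          by_contra! hcon
          have : S ⊆ X := by
            intro p hp
            have := hc p hp
            induction this with
            | refl => exact hbX
            | tail h1 h2 ih =>
              by_contra hh
              rename_i c1 c2
              have hc1 : c1 ∈ S := by
                rcases Relation.ReflTransGen.cases_tail h1 with h | ⟨_, _, h⟩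
                · rw [h]; exact hb
                · exact h.2
              exact hcon c1 (ih hc1) _ h2.2 hh h2.1
          have := Set.ncard_le_ncard this hC.fin
          omega
        obtain ⟨p, hp, q, hq, hqX, i, hi⟩ := this
        have hm : ((p, i) : Da) ∈ L := (hC.mem _).2 hp
        obtain ⟨A, B, rfl⟩ := List.append_of_mem hm
        have hs := Contour.single q
        have hm2 : al (p, i) ∈ [(q,0),(q,1),(q,2),(q,3)] := (hs.mem _).2 (by simp [al, hi])
        obtain ⟨A', B', hAB⟩ := List.append_of_mem hm2
        rw [hAB] at hs
        have hs' := hs.rot (L' := (B' ++ A') ++ [al (p,i)]) (by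
          have := List.isRotated_append (l := A' ++ [al (p,i)]) (l' := B')
          simpa using this)
        have hj := hC.join hs' (by simpa using hqX)
        refine ⟨_, _, _, hj, ?_, Or.inl hbX, ?_⟩
        · rintro x (hx | rfl)
          · exact hX hx
          · exact hq
        · rw [Set.union_singleton, Set.ncard_insert_of_notMem hqX hC.fin, hcard]
  have h1 : 1 ≤ S.ncard := by
    rw [Nat.one_le_iff_ne_zero]
    intro h
    rw [Set.ncard_eq_zero hS] at h
    simp [h] at hb
  obtain ⟨X, E, L, hC, hX, -, hcard⟩ := key _ le_rfl h1
  have := Set.eq_of_subset_of_ncard_le hX hcard.ge hS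
  exact ⟨E, L, this ▸ hC⟩

end FP

namespace FP
open scoped List


inductive Con {V : Type u} (rot : V → List V) : Set V → Set (V × V) → List (V × V) → Prop
  | single (v : V) (l : List V) : l ~r rot v → Con rot {v} ∅ (l.map (Prod.mk v))
  | leaf (X : Set V) (E : Set (V × V)) (A B : List (V × V)) (M : List V) (u w : V) :
      Con rot X E (A ++ (u, w) :: B) → w ∉ X → (M ++ [u]) ~r rot w →
      Con rot (insert w X) (E ∪ {(u, w), (w, u)}) (A ++ (u, w) :: ((M ++ [u]).map (Prod.mk w)) ++ B)

def LM {V : Type u} (G : SimpleGraph V) : Prop :=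
  ∃ (S : V → Set Pt) (b : V → Pt), (∀ v, (S v).Finite) ∧ (∀ v, b v ∈ S v) ∧
    (∀ v, ∀ p ∈ S v, Relation.ReflTransGen (fun p q => LStep p q ∧ q ∈ S v) (b v) p) ∧
    (∀ u v, u ≠ v → Disjoint (S u) (S v)) ∧
    ∀ u v, G.Adj u v → ∃ p ∈ S u, ∃ q ∈ S v, LStep p q

theorem rot_filterMap {α β : Type*} (F : α → Option β) (c : List α) (l : List β)
    (h : l ~r c.filterMap F) : ∃ c', c ~r c' ∧ c'.filterMap F = l := by
  obtain ⟨n, hn, hh⟩ := List.isRotated_iff_mod.1 h.symm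
  rw [List.rotate_eq_drop_append_take hn] at hh
  have h0 := (List.take_append_drop n (c.filterMap F)).symm
  obtain ⟨c1, c2, rfl, e1, e2⟩ := List.filterMap_eq_append_iff.1 h0
  refine ⟨c2 ++ c1, List.isRotated_append, ?_⟩
  rw [List.filterMap_append, e1, e2, hh]

theorem map_filterMap_sub {α β : Type*} (F : α → Option β) (g : β → α)
    (h : ∀ a b, F a = some b → g b = a) : ∀ c : List α, (c.filterMap F).map g <+ c
  | [] => by simp
  | a :: c => by
    have ih := map_filterMap_sub F g h c
    rcases hF : F a with _ | b
    · rw [List.filterMap_cons_none hF]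
      exact ih.cons a
    · rw [List.filterMap_cons_some hF, List.map_cons, h a b hF]
      exact ih.cons_cons a

theorem LM.exists_rot {V : Type u} {G : SimpleGraph V} (h : LM G) :
    ∃ rot : V → List V, (∀ v, (rot v).Nodup) ∧ (∀ v w, w ∈ rot v ↔ G.Adj v w) ∧
      ∀ X E ℓ, Con rot X E ℓ → ∀ a b p q, (a,b) ∉ E → (p,q) ∉ E → (a,b) ≠ (p,q) → (a,b) ≠ (q,p) →
        ¬ [(a,b),(p,q),(b,a),(q,p)] <+ ℓ := by
  obtain ⟨S, b, hfin, hb, hconn, hdis, hadj⟩ := h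
  have hdis' : ∀ p u v, p ∈ S u → p ∈ S v → u = v := by
    intro p u v h1 h2
    by_contra hne
    exact Set.disjoint_left.1 (hdis u v hne) h1 h2
  obtain ⟨g, hg⟩ : ∃ g : V × V → Da, ∀ u v, G.Adj u v →
      (g (u,v)).1 ∈ S u ∧ (al (g (u,v))).1 ∈ S v ∧ al (g (u,v)) = g (v,u) := by
    have : ∀ u v, ∃ d : Da, G.Adj u v → d.1 ∈ S u ∧ (al d).1 ∈ S v := by
      intro u v
      by_cases h : G.Adj u v
      · obtain ⟨p, hp, q, hq, i, hi⟩ := hadj u v h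
        exact ⟨(p, i), fun _ => ⟨hp, by simpa [al, hi] using hq⟩⟩
      · exact ⟨((0,0),0), fun h' => absurd h' h⟩
    choose g0 hg0 using this
    classical
    refine ⟨fun e => if WellOrderingRel e.1 e.2 then g0 e.1 e.2 else al (g0 e.2 e.1), ?_⟩
    intro u v huv
    have h1 := hg0 u v huv
    have h2 := hg0 v u huv.symm
    rcases trichotomous_of WellOrderingRel u v with h | h | h
    · have h' : ¬ WellOrderingRel v u := asymm h
      simp only [h, h', if_true, if_false]
      exact ⟨h1.1, h1.2, trivial⟩
    · exact absurd h huv.ne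
    · have h' : ¬ WellOrderingRel u v := asymm h
      simp only [h, h', if_true, if_false, al_al]
      exact ⟨h2.2, h2.1, trivial⟩
  classical
  obtain ⟨F, hF⟩ : ∃ F : Da → Option (V × V), ∀ d e, F d = some e ↔ (G.Adj e.1 e.2 ∧ g e = d) := by
    refine ⟨fun d => if h : ∃ e : V × V, G.Adj e.1 e.2 ∧ g e = d then some h.choose else none, ?_⟩
    rintro d ⟨u, v⟩
    beta_reduce
    constructor
    · intro h
      split_ifs at h with hh
      simp at h
      rw [← h]
      exact hh.choose_spec
    · intro h
      have hh : ∃ e : V × V, G.Adj e.1 e.2 ∧ g e = d := ⟨_, h⟩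
      rw [dif_pos hh]
      congr 1
      have h2 := hh.choose_spec
      generalize hh.choose = e at h2
      obtain ⟨u', v'⟩ := e
      have a1 := hg u v h.1
      have a2 := hg u' v' h2.1
      rw [h.2] at a1
      rw [h2.2] at a2
      rw [hdis' _ _ _ a1.1 a2.1, hdis' _ _ _ a1.2.1 a2.2.1]
  have hC : ∀ v, ∃ E L, Contour (S v) E L := fun v => Contour.exists (hfin v) (hb v) (hconn v)
  choose Ec c hc using hC
  have hcm : ∀ v, (c v).filterMap F = ((c v).filterMap F |>.map Prod.snd).map (Prod.mk v) := by
    intro v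
    rw [List.map_map]
    symm
    conv_rhs => rw [← List.map_id ((c v).filterMap F)]
    apply List.map_congr_left
    rintro ⟨x, y⟩ hx
    rw [List.mem_filterMap] at hx
    obtain ⟨d, hd, hx⟩ := hx
    rw [hF] at hx
    have := (hg x y hx.1).1
    rw [hx.2] at this
    simp [hdis' _ _ _ this (((hc v).mem d).1 hd)]
  have hmem : ∀ v w, w ∈ ((c v).filterMap F).map Prod.snd ↔ G.Adj v w := by
    intro v w
    constructor
    · intro h
      have : (v, w) ∈ (c v).filterMap F := by
        rw [hcm]
        exact List.mem_map_of_mem h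
      rw [List.mem_filterMap] at this
      obtain ⟨d, hd, hx⟩ := this
      exact ((hF _ _).1 hx).1
    · intro h
      rw [List.mem_map]
      refine ⟨(v,w), ?_, rfl⟩
      rw [List.mem_filterMap]
      refine ⟨g (v,w), ?_, (hF _ _).2 ⟨h, rfl⟩⟩
      rw [(hc v).mem]
      exact (hg v w h).1
  refine ⟨fun v => ((c v).filterMap F).map Prod.snd, ?_, hmem, ?_⟩
  · intro v
    have h1 : ((c v).filterMap F).Nodup := by
      have := (map_filterMap_sub F g (fun a b h => ((hF _ _).1 h).2) (c v)).nodup (hc v).nodup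
      exact this.of_map _
    rw [hcm] at h1
    exact h1.of_map _
  · intro X E ℓ hcon
    have lift : ∃ E' L, Contour (⋃ v ∈ X, S v) E' L ∧ L.filterMap F = ℓ ∧
        ∀ u v, G.Adj u v → g (u,v) ∈ E' → (u,v) ∈ E := by
      have noself : ∀ u v w, G.Adj u v → g (u,v) ∉ Ec w := by
        intro u v w huv h
        have h1 := hg u v huv
        have h2 := (hc w).base _ h
        have h3 := (hc w).base _ ((hc w).al_mem _ h)
        have e1 := hdis' _ _ _ h1.1 h2
        have e2 := hdis' _ _ _ h1.2.1 h3
        exact huv.ne (e1.trans e2.symm)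
      induction hcon with
      | single v l hl =>
        have h1 : l.map (Prod.mk v) ~r (c v).filterMap F := by
          rw [hcm]
          exact hl.map _
        obtain ⟨c', h2, h3⟩ := rot_filterMap F _ _ h1
        refine ⟨Ec v, c', ?_, h3, fun u w huw h => absurd h (noself u w v huw)⟩
        simpa using (hc v).rot h2
      | leaf X E A B M u w hprev hw hM ih =>
        obtain ⟨E', L, hL, hLF, hE⟩ := ih
        obtain ⟨L1, L2, rfl, e1, e2⟩ := List.filterMap_eq_append_iff.1 hLF
        obtain ⟨L3, d, L4, rfl, e3, e4, e5⟩ := List.filterMap_eq_cons_iff.1 e2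
        have hd := (hF _ _).1 e4
        have hadj' := hd.1
        have hd' := hd.2
        have gg := hg u w hadj'
        have h1 : (M ++ [u]).map (Prod.mk w) ~r (c w).filterMap F := by
          rw [hcm]
          exact hM.map _
        obtain ⟨c', h2, h3⟩ := rot_filterMap F _ _ h1
        rw [List.map_append] at h3
        obtain ⟨c1, c2, rfl, f1, f2⟩ := List.filterMap_eq_append_iff.1 h3
        obtain ⟨c3, d', c4, rfl, f3, f4, f5⟩ := List.filterMap_eq_cons_iff.1 f2
        have f3' : c3.filterMap F = [] := List.filterMap_eq_nil_iff.2 f3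
        have hd2 := ((hF _ _).1 f4).2
        have hdd : d' = al d := by rw [← hd2, ← hd', gg.2.2]
        have hj : Contour (S w) (Ec w) ((c4 ++ c1 ++ c3) ++ [al d]) := by
          apply (hc w).rot
          refine h2.trans ?_
          rw [hdd]
          have := List.isRotated_append (l := c1 ++ c3 ++ [al d]) (l' := c4)
          simpa using this
        have e3' : L3.filterMap F = [] := List.filterMap_eq_nil_iff.2 e3
        rw [show L1 ++ (L3 ++ d :: L4) = (L1 ++ L3) ++ d :: L4 by simp] at hL
        have hjoin := hL.join hj (by
          rw [Set.disjoint_left]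
          intro p hp hp'
          simp only [Set.mem_iUnion] at hp
          obtain ⟨v, hv, hp⟩ := hp
          rw [hdis' _ _ _ hp hp'] at hv
          exact hw hv)
        refine ⟨E' ∪ Ec w ∪ {d, al d}, (L1 ++ L3) ++ d :: ((c4 ++ c1 ++ c3) ++ [al d]) ++ L4, ?_, ?_, ?_⟩
        · convert hjoin using 1
          ext p
          simp [or_comm]
        · have f4' : F (al d) = some (w, u) := by rw [← hdd]; exact f4
          have f5' : List.filterMap F c4 = [] := by simpa using f5
          simp [List.filterMap_append, List.filterMap_cons, e1, e3', e4, e5, f5', f1, f3', f4']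
        · intro x y hxy hm
          rcases hm with (hm | hm) | hm
          · exact Or.inl (hE x y hxy hm)
          · exact absurd hm (noself _ _ _ hxy)
          · right
            rcases hm with hm | hm
            · left
              have := (hF d (x,y)).2 ⟨hxy, hm⟩
              rw [e4] at this
              exact (Option.some.inj this).symm
            · right
              have := (hF (al d) (x,y)).2 ⟨hxy, hm⟩
              rw [← hdd, f4] at this
              exact (Option.some.inj this).symm
    obtain ⟨E', L, hL, hLF, hE⟩ := lift
    intro a b p q hab hpq hne hne' hs
    have hs2 := (hs.map g)
    rw [← hLF] at hs2
    have hs3 := hs2.trans (map_filterMap_sub F g (fun a b h => ((hF _ _).1 h).2) L)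
    have hadjm : ∀ x y, (x,y) ∈ ℓ → G.Adj x y := by
      intro x y hx
      rw [← hLF, List.mem_filterMap] at hx
      obtain ⟨d, _, hd⟩ := hx
      exact ((hF _ _).1 hd).1
    have Aab := hadjm a b (hs.subset (by simp))
    have Apq := hadjm p q (hs.subset (by simp))
    have ginj : ∀ x y x' y', G.Adj x y → G.Adj x' y' → g (x,y) = g (x',y') → (x,y) = (x',y') := by
      intro x y x' y' h1 h2 h3
      have k1 := (hF (g (x,y)) (x,y)).2 ⟨h1, rfl⟩
      have k2 := (hF (g (x,y)) (x',y')).2 ⟨h2, h3.symm⟩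
      rw [k1] at k2
      exact Option.some.inj k2
    simp only [List.map_cons, List.map_nil] at hs3
    rw [← (hg a b Aab).2.2, ← (hg p q Apq).2.2] at hs3
    refine hL.nonalt (fun h => hab (hE _ _ Aab h)) (fun h => hpq (hE _ _ Apq h)) ?_ ?_ hs3
    · intro h; exact hne (ginj _ _ _ _ Aab Apq h)
    · intro h
      rw [(hg p q Apq).2.2] at h
      exact hne' (ginj _ _ _ _ Aab Apq.symm h)

end FP

namespace FP

def Nb (δ : ℝ) (k : ℝ × ℝ) : Set Pt := {p | |k.1 - δ * p.1| ≤ δ ∧ |k.2 - δ * p.2| ≤ δ}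
def Px (δ : ℝ) (K : Set (ℝ × ℝ)) : Set Pt := {p | ∃ k ∈ K, p ∈ Nb δ k}

abbrev Rs (S : Set Pt) : Pt → Pt → Prop := fun p q => LStep p q ∧ p ∈ S ∧ q ∈ S

theorem LStep.symm {p q : Pt} (h : LStep p q) : LStep q p := by
  obtain ⟨i, rfl⟩ := h
  obtain ⟨a, b⟩ := p
  refine ⟨i + 2, ?_⟩
  fin_cases i <;> simp [dir]

theorem Rs_symm {S : Set Pt} {p q : Pt} (h : Relation.ReflTransGen (Rs S) p q) :
    Relation.ReflTransGen (Rs S) q p := by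
  induction h with
  | refl => exact .refl
  | tail _ h ih => exact Relation.ReflTransGen.head ⟨h.1.symm, h.2.2, h.2.1⟩ ih

theorem hline {S : Set Pt} (b a a' : ℤ) (h : a ≤ a') (hS : ∀ c, a ≤ c → c ≤ a' → (c, b) ∈ S) :
    Relation.ReflTransGen (Rs S) (a, b) (a', b) := by
  induction a', h using Int.leInduction with
  | base => exact .refl
  | succ n hn ih =>
    refine (ih (fun c h1 h2 => hS c h1 (by omega))).tail ⟨⟨0, ?_⟩, hS _ hn (by omega), hS _ (by omega) le_rfl⟩
    simp [dir]

theorem vline {S : Set Pt} (b a a' : ℤ) (h : a ≤ a') (hS : ∀ c, a ≤ c → c ≤ a' → (b, c) ∈ S) :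
    Relation.ReflTransGen (Rs S) (b, a) (b, a') := by
  induction a', h using Int.leInduction with
  | base => exact .refl
  | succ n hn ih =>
    refine (ih (fun c h1 h2 => hS c h1 (by omega))).tail ⟨⟨1, ?_⟩, hS _ hn (by omega), hS _ (by omega) le_rfl⟩
    simp [dir]

theorem between {δ x : ℝ} (hδ : 0 < δ) {a a' c : ℤ} (h1 : |x - δ * a| ≤ δ) (h2 : |x - δ * a'| ≤ δ)
    (h3 : a ≤ c) (h4 : c ≤ a') : |x - δ * c| ≤ δ := by
  have h3' : (a : ℝ) ≤ c := by exact_mod_cast h3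
  have h4' : (c : ℝ) ≤ a' := by exact_mod_cast h4
  rw [abs_le] at *
  constructor <;> nlinarith

theorem Nb_conn {S : Set Pt} {δ : ℝ} (hδ : 0 < δ) (k : ℝ × ℝ) (hS : Nb δ k ⊆ S) {p q : Pt}
    (hp : p ∈ Nb δ k) (hq : q ∈ Nb δ k) : Relation.ReflTransGen (Rs S) p q := by
  obtain ⟨a, b⟩ := p
  obtain ⟨a', b'⟩ := q
  have s1 : Relation.ReflTransGen (Rs S) (a, b) (a', b) := by
    rcases le_total a a' with h | h
    · exact hline _ _ _ h (fun c h1 h2 => hS ⟨between hδ hp.1 hq.1 h1 h2, hp.2⟩)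
    · exact Rs_symm (hline _ _ _ h (fun c h1 h2 => hS ⟨between hδ hq.1 hp.1 h1 h2, hp.2⟩))
  have s2 : Relation.ReflTransGen (Rs S) (a', b) (a', b') := by
    rcases le_total b b' with h | h
    · exact vline _ _ _ h (fun c h1 h2 => hS ⟨hq.1, between hδ hp.2 hq.2 h1 h2⟩)
    · exact Rs_symm (vline _ _ _ h (fun c h1 h2 => hS ⟨hq.1, between hδ hq.2 hp.2 h1 h2⟩))
  exact s1.trans s2

theorem round_near {δ : ℝ} (hδ : 0 < δ) (x : ℝ) : |x - δ * round (x / δ)| ≤ δ / 2 := by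
  have := abs_sub_round (x / δ)
  have e : x - δ * round (x / δ) = δ * (x / δ - round (x / δ)) := by field_simp
  rw [e, abs_mul, abs_of_pos hδ]
  nlinarith

theorem round_mem {δ : ℝ} (hδ : 0 < δ) (k k' : ℝ × ℝ) (h : dist k' k ≤ δ / 2) :
    ((round (k.1 / δ), round (k.2 / δ)) : Pt) ∈ Nb δ k' := by
  have h1 := round_near hδ k.1
  have h2 := round_near hδ k.2
  rw [Prod.dist_eq, max_le_iff, Real.dist_eq, Real.dist_eq] at h
  change _ ∧ _
  have h3 := h.1
  have h4 := h.2
  rw [abs_le] at *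
  constructor
  · constructor <;> linarith [h1.1, h1.2, h3.1, h3.2]
  · rw [abs_le] at *
    constructor <;> linarith [h2.1, h2.2, h4.1, h4.2]

theorem Px_mem {δ : ℝ} (hδ : 0 < δ) {K : Set (ℝ × ℝ)} {k : ℝ × ℝ} (hk : k ∈ K) :
    ((round (k.1 / δ), round (k.2 / δ)) : Pt) ∈ Px δ K :=
  ⟨k, hk, round_mem hδ k k (by simp; positivity)⟩

theorem Px_conn {δ : ℝ} (hδ : 0 < δ) {K : Set (ℝ × ℝ)} (hK : IsPreconnected K) {p q : Pt}
    (hp : p ∈ Px δ K) (hq : q ∈ Px δ K) : Relation.ReflTransGen (Rs (Px δ K)) p q := by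
  obtain ⟨k, hk, hp⟩ := hp
  obtain ⟨k', hk', hq⟩ := hq
  have hsub : ∀ k ∈ K, Nb δ k ⊆ Px δ K := fun k hk p hp => ⟨k, hk, hp⟩
  have := hK.induction₂ (fun x y => ∀ p ∈ Nb δ x, ∀ q ∈ Nb δ y, Relation.ReflTransGen (Rs (Px δ K)) p q)
    (by
      intro x hx
      have hb : Metric.closedBall x (δ/2) ∈ nhdsWithin x K :=
        mem_nhdsWithin_of_mem_nhds (Metric.closedBall_mem_nhds x (by positivity))
      filter_upwards [hb, self_mem_nhdsWithin] with y hy hyK p hp q hq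
      have m1 := round_mem hδ x x (by simp; positivity)
      have m2 := round_mem hδ x y (by simpa using hy)
      exact (Nb_conn hδ x (hsub x hx) hp m1).trans (Nb_conn hδ y (hsub y hyK) m2 hq))
    (by
      intro x y z _ _ _ h1 h2 p hp q hq
      have m1 := round_mem hδ y y (by simp; positivity)
      exact (h1 p hp _ m1).trans (h2 _ m1 q hq))
    (by
      intro x y _ _ h p hp q hq
      exact Rs_symm (h q hq p hp)) hk hk'
  exact this p hp q hq

theorem Px_fin {δ : ℝ} (hδ : 0 < δ) {K : Set (ℝ × ℝ)} (hK : IsCompact K) : (Px δ K).Finite := by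
  obtain ⟨C, hC⟩ := hK.isBounded.subset_closedBall 0
  apply ((Set.finite_Icc (-⌈(C+δ)/δ⌉) ⌈(C+δ)/δ⌉).prod (Set.finite_Icc (-⌈(C+δ)/δ⌉) ⌈(C+δ)/δ⌉)).subset
  have key : ∀ (x : ℝ) (a : ℤ), |x| ≤ C → |x - δ * a| ≤ δ → a ∈ Icc (-⌈(C+δ)/δ⌉) ⌈(C+δ)/δ⌉ := by
    intro x a h1 h2
    rw [abs_le] at h1 h2
    have : (C + δ) / δ ≤ ⌈(C+δ)/δ⌉ := Int.le_ceil _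
    rw [div_le_iff₀ hδ] at this
    constructor
    · have : (-⌈(C+δ)/δ⌉ : ℝ) ≤ a := by nlinarith
      exact_mod_cast this
    · have : (a : ℝ) ≤ ⌈(C+δ)/δ⌉ := by nlinarith
      exact_mod_cast this
  rintro ⟨a, b⟩ ⟨k, hk, hp⟩
  have := hC hk
  rw [mem_closedBall_zero_iff, Prod.norm_def, max_le_iff] at this
  exact ⟨key _ _ this.1 hp.1, key _ _ this.2 hp.2⟩

theorem Px_disj {K K' : Set (ℝ × ℝ)} (hK : IsCompact K) (hK' : IsCompact K') (h : Disjoint K K') :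
    ∀ᶠ δ in nhdsWithin (0 : ℝ) (Ioi 0), Disjoint (Px δ K) (Px δ K') := by
  obtain ⟨r, hr, hh⟩ := Metric.exists_pos_forall_lt_edist hK hK'.isClosed h
  have : Ioo (0 : ℝ) (r / 2) ∈ nhdsWithin (0 : ℝ) (Ioi 0) := Ioo_mem_nhdsGT (by positivity)
  filter_upwards [this] with δ hδ
  rw [Set.disjoint_left]
  rintro p ⟨k, hk, h1⟩ ⟨k', hk', h2⟩
  have h3 := hh k hk k' hk'
  have h4 : dist k k' ≤ 2 * δ := by
    rw [Prod.dist_eq, max_le_iff, Real.dist_eq, Real.dist_eq]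
    have a1 := abs_le.1 h1.1
    have a2 := abs_le.1 h1.2
    have a3 := abs_le.1 h2.1
    have a4 := abs_le.1 h2.2
    constructor <;> rw [abs_le] <;> constructor <;> linarith [a1.1, a1.2, a2.1, a2.2, a3.1, a3.2, a4.1, a4.2]
  rw [edist_nndist] at h3
  have h5 : r < nndist k k' := by exact_mod_cast h3
  have h6 : (r : ℝ) < dist k k' := by rw [← coe_nndist]; exact_mod_cast h5
  linarith [hδ.2]

end FP

namespace FP

theorem LM_of_planar {V : Type u} [Finite V] {G : SimpleGraph V} (E : PlaneEmbedding G) : LM G := by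
  classical
  obtain ⟨F, hF, hFs⟩ : ∃ F : V → V → ℝ → ℝ × ℝ, (∀ u v (h : G.Adj u v), ContinuousOn (F u v) (Icc 0 1) ∧
      InjOn (F u v) (Icc 0 1) ∧ F u v 0 = E.pos u ∧ F u v 1 = E.pos v ∧ ∀ t ∈ Icc (0:ℝ) 1, F u v t ∈ E.arc h) ∧
      ∀ u v, G.Adj u v → ∀ t, F v u t = F u v (1 - t) := by
    have : ∀ u v, ∃ f : ℝ → ℝ × ℝ, ∀ (h : G.Adj u v), ContinuousOn f (Icc 0 1) ∧
      InjOn f (Icc 0 1) ∧ f 0 = E.pos u ∧ f 1 = E.pos v ∧ ∀ t ∈ Icc (0:ℝ) 1, f t ∈ E.arc h := by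
      intro u v
      by_cases h : G.Adj u v
      · obtain ⟨f, h1, h2, h3, h4, h5⟩ := E.arc_curve h
        exact ⟨f, fun _ => ⟨h1, h2, h3, h4, fun t ht => h5 ▸ mem_image_of_mem f ht⟩⟩
      · exact ⟨fun _ => 0, fun h' => absurd h' h⟩
    choose f hf using this
    have hrev : ∀ t ∈ Icc (0:ℝ) 1, 1 - t ∈ Icc (0:ℝ) 1 := fun t ht => ⟨by linarith [ht.2], by linarith [ht.1]⟩
    refine ⟨fun u v => if WellOrderingRel u v then f u v else fun t => f v u (1 - t), ?_, ?_⟩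
    · intro u v h
      beta_reduce
      split_ifs with hr
      · exact hf u v h
      · obtain ⟨h1, h2, h3, h4, h5⟩ := hf v u h.symm
        refine ⟨h1.comp (by fun_prop) hrev, ?_, by simpa using h4, by simpa using h3, ?_⟩
        · intro s hs t ht hst
          have := h2 (hrev s hs) (hrev t ht) hst
          linarith
        · intro t ht
          have := h5 _ (hrev t ht)
          rwa [E.arc_symm h] at this
    · intro u v h t
      beta_reduce
      rcases trichotomous_of WellOrderingRel u v with hr | hr | hr
      · have h' : ¬ WellOrderingRel v u := asymm hr
        simp only [hr, h', if_true, if_false]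
      · exact absurd hr h.ne
      · have h' : ¬ WellOrderingRel u v := asymm hr
        simp only [hr, h', if_true, if_false]
        congr 1; ring
  -- meeting lemmas
  have inj0 : ∀ u v, G.Adj u v → ∀ t ∈ Icc (0:ℝ) 1, F u v t = E.pos u → t = 0 := by
    intro u v h t ht he
    obtain ⟨h1, h2, h3, h4, h5⟩ := hF u v h
    exact h2 ht (by simp) (he.trans h3.symm)
  have inj1 : ∀ u v, G.Adj u v → ∀ t ∈ Icc (0:ℝ) 1, F u v t = E.pos v → t = 1 := by
    intro u v h t ht he
    obtain ⟨h1, h2, h3, h4, h5⟩ := hF u v h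
    exact h2 ht (by simp) (he.trans h4.symm)
  have posF : ∀ u v, G.Adj u v → ∀ t ∈ Icc (0:ℝ) 1, ∀ w, F u v t = E.pos w → (w = u ∧ t = 0) ∨ (w = v ∧ t = 1) := by
    intro u v h t ht w he
    have hm := (hF u v h).2.2.2.2 t ht
    rw [he] at hm
    rcases E.pos_arc h w hm with rfl | rfl
    · exact Or.inl ⟨rfl, inj0 _ _ h t ht he⟩
    · exact Or.inr ⟨rfl, inj1 _ _ h t ht he⟩
  have meet : ∀ u v w z, G.Adj u v → G.Adj w z → s(u,v) ≠ s(w,z) → ∀ t ∈ Icc (0:ℝ) 1, ∀ s ∈ Icc (0:ℝ) 1,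
      F u v t = F w z s → ∃ x, F u v t = E.pos x ∧ F w z s = E.pos x := by
    intro u v w z h h' hne t ht s hs he
    have m1 := (hF u v h).2.2.2.2 t ht
    have m2 := (hF w z h').2.2.2.2 s hs
    rw [← he] at m2
    have := (E.arc_inter h h' hne ⟨m1, m2⟩).1
    rcases this with hx | hx
    · exact ⟨u, hx, he ▸ hx⟩
    · exact ⟨v, hx, he ▸ hx⟩
  let K : V → Set (ℝ × ℝ) := fun v => {E.pos v} ∪ ⋃ w ∈ {w | G.Adj v w}, F v w '' Icc 0 (1/3)
  let M : V → V → Set (ℝ × ℝ) := fun u v => F u v '' Icc (1/3) (2/3)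
  have Kmem : ∀ v x, x ∈ K v → x = E.pos v ∨ ∃ w, G.Adj v w ∧ ∃ t ∈ Icc (0:ℝ) (1/3), F v w t = x := by
    intro v x hx
    simp only [K, mem_union, mem_singleton_iff, mem_iUnion, mem_image] at hx
    rcases hx with hx | ⟨w, hw, hx⟩
    · exact Or.inl hx
    · exact Or.inr ⟨w, hw, hx⟩
  have Kmem1 : ∀ v, E.pos v ∈ K v := fun v => Or.inl rfl
  have Kmem2 : ∀ v w, G.Adj v w → ∀ t ∈ Icc (0:ℝ) (1/3), F v w t ∈ K v := by
    intro v w h t ht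
    right
    simp only [mem_iUnion]
    exact ⟨w, h, mem_image_of_mem _ ht⟩
  have hs1 : Icc (0:ℝ) (1/3) ⊆ Icc 0 1 := Icc_subset_Icc le_rfl (by norm_num)
  have hs2 : Icc (1/3:ℝ) (2/3) ⊆ Icc 0 1 := Icc_subset_Icc (by norm_num) (by norm_num)
  have Kcpt : ∀ v, IsCompact (K v) := by
    intro v
    refine isCompact_singleton.union (Set.Finite.isCompact_biUnion (Set.toFinite _) ?_)
    intro w hw
    exact isCompact_Icc.image_of_continuousOn ((hF v w hw).1.mono hs1)
  have Kpre : ∀ v, IsPreconnected (K v) := by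
    intro v
    apply isPreconnected_of_forall (E.pos v)
    intro y hy
    rcases Kmem v y hy with rfl | ⟨w, hw, t, ht, rfl⟩
    · exact ⟨{E.pos v}, by simpa using Kmem1 v, rfl, rfl, isPreconnected_singleton⟩
    · refine ⟨F v w '' Icc 0 (1/3), ?_, ⟨0, by norm_num, (hF v w hw).2.2.1⟩, mem_image_of_mem _ ht,
        isPreconnected_Icc.image _ ((hF v w hw).1.mono hs1)⟩
      rintro _ ⟨s, hs, rfl⟩
      exact Kmem2 v w hw s hs
  have Mcpt : ∀ u v, G.Adj u v → IsCompact (M u v) := fun u v h =>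
    isCompact_Icc.image_of_continuousOn ((hF u v h).1.mono hs2)
  have Mpre : ∀ u v, G.Adj u v → IsPreconnected (M u v) := fun u v h =>
    isPreconnected_Icc.image _ ((hF u v h).1.mono hs2)
  have Kdis : ∀ v w, v ≠ w → Disjoint (K v) (K w) := by
    intro v w hvw
    rw [Set.disjoint_left]
    intro x hx hx'
    rcases Kmem v x hx with rfl | ⟨a, ha, t, ht, rfl⟩
    · rcases Kmem w _ hx' with h | ⟨b, hb, s, hs, he⟩
      · exact hvw (E.pos_inj h)
      · rcases posF w b hb s (hs1 hs) v he with h | h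
        · exact hvw h.1
        · linarith [hs.2, h.2]
    · rcases Kmem w _ hx' with h | ⟨b, hb, s, hs, he⟩
      · rcases posF v a ha t (hs1 ht) w h with h | h
        · exact hvw h.1.symm
        · linarith [ht.2, h.2]
      · by_cases hsy : s(v,a) = s(w,b)
        · rw [Sym2.eq_iff] at hsy
          rcases hsy with h | h
          · exact hvw h.1
          · obtain ⟨rfl, rfl⟩ := h
            rw [hFs v a ha] at he
            have := (hF v a ha).2.1 (⟨by linarith [hs.2], by linarith [hs.1]⟩) (hs1 ht) he
            linarith [hs.2, ht.2]
        · obtain ⟨x, e1, e2⟩ := meet v a w b ha hb hsy t (hs1 ht) s (hs1 hs) he.symm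
          rcases posF v a ha t (hs1 ht) x e1 with h | h
          · rcases posF w b hb s (hs1 hs) x e2 with h' | h'
            · exact hvw (h.1.symm.trans h'.1)
            · linarith [hs.2, h'.2]
          · linarith [ht.2, h.2]
  have mid : ∀ u v, G.Adj u v → ∀ t ∈ Icc (1/3:ℝ) (2/3), ∀ x, F u v t ≠ E.pos x := by
    intro u v h t ht x he
    rcases posF u v h t (hs2 ht) x he with h' | h'
    · linarith [ht.1, h'.2]
    · linarith [ht.2, h'.2]
  have MKdis : ∀ u v w, G.Adj u v → w ≠ u → w ≠ v → Disjoint (M u v) (K w) := by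
    intro u v w h h1 h2
    rw [Set.disjoint_left]
    rintro _ ⟨t, ht, rfl⟩ hx'
    rcases Kmem w _ hx' with h' | ⟨b, hb, s, hs, he⟩
    · exact mid u v h t ht w h'
    · have hsy : s(u,v) ≠ s(w,b) := by
        intro hsy
        rw [Sym2.eq_iff] at hsy
        rcases hsy with h | h
        · exact h1 h.1.symm
        · exact h2 h.2.symm
      obtain ⟨x, e1, e2⟩ := meet u v w b h hb hsy t (hs2 ht) s (hs1 hs) he.symm
      exact mid u v h t ht x e1
  have MMdis : ∀ u v w z, G.Adj u v → G.Adj w z → s(u,v) ≠ s(w,z) → Disjoint (M u v) (M w z) := by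
    intro u v w z h h' hsy
    rw [Set.disjoint_left]
    rintro _ ⟨t, ht, rfl⟩ ⟨s, hs, he⟩
    obtain ⟨x, e1, e2⟩ := meet u v w z h h' hsy t (hs2 ht) s (hs2 hs) he.symm
    exact mid u v h t ht x e1
  -- choice of the scale
  have ev1 : ∀ᶠ δ in nhdsWithin (0 : ℝ) (Ioi 0), ∀ v w, v ≠ w → Disjoint (Px δ (K v)) (Px δ (K w)) := by
    simp only [Filter.eventually_all]
    intro v w h
    exact Px_disj (Kcpt v) (Kcpt w) (Kdis v w h)
  have ev2 : ∀ᶠ δ in nhdsWithin (0 : ℝ) (Ioi 0), ∀ u v w, G.Adj u v → w ≠ u → w ≠ v →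
      Disjoint (Px δ (M u v)) (Px δ (K w)) := by
    simp only [Filter.eventually_all]
    intro u v w h h1 h2
    exact Px_disj (Mcpt u v h) (Kcpt w) (MKdis u v w h h1 h2)
  have ev3 : ∀ᶠ δ in nhdsWithin (0 : ℝ) (Ioi 0), ∀ u v w z, G.Adj u v → G.Adj w z → s(u,v) ≠ s(w,z) →
      Disjoint (Px δ (M u v)) (Px δ (M w z)) := by
    simp only [Filter.eventually_all]
    intro u v w z h h1 h2
    exact Px_disj (Mcpt u v h) (Mcpt w z h1) (MMdis u v w z h h1 h2)
  obtain ⟨δ, ⟨D1, D2, D3⟩, hδ⟩ := ((ev1.and (ev2.and ev3)).and self_mem_nhdsWithin).exists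
  replace hδ : 0 < δ := hδ
  let rd : ℝ × ℝ → Pt := fun k => (round (k.1 / δ), round (k.2 / δ))
  have hrd : ∀ S : Set (ℝ × ℝ), ∀ k ∈ S, rd k ∈ Px δ S := fun S k hk => Px_mem hδ hk
  let Y : V → V → Set Pt := fun u v =>
    {q | Relation.ReflTransGen (Rs (Px δ (M u v) \ Px δ (K v))) (rd (F u v (1/3))) q}
  have p0M : ∀ u v, rd (F u v (1/3)) ∈ Px δ (M u v) := fun u v =>
    hrd _ _ (mem_image_of_mem _ (by norm_num))
  have p0K : ∀ u v, G.Adj u v → rd (F u v (1/3)) ∈ Px δ (K u) := fun u v h =>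
    hrd _ _ (Kmem2 u v h _ (by norm_num))
  have p0n : ∀ u v, G.Adj u v → rd (F u v (1/3)) ∉ Px δ (K v) := fun u v h h' =>
    Set.disjoint_left.1 (D1 u v h.ne) (p0K u v h) h'
  have p1M : ∀ u v, rd (F u v (2/3)) ∈ Px δ (M u v) := fun u v =>
    hrd _ _ (mem_image_of_mem _ (by norm_num))
  have p1K : ∀ u v, G.Adj u v → rd (F u v (2/3)) ∈ Px δ (K v) := by
    intro u v h
    have := p0K v u h.symm
    rw [hFs u v h] at this
    norm_num at this
    exact this
  have hY : ∀ u v, G.Adj u v → ∀ q ∈ Y u v, q ∈ Px δ (M u v) ∧ q ∉ Px δ (K v) := by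
    intro u v h q hq
    rcases Relation.ReflTransGen.cases_tail hq with h' | ⟨_, _, h'⟩
    · rw [h']; exact ⟨p0M u v, p0n u v h⟩
    · exact h'.2.2
  let S : V → Set Pt := fun u => Px δ (K u) ∪ {q | ∃ v, G.Adj u v ∧ WellOrderingRel u v ∧ q ∈ Y u v}
  have edge : ∀ u v, G.Adj u v → WellOrderingRel u v → ∃ p ∈ S u, ∃ q ∈ S v, LStep p q := by
    intro u v h hr
    have key : ∀ x, Relation.ReflTransGen (Rs (Px δ (M u v))) (rd (F u v (1/3))) x →
        x ∈ Y u v ∨ ∃ p ∈ Y u v, ∃ q ∈ Px δ (K v), LStep p q := by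
      intro x hx
      induction hx with
      | refl => exact Or.inl Relation.ReflTransGen.refl
      | @tail b c h1 h2 ih =>
        rcases ih with ih | ih
        · by_cases hc : c ∈ Px δ (K v)
          · exact Or.inr ⟨b, ih, c, hc, h2.1⟩
          · exact Or.inl (Relation.ReflTransGen.tail ih ⟨h2.1, hY u v h b ih, h2.2.2, hc⟩)
        · exact Or.inr ih
    rcases key _ (Px_conn hδ (Mpre u v h) (p0M u v) (p1M u v)) with h1 | ⟨p, hp, q, hq, hpq⟩
    · exact absurd (p1K u v h) (hY u v h _ h1).2
    · exact ⟨p, Or.inr ⟨v, h, hr, hp⟩, q, Or.inl hq, hpq⟩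
  refine ⟨S, fun v => rd (E.pos v), ?_, fun v => Or.inl (hrd _ _ (Kmem1 v)), ?_, ?_, ?_⟩
  · intro u
    apply ((Px_fin hδ (Kcpt u)).union (Set.Finite.biUnion (Set.toFinite {v | G.Adj u v})
      (fun v hv => Px_fin hδ (Mcpt u v hv)))).subset
    rintro q (hq | ⟨v, h, hr, hq⟩)
    · exact Or.inl hq
    · right
      simp only [mem_iUnion]
      exact ⟨v, h, (hY u v h q hq).1⟩
  · have hKp : ∀ u p, p ∈ Px δ (K u) →
        Relation.ReflTransGen (fun p q => LStep p q ∧ q ∈ S u) (rd (E.pos u)) p := by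
      intro u p hp
      refine Relation.ReflTransGen.mono ?_ _ _ (Px_conn hδ (Kpre u) (hrd _ _ (Kmem1 u)) hp)
      intro a b hab
      exact ⟨hab.1, Or.inl hab.2.2⟩
    rintro u p (hp | ⟨v, h, hr, hq⟩)
    · exact hKp u p hp
    · have hq' : Relation.ReflTransGen (Rs (Px δ (M u v) \ Px δ (K v))) (rd (F u v (1/3))) p := hq
      induction hq' with
      | refl => exact hKp u _ (p0K u v h)
      | tail h1 h2 ih => exact (ih h1).tail ⟨h2.1, Or.inr ⟨v, h, hr, h1.tail h2⟩⟩
  · intro u w huw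
    rw [Set.disjoint_left]
    have aux : ∀ u w, u ≠ w → ∀ v', G.Adj w v' → ∀ q ∈ Px δ (K u), q ∉ Y w v' := by
      intro u w huw v' h q hq hq'
      obtain ⟨a1, a2⟩ := hY w v' h q hq'
      by_cases e : u = v'
      · exact a2 (e ▸ hq)
      · exact Set.disjoint_left.1 (D2 w v' u h huw e) a1 hq
    rintro q (hq | ⟨v, h, hr, hq⟩) (hq' | ⟨v', h', hr', hq'⟩)
    · exact Set.disjoint_left.1 (D1 u w huw) hq hq'
    · exact aux u w huw v' h' q hq hq'
    · exact aux w u huw.symm v h q hq' hq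
    · by_cases e : s(u,v) = s(w,v')
      · rw [Sym2.eq_iff] at e
        rcases e with e | ⟨rfl, rfl⟩
        · exact huw e.1
        · exact asymm hr hr'
      · exact Set.disjoint_left.1 (D3 u v w v' h h' e) (hY u v h q hq).1 (hY w v' h' q hq').1
  · intro u v h
    rcases trichotomous_of WellOrderingRel u v with hr | hr | hr
    · exact edge u v h hr
    · exact absurd hr h.ne
    · obtain ⟨p, hp, q, hq, hpq⟩ := edge v u h.symm hr
      exact ⟨q, hq, p, hp, hpq.symm⟩

end FP

namespace FP

structure OpRel {V : Type*} (G : SimpleGraph V) (Op : V → V → V → Prop) : Prop where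
  symm : ∀ v a b, Op v a b → Op v b a
  func : ∀ v a b c, Op v a b → Op v a c → b = c
  ne : ∀ v a b, Op v a b → a ≠ b
  other : ∀ v a b, Op v a b → ∃ g g', g ≠ g' ∧ g ≠ a ∧ g ≠ b ∧ g' ≠ a ∧ g' ≠ b ∧ G.Adj v g ∧ G.Adj v g'

theorem OpRel.two {V : Type*} {G : SimpleGraph V} {Op : V → V → V → Prop} (hO : OpRel G Op) {v a b : V} {T : V → Prop}
    (ha : T a) (hb : T b) (hab : a ≠ b) (h : ¬ Op v a b) : ∀ p q, Op v p q → ¬ ∀ c, T c ↔ c = p ∨ c = q := by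
  intro p q hpq hT
  have h1 := (hT a).1 ha
  have h2 := (hT b).1 hb
  have := hO.symm v p q hpq
  rcases h1 with rfl | rfl <;> rcases h2 with rfl | rfl <;> simp_all

theorem three_bad {V : Type*} {Op : V → V → V → Prop} {v a b d : V} {T : V → Prop}
    (ha : T a) (hb : T b) (hd : T d) (hab : a ≠ b) (had : a ≠ d) (hbd : b ≠ d) :
    ∀ p q, Op v p q → ¬ ∀ c, T c ↔ c = p ∨ c = q := by
  intro p q hpq hT
  have h1 := (hT a).1 ha
  have h2 := (hT b).1 hb
  have h3 := (hT d).1 hd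
  rcases h1 with rfl | rfl <;> rcases h2 with rfl | rfl <;> rcases h3 with rfl | rfl <;> simp_all

theorem exists_turning {V : Type*} [Finite V] {G : SimpleGraph V} {Op : V → V → V → Prop} (U : Finset V)
    (w y₁ : V) (hw : w ∉ U) (hy : y₁ ∈ U) (hwy : G.Adj y₁ w) :
    ∃ (k : ℕ) (y : ℕ → V), 1 ≤ k ∧ y 0 = w ∧ (∀ i, 1 ≤ i → i ≤ k → y i ∈ U) ∧
      (∀ i j, i ≤ k → j ≤ k → y i = y j → i = j) ∧ (∀ i, 1 ≤ i → i ≤ k → G.Adj (y i) (y (i-1))) ∧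
      (∀ i, 1 ≤ i → i < k → ¬ Op (y i) (y (i-1)) (y (i+1))) ∧
      (∀ c ∈ U, (∀ i, 1 ≤ i → i ≤ k → c ≠ y i) → G.Adj (y k) c → Op (y k) (y (k-1)) c) := by
  classical
  have := Fintype.ofFinite V
  let P : ℕ → Prop := fun k => ∃ (y : ℕ → V), 1 ≤ k ∧ y 0 = w ∧ (∀ i, 1 ≤ i → i ≤ k → y i ∈ U) ∧
      (∀ i j, i ≤ k → j ≤ k → y i = y j → i = j) ∧ (∀ i, 1 ≤ i → i ≤ k → G.Adj (y i) (y (i-1))) ∧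
      (∀ i, 1 ≤ i → i < k → ¬ Op (y i) (y (i-1)) (y (i+1)))
  have hb : ∀ k, P k → k ≤ Fintype.card V := by
    rintro k ⟨y, h1, h2, h3, h4, -⟩
    have := Finset.card_le_card_of_injOn (s := Finset.range (k+1)) (t := (Finset.univ : Finset V)) y (by simp)
      (by intro i hi j hj h; simp at hi hj; exact h4 i j (by omega) (by omega) h)
    simp at this
    omega
  have h1 : P 1 := by
    refine ⟨fun i => if i = 0 then w else y₁, le_rfl, by simp, ?_, ?_, ?_, ?_⟩
    · intro i hi hi'
      have : i ≠ 0 := by omega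
      simpa [this] using hy
    · intro i j hi hj
      have hne : w ≠ y₁ := fun h => hw (h ▸ hy)
      rcases Nat.le_one_iff_eq_zero_or_eq_one.1 hi with rfl | rfl <;>
        rcases Nat.le_one_iff_eq_zero_or_eq_one.1 hj with rfl | rfl <;> simp [hne, hne.symm]
    · intro i hi hi'
      obtain rfl : i = 1 := by omega
      simpa using hwy
    · intro i hi hi'
      omega
  have hs := Nat.findGreatest_spec (P := P) (hb 1 h1) h1
  set k := Nat.findGreatest P (Fintype.card V) with hk
  obtain ⟨y, g1, g2, g3, g4, g5, g6⟩ := hs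
  refine ⟨k, y, g1, g2, g3, g4, g5, g6, ?_⟩
  intro c hc hcy hadj
  by_contra hop
  have hP : P (k+1) := by
    refine ⟨fun i => if i = k+1 then c else y i, by omega, ?_, ?_, ?_, ?_, ?_⟩
    · simpa using g2
    · intro i hi hi'
      by_cases h : i = k+1
      · simpa [h] using hc
      · simpa [h] using g3 i hi (by omega)
    · have hcy' : ∀ i ≤ k, c ≠ y i := by
        intro i hi
        by_cases h : i = 0
        · subst h; rw [g2]; rintro rfl; exact hw hc
        · exact hcy i (by omega) hi
      intro i j hi hj
      by_cases h : i = k+1 <;> by_cases h' : j = k+1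
      · simp [h, h']
      · simp only [h, h', if_true, if_false]
        intro e; exact absurd e (hcy' j (by omega))
      · simp only [h, h', if_true, if_false]
        intro e; exact absurd e.symm (hcy' i (by omega))
      · simp only [h, h', if_false]
        exact g4 i j (by omega) (by omega)
    · intro i hi hi'
      have e : i - 1 ≠ k + 1 := by omega
      by_cases h : i = k+1
      · subst h; simpa using hadj.symm
      · simpa [h, e] using g5 i hi (by omega)
    · intro i hi hi'
      have e : i - 1 ≠ k + 1 := by omega
      have e' : i ≠ k + 1 := by omega
      by_cases h : i = k
      · subst h; simpa [e] using hop
      · simpa [h, e, e'] using g6 i hi (by omega)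
  have := Nat.le_findGreatest (hb _ hP) hP
  omega

theorem tree_lemma {V : Type*} [Finite V] {G : SimpleGraph V} {Op : V → V → V → Prop} (hO : OpRel G Op)
    (hconn : ∀ U : Finset V, U.Nonempty → (∃ w, w ∉ U) → ∃ w, w ∉ U ∧ ∃ y ∈ U, G.Adj y w) (U : Finset V) :
    (∃ w, w ∉ U) → ∃ (par : V → V) (rk : V → ℕ), ∀ v ∈ U, G.Adj v (par v) ∧ (par v ∈ U → rk (par v) < rk v) ∧
      ∀ a b, Op v a b → ¬ ∀ c, (c = par v ∨ (c ∈ U ∧ par c = v)) ↔ (c = a ∨ c = b) := by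
  classical
  induction U using Finset.strongInduction with
  | H U IH =>
  intro hUne
  rcases U.eq_empty_or_nonempty with rfl | hne
  · exact ⟨id, fun _ => 0, by simp⟩
  obtain ⟨w, hw, y₁, hy₁, hadj⟩ := hconn U hne hUne
  obtain ⟨k, y, hk, y0, yU, yinj, yadj, yturn, ymax⟩ := exists_turning (Op := Op) U w y₁ hw hy₁ hadj
  let Y : Finset V := (Finset.Icc 1 k).image y
  have hYmem : ∀ c, c ∈ Y ↔ ∃ i, 1 ≤ i ∧ i ≤ k ∧ y i = c := by
    intro c; simp [Y, and_assoc]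
  let U' := U \ Y
  have hU' : ∀ c, c ∈ U' ↔ c ∈ U ∧ ∀ i, 1 ≤ i → i ≤ k → c ≠ y i := by
    intro c
    simp only [U', Finset.mem_sdiff, hYmem]
    constructor
    · rintro ⟨h1, h2⟩; exact ⟨h1, fun i hi hi' e => h2 ⟨i, hi, hi', e.symm⟩⟩
    · rintro ⟨h1, h2⟩; refine ⟨h1, ?_⟩; rintro ⟨i, hi, hi', e⟩; exact h2 i hi hi' e.symm
  have yU' : ∀ i, i ≤ k → y i ∉ U' := by
    intro i hi h
    rw [hU'] at h
    by_cases h0 : i = 0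
    · subst h0; rw [y0] at h; exact hw h.1
    · exact h.2 i (by omega) hi rfl
  have hss : U' ⊂ U := by
    refine ⟨Finset.sdiff_subset, fun h => ?_⟩
    exact yU' 1 hk (h (yU 1 le_rfl hk))
  obtain ⟨par', rk', ih⟩ := IH U' hss ⟨w, fun h => hw (hss.1 h)⟩
  obtain ⟨J, hJ1, hJ0⟩ : ∃ J : V → ℕ, (∀ i, 1 ≤ i → i ≤ k → J (y i) = i) ∧ ∀ c ∈ U', J c = 0 := by
    refine ⟨fun c => if h : ∃ i, 1 ≤ i ∧ i ≤ k ∧ y i = c then h.choose else 0, ?_, ?_⟩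
    · intro i hi hi'
      have h : ∃ j, 1 ≤ j ∧ j ≤ k ∧ y j = y i := ⟨i, hi, hi', rfl⟩
      simp only [h, dif_pos]
      exact yinj _ _ h.choose_spec.2.1 hi' h.choose_spec.2.2
    · intro c hc
      apply dif_neg
      rintro ⟨i, hi, hi', rfl⟩
      exact yU' i hi' hc
  have Usplit : ∀ c ∈ U, c ∈ U' ∨ ∃ i, 1 ≤ i ∧ i ≤ k ∧ y i = c := by
    intro c hc
    by_cases h : c ∈ Y
    · exact Or.inr ((hYmem c).1 h)
    · exact Or.inl (Finset.mem_sdiff.2 ⟨hc, h⟩)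
  have glue : ∀ (p : ℕ → V) (r : ℕ → ℕ) (B : ℕ), (∀ i, 1 ≤ i → i ≤ k → G.Adj (y i) (p i) ∧ p i ∉ U' ∧ r i ≤ B ∧
      (∀ j, 1 ≤ j → j ≤ k → p i = y j → r j < r i) ∧ ∀ a b, Op (y i) a b →
      ¬ ∀ c, (c = p i ∨ (∃ j, 1 ≤ j ∧ j ≤ k ∧ c = y j ∧ p j = y i) ∨ (c ∈ U' ∧ par' c = y i)) ↔ (c = a ∨ c = b)) →
      ∃ (par : V → V) (rk : V → ℕ), ∀ v ∈ U, G.Adj v (par v) ∧ (par v ∈ U → rk (par v) < rk v) ∧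
      ∀ a b, Op v a b → ¬ ∀ c, (c = par v ∨ (c ∈ U ∧ par c = v)) ↔ (c = a ∨ c = b) := by
    intro p r B hp
    let par : V → V := fun v => if J v = 0 then par' v else p (J v)
    have par1 : ∀ c ∈ U', par c = par' c := fun c hc => by simp [par, hJ0 c hc]
    have par2 : ∀ i, 1 ≤ i → i ≤ k → par (y i) = p i := fun i hi hi' => by
      have : i ≠ 0 := by omega
      simp [par, hJ1 i hi hi', this]
    let rk : V → ℕ := fun v => if J v = 0 then rk' v + B + 1 else r (J v)
    have rk1 : ∀ c ∈ U', rk c = rk' c + B + 1 := fun c hc => by simp [rk, hJ0 c hc]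
    have rk2 : ∀ i, 1 ≤ i → i ≤ k → rk (y i) = r i := fun i hi hi' => by
      have : i ≠ 0 := by omega
      simp [rk, hJ1 i hi hi', this]
    refine ⟨par, rk, ?_⟩
    intro v hv
    rcases Usplit v hv with hv' | ⟨i, hi, hi', rfl⟩
    · obtain ⟨i1, i2, i3⟩ := ih v hv'
      rw [par1 v hv', rk1 v hv']
      refine ⟨i1, ?_, ?_⟩
      · intro h
        rcases Usplit _ h with h' | ⟨j, hj, hj', e⟩
        · rw [rk1 _ h']; have := i2 h'; omega
        · rw [← e, rk2 j hj hj']; have := (hp j hj hj').2.2.1; omega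
      · intro a b hab hT
        apply i3 a b hab
        intro c
        rw [← hT c]
        apply or_congr Iff.rfl
        constructor
        · rintro ⟨h1, h2⟩; exact ⟨hss.1 h1, by rw [par1 c h1, h2]⟩
        · rintro ⟨h1, h2⟩
          rcases Usplit _ h1 with h' | ⟨j, hj, hj', e⟩
          · exact ⟨h', by rw [← par1 c h', h2]⟩
          · rw [← e, par2 j hj hj'] at h2
            exact absurd hv' (h2 ▸ (hp j hj hj').2.1)
    · obtain ⟨i1, i2, i3, i4, i5⟩ := hp i hi hi'
      rw [par2 i hi hi', rk2 i hi hi']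
      refine ⟨i1, ?_, ?_⟩
      · intro h
        rcases Usplit _ h with h' | ⟨j, hj, hj', e⟩
        · exact absurd h' i2
        · rw [← e, rk2 j hj hj']; exact i4 j hj hj' e.symm
      · intro a b hab hT
        apply i5 a b hab
        intro c
        rw [← hT c]
        apply or_congr Iff.rfl
        constructor
        · rintro (⟨j, hj, hj', rfl, h2⟩ | ⟨h1, h2⟩)
          · exact ⟨yU j hj hj', by rw [par2 j hj hj', h2]⟩
          · exact ⟨hss.1 h1, by rw [par1 c h1, h2]⟩
        · rintro ⟨h1, h2⟩
          rcases Usplit _ h1 with h' | ⟨j, hj, hj', e⟩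
          · exact Or.inr ⟨h', by rw [← par1 c h', h2]⟩
          · exact Or.inl ⟨j, hj, hj', e.symm, by rw [← h2, ← e, par2 j hj hj']⟩
  have yne : ∀ i j, i ≤ k → j ≤ k → i ≠ j → y i ≠ y j := fun i j hi hj h e => h (yinj i j hi hj e)
  by_cases hH : ∃ h, Op (y k) (y (k-1)) h ∧ ∀ c, (c ∈ U' ∧ par' c = y k) ↔ c = h
  swap
  · apply glue (fun i => y (i-1)) (fun i => i) k
    intro i hi hi'
    refine ⟨yadj i hi hi', yU' _ (by omega), hi', ?_, ?_⟩
    · intro j hj hj' e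
      have := yinj _ _ (by omega) hj' e
      omega
    · by_cases hik : i < k
      · refine hO.two (a := y (i-1)) (b := y (i+1)) (Or.inl rfl) ?_ (yne _ _ (by omega) (by omega) (by omega))
          (yturn i hi hik)
        exact Or.inr (Or.inl ⟨i+1, by omega, by omega, rfl, by simp⟩)
      · obtain rfl : i = k := by omega
        intro a b hab hT
        have key : ∀ b, Op (y i) (y (i-1)) b → (∀ c, (c = y (i-1) ∨ (∃ j, 1 ≤ j ∧ j ≤ i ∧ c = y j ∧ y (j-1) = y i) ∨
            (c ∈ U' ∧ par' c = y i)) ↔ (c = y (i-1) ∨ c = b)) → False := by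
          intro b hb hT
          apply hH
          refine ⟨b, hb, ?_⟩
          intro c
          constructor
          · intro hc
            rcases (hT c).1 (Or.inr (Or.inr hc)) with h | h
            · exact absurd hc.1 (h ▸ yU' _ (by omega))
            · exact h
          · rintro rfl
            rcases (hT c).2 (Or.inr rfl) with h | ⟨j, hj, hj', -, h⟩ | h
            · exact absurd h.symm (hO.ne _ _ _ hb)
            · have := yinj _ _ (by omega) le_rfl h
              omega
            · exact h
        rcases (hT (y (i-1))).1 (Or.inl rfl) with e | e
        · subst e; exact key b hab hT
        · subst e; exact key a (hO.symm _ _ _ hab) (fun c => (hT c).trans or_comm)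
  · let H : ℕ → Prop := fun i => ∃ h, Op (y i) (y (i-1)) h ∧ ∀ c, (c ∈ U' ∧ par' c = y i) ↔ c = h
    let Q : ℕ → Prop := fun t => 1 ≤ t ∧ t ≤ k ∧ ∀ i, t ≤ i → i ≤ k → H i
    have hQk : Q k := ⟨hk, le_rfl, fun i h1 h2 => by obtain rfl : i = k := by omega
                                                     exact hH⟩
    obtain ⟨t₀, ⟨ht1, htk, htH⟩, htmin⟩ : ∃ t, Q t ∧ (1 < t → ¬ H (t-1)) := by
      have hex : ∃ t, Q t := ⟨k, hQk⟩
      refine ⟨Nat.find hex, Nat.find_spec hex, ?_⟩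
      intro h1 h2
      obtain ⟨q1, q2, q3⟩ := Nat.find_spec hex
      refine Nat.find_min hex (m := Nat.find hex - 1) (by omega) ⟨by omega, by omega, ?_⟩
      intro i hi hi'
      rcases Nat.lt_or_ge i (Nat.find hex) with h | h
      · obtain rfl : i = Nat.find hex - 1 := by omega
        exact h2
      · exact q3 i h hi'
    obtain ⟨h, hop, hh⟩ := hH
    have hhU : h ∈ U' ∧ par' h = y k := (hh h).2 rfl
    obtain ⟨g, g', gg, g1, g2, g1', g2', ga, ga'⟩ := hO.other _ _ _ hop
    have place : ∀ z, z ≠ y (k-1) → z ≠ h → G.Adj (y k) z → z ∉ U ∨ ∃ j, 1 ≤ j ∧ j + 2 ≤ k ∧ z = y j := by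
      intro z z1 z2 za
      by_cases hz : z ∈ U
      · right
        rcases Usplit z hz with hz' | ⟨j, hj, hj', rfl⟩
        · have := ymax z hz ((hU' z).1 hz').2 za
          exact absurd (hO.func _ _ _ _ this hop) z2
        · refine ⟨j, hj, ?_, rfl⟩
          have e1 : j ≠ k - 1 := fun e => z1 (by rw [e])
          have e2 : j ≠ k := fun e => G.loopless.irrefl _ (by rw [e] at za; exact za)
          omega
      · exact Or.inl hz
    obtain ⟨z, z1, z2, za, zt⟩ : ∃ z, z ≠ y (k-1) ∧ z ≠ h ∧ G.Adj (y k) z ∧ z ≠ y (t₀-1) := by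
      by_cases e : g = y (t₀-1)
      · exact ⟨g', g1', g2', ga', fun e' => gg (e.trans e'.symm)⟩
      · exact ⟨g, g1, g2, ga, e⟩
    have hzp := place z z1 z2 za
    obtain ⟨t, ht0, htk', hcase⟩ : ∃ t, t₀ ≤ t ∧ t ≤ k ∧ ((t₀ < t ∧ z = y (t-1)) ∨
        (t = t₀ ∧ (z ∉ U ∨ ∃ j, 1 ≤ j ∧ j + 1 < t ∧ z = y j))) := by
      rcases hzp with hz | ⟨j, hj, hj', e⟩
      · exact ⟨t₀, le_rfl, htk, Or.inr ⟨rfl, Or.inl hz⟩⟩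
      · by_cases hjt : t₀ ≤ j
        · exact ⟨j+1, by omega, by omega, Or.inl ⟨by omega, by simpa using e⟩⟩
        · have : j ≠ t₀ - 1 := fun e' => zt (by rw [e, e'])
          exact ⟨t₀, le_rfl, htk, Or.inr ⟨rfl, Or.inr ⟨j, hj, by omega, e⟩⟩⟩
    have hzU' : z ∉ U' := by
      rcases hzp with hz | ⟨j, hj, hj', e⟩
      · exact fun h => hz (hss.1 h)
      · rw [e]; exact yU' j (by omega)
    have hzy : ∀ j, 1 ≤ j → j ≤ k → z = y j → j < t := by
      intro j hj hj' e
      rcases hcase with ⟨h1, h2⟩ | ⟨h1, h2 | ⟨j', _, _, h2⟩⟩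
      · have := yinj _ _ hj' (by omega) (e.symm.trans h2); omega
      · exact absurd (yU j hj hj') (e ▸ h2)
      · have := yinj _ _ hj' (by omega) (e.symm.trans h2); omega
    let p : ℕ → V := fun i => if i < t then y (i-1) else if i < k then y (i+1) else z
    have p1 : ∀ i, i < t → p i = y (i-1) := fun i hi => by simp [p, hi]
    have p2 : ∀ i, t ≤ i → i < k → p i = y (i+1) := fun i hi hi' => by
      have : ¬ i < t := by omega
      simp [p, this, hi']
    have p3 : p k = z := by
      have : ¬ k < t := by omega
      simp [p, this]
    apply glue p (fun i => if i < t then i else t + (k - i)) (t + k)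
    intro i hi hi'
    have hcases : i < t ∨ (t ≤ i ∧ i < k) ∨ i = k := by omega
    refine ⟨?_, ?_, ?_, ?_, ?_⟩
    · rcases hcases with c | ⟨c, c'⟩ | rfl
      · rw [p1 i c]; exact yadj i hi hi'
      · rw [p2 i c c']; simpa using (yadj (i+1) (by omega) (by omega)).symm
      · rw [p3]; exact za
    · rcases hcases with c | ⟨c, c'⟩ | rfl
      · rw [p1 i c]; exact yU' _ (by omega)
      · rw [p2 i c c']; exact yU' _ (by omega)
      · rw [p3]; exact hzU'
    · split_ifs <;> omega
    · intro j hj hj' e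
      rcases hcases with c | ⟨c, c'⟩ | rfl
      · rw [p1 i c] at e
        have := yinj _ _ (by omega) hj' e
        have e1 : j < t := by omega
        simp only [c, e1, if_true]; omega
      · rw [p2 i c c'] at e
        have := yinj _ _ (by omega) hj' e
        have e1 : ¬ j < t := by omega
        have e2 : ¬ i < t := by omega
        simp only [e1, e2, if_false]; omega
      · rw [p3] at e
        have e1 := hzy j hj hj' e
        have e2 : ¬ i < t := by omega
        simp only [e1, e2, if_false, if_true]; omega
    · rcases Nat.lt_or_ge (i+1) t with c | c
      · refine hO.two (a := y (i-1)) (b := y (i+1)) (Or.inl ?_) ?_ (yne _ _ (by omega) (by omega) (by omega))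
          (yturn i hi (by omega))
        · rw [p1 i (by omega)]
        · exact Or.inr (Or.inl ⟨i+1, by omega, by omega, rfl, by rw [p1 _ c]; simp⟩)
      · by_cases c1 : i + 1 = t
        · rcases hcase with ⟨h1, h2⟩ | ⟨h1, h2⟩
          · obtain ⟨hi1, -, hi2⟩ := htH i (by omega) hi'
            obtain ⟨hi3, hi4⟩ := (hi2 hi1).2 rfl
            refine three_bad (a := y (i-1)) (b := y k) (d := hi1) (Or.inl ?_) ?_ (Or.inr (Or.inr ⟨hi3, hi4⟩))
              (yne _ _ (by omega) le_rfl (by omega)) ?_ ?_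
            · rw [p1 i (by omega)]
            · exact Or.inr (Or.inl ⟨k, hk, le_rfl, rfl, by rw [p3, h2, ← c1]; simp⟩)
            · rintro e; exact yU' (i-1) (by omega) (e ▸ hi3)
            · rintro e; exact yU' k le_rfl (e ▸ hi3)
          · have hnH : ¬ H i := by
              have := htmin (by omega)
              rwa [show t₀ - 1 = i by omega] at this
            have hzi : z ≠ y i := by
              rw [show i = t₀ - 1 by omega]; exact zt
            rw [p1 i (by omega)]
            intro a b hab hT
            have key : ∀ b, Op (y i) (y (i-1)) b → (∀ c, (c = y (i-1) ∨ (∃ j, 1 ≤ j ∧ j ≤ k ∧ c = y j ∧ p j = y i) ∨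
                (c ∈ U' ∧ par' c = y i)) ↔ (c = y (i-1) ∨ c = b)) → False := by
              intro b hb hT
              apply hnH
              refine ⟨b, hb, ?_⟩
              intro c
              constructor
              · intro hc
                rcases (hT c).1 (Or.inr (Or.inr hc)) with h | h
                · exact absurd hc.1 (h ▸ yU' _ (by omega))
                · exact h
              · rintro rfl
                rcases (hT c).2 (Or.inr rfl) with h | ⟨j, hj, hj', -, h⟩ | h
                · exact absurd h.symm (hO.ne _ _ _ hb)
                · exfalso
                  have hcases : j < t ∨ (t ≤ j ∧ j < k) ∨ j = k := by omega
                  rcases hcases with c | ⟨c, c'⟩ | rfl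
                  · rw [p1 j c] at h
                    have := yinj _ _ (by omega) hi' h
                    omega
                  · rw [p2 j c c'] at h
                    have := yinj _ _ (by omega) hi' h
                    omega
                  · rw [p3] at h
                    exact hzi h
                · exact h
            rcases (hT (y (i-1))).1 (Or.inl rfl) with e | e
            · subst e; exact key b hab hT
            · subst e; exact key a (hO.symm _ _ _ hab) (fun c => (hT c).trans or_comm)
        · have hti : t ≤ i := by omega
          by_cases hik : i = k
          · subst hik
            refine hO.two (a := z) (b := h) (Or.inl p3.symm) (Or.inr (Or.inr hhU)) z2 ?_
            intro hzh
            exact z1 (hO.func _ _ _ _ (hO.symm _ _ _ hop) (hO.symm _ _ _ hzh)).symm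
          · by_cases hit : i = t
            · obtain ⟨hi1, hi0, hi2⟩ := htH i (by omega) hi'
              obtain ⟨hi3, hi4⟩ := (hi2 hi1).2 rfl
              refine hO.two (a := y (i+1)) (b := hi1) (Or.inl (p2 i hti (by omega)).symm) (Or.inr (Or.inr ⟨hi3, hi4⟩))
                (fun e => yU' (i+1) (by omega) (e ▸ hi3)) ?_
              intro hzh
              have := hO.func _ _ _ _ (hO.symm _ _ _ hi0) (hO.symm _ _ _ hzh)
              have := yinj _ _ (by omega) (by omega) this
              omega
            · refine hO.two (a := y (i-1)) (b := y (i+1)) ?_ (Or.inl (p2 i hti (by omega)).symm)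
                (yne _ _ (by omega) (by omega) (by omega)) (yturn i hi (by omega))
              refine Or.inr (Or.inl ⟨i-1, by omega, by omega, rfl, ?_⟩)
              rw [p2 (i-1) (by omega) (by omega)]
              congr 1; omega

end FP

namespace FP
open scoped List

theorem sublist_of_idx {α : Type*} [BEq α] [LawfulBEq α] (L : List α) : ∀ l : List α, (∀ e ∈ L, e ∈ l) →
    L.Pairwise (fun e f => l.idxOf e < l.idxOf f) → L <+ l := by
  induction L with
  | nil => intro l _ _; exact List.nil_sublist l
  | cons e L ih =>
    intro l hm hp
    rw [List.pairwise_cons] at hp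
    obtain ⟨s, t, hs, rfl⟩ : ∃ s t, e ∉ s ∧ l = s ++ e :: t := by
      obtain ⟨s, t, h1, h2⟩ := List.append_of_mem (hm e (by simp)) |> fun _ => List.eq_append_cons_of_mem (hm e (by simp))
      exact ⟨s, t, h2, h1⟩
    have hidx : (s ++ e :: t).idxOf e = s.length := by
      rw [List.idxOf_append_of_notMem hs]; simp
    have h3 : ∀ f ∈ L, f ∉ s ∧ f ≠ e := by
      intro f hf
      have := hp.1 f hf
      rw [hidx] at this
      constructor
      · intro h
        rw [List.idxOf_append_of_mem h] at this
        have := List.idxOf_lt_length_of_mem h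
        omega
      · rintro rfl
        omega
    have h4 : ∀ f ∈ L, (s ++ e :: t).idxOf f = s.length + 1 + t.idxOf f := by
      intro f hf
      rw [List.idxOf_append_of_notMem (h3 f hf).1, List.idxOf_cons_ne _ (h3 f hf).2.symm]
      omega
    refine (List.Sublist.cons_cons e (ih t ?_ ?_)).trans (List.sublist_append_right s (e :: t))
    · intro f hf
      have h5 := hm f (List.mem_cons_of_mem _ hf)
      have := h3 f hf
      simp only [List.mem_append, List.mem_cons] at h5
      tauto
    · refine hp.2.imp_of_mem ?_
      intro a b ha hb hab
      rw [h4 a ha, h4 b hb] at hab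
      omega

theorem idx_insert {α : Type*} [BEq α] [LawfulBEq α] (A B K : List α) (f : α) (hnd : (A ++ f :: B).Nodup)
    (hK : ∀ e ∈ K, e ∉ A ++ f :: B) :
    (∀ e ∈ A ++ f :: B, ((A ++ f :: (K ++ B)).idxOf e = (A ++ f :: B).idxOf e ∧ (A ++ f :: B).idxOf e ≤ (A ++ f :: B).idxOf f) ∨
      ((A ++ f :: (K ++ B)).idxOf e = (A ++ f :: B).idxOf e + K.length ∧ (A ++ f :: B).idxOf f < (A ++ f :: B).idxOf e)) ∧
    ∀ e ∈ K, (A ++ f :: (K ++ B)).idxOf e = (A ++ f :: B).idxOf f + 1 + K.idxOf e ∧ K.idxOf e < K.length := by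
  have hfA : f ∉ A := by
    intro h
    rw [List.nodup_append] at hnd
    exact hnd.2.2 f h f (by simp) rfl
  have hf : (A ++ f :: B).idxOf f = A.length := by
    rw [List.idxOf_append_of_notMem hfA]; simp
  constructor
  · intro e he
    by_cases h1 : e ∈ A
    · left
      rw [hf, List.idxOf_append_of_mem h1, List.idxOf_append_of_mem h1]
      exact ⟨rfl, (List.idxOf_lt_length_of_mem h1).le⟩
    · rw [List.idxOf_append_of_notMem h1, hf, List.idxOf_append_of_notMem h1]
      by_cases h2 : f = e
      · subst h2; left; simp
      · right
        have h3 : e ∉ K := fun h => hK e h he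
        rw [List.idxOf_cons_ne _ h2, List.idxOf_cons_ne _ h2, List.idxOf_append_of_notMem h3]
        omega
  · intro e he
    have h0 := hK e he
    simp only [List.mem_append, List.mem_cons, not_or] at h0
    rw [List.idxOf_append_of_notMem h0.1, List.idxOf_cons_ne _ (Ne.symm h0.2.1), List.idxOf_append_of_mem he, hf]
    exact ⟨by omega, List.idxOf_lt_length_of_mem he⟩

structure Inv {V : Type*} [DecidableEq V] (rot : V → List V) (par : V → V) (U : Set V) (tp : V → V → Prop) (anc : V → V)
    (X : Set V) (E : Set (V × V)) (P R : List (V × V)) : Prop where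
  con : Con rot X E (P ++ R)
  hE : ∀ a b, (a, b) ∈ E → tp a b
  nd : R.Nodup
  base : ∀ e ∈ R, e.1 ∈ X
  mem : ∀ v ∈ X, ∀ a ∈ rot v, (¬ tp v a ∨ a ∉ X) → (v, a) ∈ R
  anch : ∀ v ∈ X, (v, anc v) ∈ R
  ncn : ∀ u a x c, (u, a) ∈ R → (u, x) ∈ R → (u, c) ∈ R → R.idxOf (u, a) < R.idxOf (u, x) → R.idxOf (u, x) < R.idxOf (u, c) →
    ¬ tp u a → ¬ tp u c → x ∈ U → par x = u → False
  word : ∀ e1 ∈ R, ∀ e2 ∈ R, ∀ e3 ∈ R, ∀ e4 ∈ R, R.idxOf e1 < R.idxOf e2 → R.idxOf e2 < R.idxOf e3 → R.idxOf e3 < R.idxOf e4 →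
    (e1.1 = e3.1 ∨ tp e1.1 e3.1) → (e2.1 = e4.1 ∨ tp e2.1 e4.1) → e1.1 ≠ e2.1 → e1.1 ≠ e4.1 → e3.1 ≠ e2.1 → e3.1 ≠ e4.1 → False
  cont : ∀ v a c, ∀ f ∈ R, (v, a) ∈ R → (v, c) ∈ R → R.idxOf (v, a) < R.idxOf f → R.idxOf f < R.idxOf (v, c) →
    ¬ tp v a → ¬ tp v c → f.1 ≠ v → False
  down : ∀ b ∈ X, b ∈ U → par b ∈ X

theorem Inv.step {V : Type*} [DecidableEq V] {rot : V → List V} {par : V → V} {U : Set V} {tp : V → V → Prop} {anc : V → V}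
    {X : Set V} {E : Set (V × V)} {P R : List (V × V)} (hI : Inv rot par U tp anc X E P R)
    (hsym : ∀ a b, tp a b → tp b a)
    (w : V) (hw : w ∈ U) (hwX : w ∉ X) (hpX : par w ∈ X) (hanc : anc w = par w)
    (hdart : w ∈ rot (par w)) (hpar : tp w (par w)) (honly : ∀ b, tp w b → b = par w ∨ par b = w ∧ b ∈ U)
    (hrnd : (rot w).Nodup) (M : List V) (hM : (M ++ [par w]) ~r rot w)
    (hncn : ∀ a x c, [a, x, c] <+ (M ++ [par w]) → ¬ tp w a → ¬ tp w c → x ∈ U → par x = w → False) :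
    ∃ E' P' R', Inv rot par U tp anc (insert w X) E' P' R' := by
  set u := par w with hu
  have huw : (u, w) ∈ R := hI.mem u hpX w hdart (Or.inr hwX)
  obtain ⟨A, B, rfl⟩ := List.append_of_mem huw
  set K := (M ++ [u]).map (Prod.mk w) with hK
  have hKmem : ∀ e, e ∈ K ↔ e.1 = w ∧ e.2 ∈ rot w := by
    rintro ⟨a, b⟩
    rw [← hM.mem_iff]
    simp only [hK, List.mem_map, Prod.mk.injEq]
    constructor
    · rintro ⟨c, h1, rfl, rfl⟩; exact ⟨rfl, h1⟩
    · rintro ⟨rfl, h⟩; exact ⟨b, h, rfl, rfl⟩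
  have hKn : ∀ e ∈ K, e ∉ A ++ (u, w) :: B := by
    intro e he he'
    have := hI.base e he'
    rw [((hKmem e).1 he).1] at this
    exact hwX this
  have hKnd : K.Nodup := by
    apply List.Nodup.map (Prod.mk_right_injective w)
    exact hM.nodup_iff.2 hrnd
  obtain ⟨hold, hnew⟩ := idx_insert A B K (u, w) hI.nd hKn
  have hmem' : ∀ e, e ∈ A ++ (u, w) :: (K ++ B) ↔ e ∈ A ++ (u, w) :: B ∨ e ∈ K := by
    intro e
    simp only [List.mem_append, List.mem_cons]
    tauto
  have hbw : ∀ e ∈ A ++ (u, w) :: B, e.1 ≠ w := by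
    intro e he h
    exact hwX (h ▸ hI.base e he)
  have tpw : ∀ b ∈ X, tp w b → b = u := by
    intro b hb h
    rcases honly b h with h | ⟨h, h'⟩
    · exact h
    · exact absurd (h ▸ hI.down b hb h') hwX
  set R := A ++ (u, w) :: B with hR
  set R' := A ++ (u, w) :: (K ++ B) with hR'
  have inj : ∀ e ∈ R, ∀ f ∈ R, R.idxOf e = R.idxOf f → e = f := by
    intro e he f hf h
    exact (List.idxOf_inj he).1 h
  refine ⟨E ∪ {(u, w), (w, u)}, P, R', ?_, ?_, ?_, ?_, ?_, ?_, ?_, ?_, ?_, ?_⟩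
  · have h := hI.con
    rw [hR, ← List.append_assoc] at h
    have := Con.leaf X E (P ++ A) B M u w h hwX hM
    simpa [hR', hK] using this
  · rintro a b (h | h)
    · exact hI.hE a b h
    · simp only [mem_insert_iff, mem_singleton_iff, Prod.mk.injEq] at h
      rcases h with ⟨rfl, rfl⟩ | ⟨rfl, rfl⟩
      · exact hsym _ _ hpar
      · exact hpar
  · have hp : R' ~ K ++ R := by
      rw [hR', hR]
      calc A ++ (u, w) :: (K ++ B) = (A ++ [(u,w)]) ++ (K ++ B) := by simp
        _ ~ K ++ ((A ++ [(u,w)]) ++ B) := by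
            rw [← List.append_assoc, ← List.append_assoc]
            exact (List.perm_append_comm).append_right B
        _ = K ++ (A ++ (u,w) :: B) := by simp
    rw [hp.nodup_iff, List.nodup_append]
    refine ⟨hKnd, hI.nd, ?_⟩
    rintro a ha b hb rfl
    exact hKn a ha hb
  · intro e he
    rcases (hmem' e).1 he with h | h
    · exact Or.inr (hI.base e h)
    · exact Or.inl ((hKmem e).1 h).1
  · rintro v hv a ha h
    rw [hmem']
    rcases hv with rfl | hv
    · exact Or.inr ((hKmem _).2 ⟨rfl, ha⟩)
    · left
      apply hI.mem v hv a ha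
      exact h.imp id (fun h h' => h (Or.inr h'))
  · rintro v hv
    rw [hmem']
    rcases hv with rfl | hv
    · right
      rw [hKmem, hanc]
      exact ⟨rfl, hM.mem_iff.1 (by simp)⟩
    · exact Or.inl (hI.anch v hv)
  · intro v a x c h1 h2 h3 h4 h5 h6 h7 h8 h9
    rcases (hmem' _).1 h1 with g1 | g1
    · have hvw : v ≠ w := hbw _ g1
      have g2 := ((hmem' _).1 h2).resolve_right (fun h => hvw ((hKmem _).1 h).1)
      have g3 := ((hmem' _).1 h3).resolve_right (fun h => hvw ((hKmem _).1 h).1)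
      refine hI.ncn v a x c g1 g2 g3 ?_ ?_ h6 h7 h8 h9
      · have := hold _ g1; have := hold _ g2; omega
      · have := hold _ g2; have := hold _ g3; omega
    · obtain rfl : v = w := ((hKmem _).1 g1).1
      have g2 := ((hmem' _).1 h2).resolve_left (fun h => hbw _ h rfl)
      have g3 := ((hmem' _).1 h3).resolve_left (fun h => hbw _ h rfl)
      have := hnew _ g1; have := hnew _ g2; have := hnew _ g3
      have hs : [(v,a),(v,x),(v,c)] <+ K := by
        apply sublist_of_idx
        · simp [g1, g2, g3]
        · simp; omega
      have hs' : [a, x, c].map (Prod.mk v) <+ (M ++ [u]).map (Prod.mk v) := hs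
      have hs'' : [a, x, c] <+ M ++ [u] := by
        have := hs'.map Prod.snd
        simpa [List.map_map, Function.comp_def] using this
      exact hncn a x c hs'' h6 h7 h8 h9
  · intro e1 m1 e2 m2 e3 m3 e4 m4 l12 l23 l34 q13 q24 n12 n14 n32 n34
    have hf := huw
    have key : ∀ e ∈ K, ∀ e' ∈ K, e.1 = e'.1 := fun e he e' he' =>
      ((hKmem e).1 he).1.trans ((hKmem e').1 he').1.symm
    have neq : ∀ e ∈ R, e.1 ≠ u → R.idxOf e ≠ R.idxOf (u, w) := by
      intro e he h h'
      exact h (by rw [inj _ he _ huw h'])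
    have part : ∀ e ∈ K, ∀ e' ∈ R, (e.1 = e'.1 ∨ tp e.1 e'.1) → e'.1 = u := by
      intro e he e' he' h
      rw [((hKmem e).1 he).1] at h
      rcases h with h | h
      · exact absurd h.symm (hbw e' he')
      · exact tpw _ (hI.base e' he') h
    have part' : ∀ e ∈ K, ∀ e' ∈ R, (e'.1 = e.1 ∨ tp e'.1 e.1) → e'.1 = u := by
      intro e he e' he' h
      exact part e he e' he' (h.imp Eq.symm (hsym _ _))
    rcases (hmem' _).1 m1 with g1 | g1 <;> rcases (hmem' _).1 m2 with g2 | g2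
    · rcases (hmem' _).1 m3 with g3 | g3 <;> rcases (hmem' _).1 m4 with g4 | g4
      · have o1 := hold _ g1; have o2 := hold _ g2; have o3 := hold _ g3; have o4 := hold _ g4
        exact hI.word e1 g1 e2 g2 e3 g3 e4 g4 (by omega) (by omega) (by omega) q13 q24 n12 n14 n32 n34
      · have o1 := hold _ g1; have o2 := hold _ g2; have o3 := hold _ g3; have o4 := hnew _ g4
        have p := part' _ g4 _ g2 q24
        have := neq _ g3 (fun h => n32 (h.trans p.symm))
        exact hI.word e1 g1 e2 g2 e3 g3 (u,w) huw (by omega) (by omega) (by omega) q13 (Or.inl p) n12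
          (fun h => n12 (h.trans p.symm)) n32 (fun h => n32 (h.trans p.symm))
      · have o1 := hold _ g1; have o2 := hold _ g2; have o3 := hnew _ g3; have o4 := hold _ g4
        have p := part' _ g3 _ g1 q13
        have := neq _ g2 (fun h => n12 (p.trans h.symm))
        exact hI.word e1 g1 e2 g2 (u,w) huw e4 g4 (by omega) (by omega) (by omega) (Or.inl p) q24 n12
          n14 (fun h => n12 (p.trans h)) (fun h => n14 (p.trans h))
      · exact n34 (key _ g3 _ g4)
    · rcases (hmem' _).1 m3 with g3 | g3
      · rcases (hmem' _).1 m4 with g4 | g4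
        · have o1 := hold _ g1; have o2 := hnew _ g2; have o3 := hold _ g3; have o4 := hold _ g4
          have p := part _ g2 _ g4 q24
          have := neq _ g1 (fun h => n14 (h.trans p.symm))
          exact hI.word e1 g1 (u,w) huw e3 g3 e4 g4 (by omega) (by omega) (by omega) q13 (Or.inl p.symm)
            (fun h => n14 (h.trans p.symm)) n14 (fun h => n34 (h.trans p.symm)) n34
        · have o2 := hnew _ g2; have o3 := hold _ g3; have o4 := hnew _ g4
          omega
      · exact n32 (key _ g3 _ g2)
    · rcases (hmem' _).1 m3 with g3 | g3
      · rcases (hmem' _).1 m4 with g4 | g4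
        · have o1 := hnew _ g1; have o2 := hold _ g2; have o3 := hold _ g3; have o4 := hold _ g4
          have p := part _ g1 _ g3 q13
          exact hI.word (u,w) huw e2 g2 e3 g3 e4 g4 (by omega) (by omega) (by omega) (Or.inl p.symm) q24
            (fun h => n32 (p.trans h)) (fun h => n34 (p.trans h)) n32 n34
        · exact n14 (key _ g1 _ g4)
      · have o1 := hnew _ g1; have o2 := hold _ g2; have o3 := hnew _ g3
        omega
    · exact n12 (key _ g1 _ g2)
  · intro v a c f hf h1 h2 l1 l2 t1 t2 hfv
    rcases (hmem' _).1 h1 with g1 | g1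
    · have hvw : v ≠ w := hbw _ g1
      have g2 := ((hmem' _).1 h2).resolve_right (fun h => hvw ((hKmem _).1 h).1)
      have o1 := hold _ g1; have o2 := hold _ g2
      rcases (hmem' _).1 hf with gf | gf
      · have o3 := hold _ gf
        exact hI.cont v a c f gf g1 g2 (by omega) (by omega) t1 t2 hfv
      · have o3 := hnew _ gf
        have hne : R.idxOf (v, a) ≠ R.idxOf (u, w) := by
          intro h
          have := inj _ g1 _ huw h
          simp only [Prod.mk.injEq] at this
          apply t1
          rw [this.1, this.2]
          exact hsym _ _ hpar
        by_cases huv : u = v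
        · subst huv
          exact hI.ncn u a w c g1 huw g2 (by omega) (by omega) t1 t2 hw hu.symm
        · exact hI.cont v a c (u, w) huw g1 g2 (by omega) (by omega) t1 t2 huv
    · obtain rfl : v = w := ((hKmem _).1 g1).1
      have g2 := ((hmem' _).1 h2).resolve_left (fun h => hbw _ h rfl)
      have o1 := hnew _ g1; have o2 := hnew _ g2
      rcases (hmem' _).1 hf with gf | gf
      · have o3 := hold _ gf
        omega
      · exact hfv ((hKmem _).1 gf).1
  · rintro b (rfl | hb) hbU
    · exact Or.inr hpX
    · exact Or.inr (hI.down b hb hbU)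

end FP

namespace FP
open scoped List

/-- Two-page book embedding with integral coordinates. -/
def Book {V : Type*} (G : SimpleGraph V) : Prop :=
  ∃ (x : V → ℕ) (tp : V → V → Prop), Function.Injective x ∧ (∀ a b, tp a b → tp b a) ∧
    ∀ a b p q, G.Adj a b → G.Adj p q → (tp a b ↔ tp p q) → ¬ (x a < x p ∧ x p < x b ∧ x b < x q)

theorem Inv.book {V : Type*} [DecidableEq V] {rot : V → List V} {par : V → V} {U : Set V} {tp : V → V → Prop} {anc : V → V}
    {E : Set (V × V)} {P R : List (V × V)} (hI : Inv rot par U tp anc univ E P R) {G : SimpleGraph V}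
    (hsym : ∀ a b, tp a b → tp b a) (hrot : ∀ v w, w ∈ rot v ↔ G.Adj v w)
    (hna : ∀ a b p q, (a,b) ∉ E → (p,q) ∉ E → (a,b) ≠ (p,q) → (a,b) ≠ (q,p) → ¬ [(a,b),(p,q),(b,a),(q,p)] <+ (P ++ R)) :
    Book G := by
  have hch : ∀ v, ∃ c, (v, c) ∈ R ∧ ((∃ a, G.Adj v a ∧ ¬ tp v a) → ¬ tp v c) := by
    intro v
    by_cases h : ∃ a, G.Adj v a ∧ ¬ tp v a
    · obtain ⟨a, h1, h2⟩ := h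
      exact ⟨a, hI.mem v trivial a ((hrot v a).2 h1) (Or.inl h2), fun _ => h2⟩
    · exact ⟨anc v, hI.anch v trivial, fun h' => absurd h' h⟩
  choose ch hch1 hch2 using hch
  refine ⟨fun v => R.idxOf (v, ch v), tp, ?_, hsym, ?_⟩
  · intro u v h
    have := (List.idxOf_inj (hch1 u)).1 h
    exact congrArg Prod.fst this
  · rintro a b p q hab hpq hiff ⟨l1, l2, l3⟩
    have ap : a ≠ p := by rintro rfl; exact lt_irrefl _ l1
    have bp : b ≠ p := by rintro rfl; exact lt_irrefl _ l2
    have bq : b ≠ q := by rintro rfl; exact lt_irrefl _ l3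
    have aq : a ≠ q := by rintro rfl; exact lt_irrefl _ (l1.trans (l2.trans l3))
    by_cases ht : tp a b
    · exact hI.word _ (hch1 a) _ (hch1 p) _ (hch1 b) _ (hch1 q) l1 l2 l3 (Or.inr ht) (Or.inr (hiff.1 ht)) ap aq bp bq
    · have ht' : ¬ tp p q := fun h => ht (hiff.2 h)
      have sh : ∀ v w c d, v ≠ w → G.Adj v c → G.Adj w d → ¬ tp v c → ¬ tp w d → R.idxOf (v, ch v) < R.idxOf (w, ch w) →
          R.idxOf (v, c) < R.idxOf (w, d) := by
        intro v w c d hvw hv hw tv tw hlt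
        have m1 := hI.mem v trivial c ((hrot v c).2 hv) (Or.inl tv)
        have m2 := hI.mem w trivial d ((hrot w d).2 hw) (Or.inl tw)
        have c1 := hch2 v ⟨c, hv, tv⟩
        have c2 := hch2 w ⟨d, hw, tw⟩
        have s1 : R.idxOf (v, c) < R.idxOf (w, ch w) := by
          by_contra h
          have hne : R.idxOf (v, c) ≠ R.idxOf (w, ch w) := fun h =>
            hvw (congrArg Prod.fst ((List.idxOf_inj m1).1 h))
          exact hI.cont v (ch v) c (w, ch w) (hch1 w) (hch1 v) m1 hlt (by omega) c1 tv hvw.symm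
        by_contra h
        have hne : R.idxOf (v, c) ≠ R.idxOf (w, d) := fun h =>
            hvw (congrArg Prod.fst ((List.idxOf_inj m1).1 h))
        exact hI.cont w d (ch w) (v, c) m1 m2 (hch1 w) (by omega) s1 tw c2 hvw
      have tba : ¬ tp b a := fun h => ht (hsym _ _ h)
      have tqp : ¬ tp q p := fun h => ht' (hsym _ _ h)
      have k1 := sh a p b q ap hab hpq ht ht' l1
      have k2 := sh p b q a bp.symm hpq hab.symm ht' tba l2
      have k3 := sh b q a p bq hab.symm hpq.symm tba tqp l3
      have hs : [(a,b),(p,q),(b,a),(q,p)] <+ R := by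
        apply sublist_of_idx
        · have m1 := hI.mem a trivial b ((hrot _ _).2 hab) (Or.inl ht)
          have m2 := hI.mem p trivial q ((hrot _ _).2 hpq) (Or.inl ht')
          have m3 := hI.mem b trivial a ((hrot _ _).2 hab.symm) (Or.inl tba)
          have m4 := hI.mem q trivial p ((hrot _ _).2 hpq.symm) (Or.inl tqp)
          simp [m1, m2, m3, m4]
        · simp; omega
      refine hna a b p q (fun h => ht (hI.hE _ _ h)) (fun h => ht' (hI.hE _ _ h)) ?_ ?_
        (hs.trans (List.sublist_append_right P R))
      · intro h; exact ap (congrArg Prod.fst h)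
      · intro h; exact aq (congrArg Prod.fst h)

/-- Local rotation property required to insert the vertex `w`. -/
def Ins {V : Type*} (rot : V → List V) (par : V → V) (U : Set V) (tp : V → V → Prop) (w : V) : Prop :=
  ∃ M, (M ++ [par w]) ~r rot w ∧
    ∀ a x c, [a, x, c] <+ (M ++ [par w]) → ¬ tp w a → ¬ tp w c → x ∈ U → par x = w → False

theorem Inv.all {V : Type*} [DecidableEq V] [Finite V] {rot : V → List V} {par : V → V} {rk : V → ℕ} {U : Set V}
    {tp : V → V → Prop} {anc : V → V}
    (hsym : ∀ a b, tp a b → tp b a) (hrk : ∀ v ∈ U, par v ∈ U → rk (par v) < rk v)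
    (hanc : ∀ w ∈ U, anc w = par w)
    (hdart : ∀ w ∈ U, w ∈ rot (par w)) (hpar : ∀ w ∈ U, tp w (par w))
    (honly : ∀ w ∈ U, ∀ b, tp w b → b = par w ∨ par b = w ∧ b ∈ U)
    (hrnd : ∀ w, (rot w).Nodup) (hM : ∀ w ∈ U, Ins rot par U tp w)
    (n : ℕ) : ∀ (X : Set V) (E : Set (V × V)) (P R : List (V × V)), Xᶜ.ncard = n → Xᶜ ⊆ U →
    Inv rot par U tp anc X E P R → ∃ E' P' R', Inv rot par U tp anc univ E' P' R' := by
  induction n with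
  | zero =>
    intro X E P R hn hX hI
    rw [Set.ncard_eq_zero (Set.toFinite _), compl_empty_iff] at hn
    subst hn
    exact ⟨E, P, R, hI⟩
  | succ n ih =>
    intro X E P R hn hX hI
    have hne : (Xᶜ).Nonempty := by
      rw [← Set.ncard_pos (Set.toFinite _)]; omega
    obtain ⟨w, hw, hmin⟩ := Set.exists_min_image Xᶜ rk (Set.toFinite _) hne
    have hwU := hX hw
    have hpX : par w ∈ X := by
      by_contra h
      have := hmin _ h
      have := hrk w hwU (hX h)
      omega
    obtain ⟨M, hM1, hM2⟩ := hM w hwU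
    obtain ⟨E', P', R', hI'⟩ := hI.step hsym w hwU hw hpX (hanc w hwU) (hdart w hwU) (hpar w hwU) (honly w hwU) (hrnd w) M hM1 hM2
    refine ih _ E' P' R' ?_ ?_ hI'
    · have : (insert w X)ᶜ = Xᶜ \ {w} := by
        ext a; simp [not_or, and_comm]
      rw [this, Set.ncard_sdiff_singleton_of_mem hw]; omega
    · exact (Set.compl_subset_compl.2 (Set.subset_insert w X)).trans hX

end FP

namespace FP
open scoped List

theorem rot_last {α : Type*} {l : List α} {a : α} (h : a ∈ l) : ∃ M, (M ++ [a]) ~r l := by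
  obtain ⟨s, t, rfl⟩ := List.append_of_mem h
  refine ⟨t ++ s, ?_⟩
  have : (t ++ (s ++ [a])) ~r ((s ++ [a]) ++ t) := List.isRotated_append
  simpa using this

theorem rot_first {α : Type*} {l : List α} {a : α} (h : a ∈ l) : ∃ M, (a :: M) ~r l := by
  obtain ⟨s, t, rfl⟩ := List.append_of_mem h
  refine ⟨t ++ s, ?_⟩
  have : ((a :: t) ++ s) ~r (s ++ (a :: t)) := List.isRotated_append
  simpa using this

theorem rot4 {α : Type*} {a b c d b' c' d' : α} (hn : [a,b,c,d].Nodup) (h : [a,b,c,d] ~r [a,b',c',d']) :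
    b = b' ∧ c = c' ∧ d = d' := by
  rw [List.isRotated_iff_mod] at h
  obtain ⟨n, hn', h⟩ := h
  simp at hn'
  simp at hn
  obtain ⟨⟨h1, h2, h3⟩, ⟨h4, h5⟩, h6⟩ := hn
  interval_cases n <;> simp at h <;> grind

theorem rot4_swap {α : Type*} {a b c d : α} : [c,d,a,b] ~r [a,b,c,d] := by
  have : ([c,d] ++ [a,b]) ~r ([a,b] ++ [c,d]) := List.isRotated_append
  simpa using this

def Opp {V : Type*} (rot : V → List V) (v a b : V) : Prop := ∃ c d, [a,c,b,d] ~r rot v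

theorem Opp.opRel {V : Type*} {rot : V → List V} {G : SimpleGraph V} (hnd : ∀ v, (rot v).Nodup)
    (hrot : ∀ v w, w ∈ rot v ↔ G.Adj v w) : OpRel G (Opp rot) := by
  refine ⟨?_, ?_, ?_, ?_⟩
  · rintro v a b ⟨c, d, h⟩
    exact ⟨d, c, rot4_swap.trans h⟩
  · rintro v a b b' ⟨c, d, h⟩ ⟨c', d', h'⟩
    exact (rot4 (h.nodup_iff.2 (hnd v)) (h.trans h'.symm)).2.1
  · rintro v a b ⟨c, d, h⟩ rfl
    have := h.nodup_iff.2 (hnd v)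
    simp at this
  · rintro v a b ⟨c, d, h⟩
    have hn := h.nodup_iff.2 (hnd v)
    have hc := (hrot v c).1 (h.mem_iff.1 (by simp))
    have hd := (hrot v d).1 (h.mem_iff.1 (by simp))
    simp at hn
    exact ⟨c, d, by grind, by grind, by grind, by grind, by grind, hc, hd⟩

theorem face_cycle {V : Type*} [Finite V] [Nonempty V] {rot : V → List V} {G : SimpleGraph V} (hnd : ∀ v, (rot v).Nodup)
    (hrot : ∀ v w, w ∈ rot v ↔ G.Adj v w) (hlen : ∀ v, (rot v).length = 4) :
    ∃ (n : ℕ) (z : ℕ → V), 2 ≤ n ∧ (∀ i j, i ≤ n → j ≤ n → z i = z j → i = j) ∧ z (n+1) = z 0 ∧ z 1 ∈ rot (z 0) ∧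
      ∀ t, 1 ≤ t → t ≤ n → ∃ c d, [z (t+1), c, d, z (t-1)] ~r rot (z t) := by
  classical
  have hnx : ∀ v a, ∃ b, a ∈ rot v → ∃ c d, [b,c,d,a] ~r rot v := by
    intro v a
    by_cases h : a ∈ rot v
    · obtain ⟨M, hM⟩ := rot_last h
      have hl := hM.perm.length_eq
      rw [hlen v] at hl
      simp at hl
      match M, hl with
      | [b,c,d], _ => exact ⟨b, fun _ => ⟨c, d, by simpa using hM⟩⟩
    · exact ⟨a, fun h' => absurd h' h⟩
  choose nxt hnxt using hnx
  obtain ⟨v0⟩ := ‹Nonempty V›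
  obtain ⟨v1, hv1⟩ : ∃ v1, v1 ∈ rot v0 := List.exists_mem_of_ne_nil _ (by
    intro h; have := hlen v0; rw [h] at this; simp at this)
  let pr : ℕ → V × V := fun k => (fun p : V × V => (p.2, nxt p.2 p.1))^[k] (v0, v1)
  have prs : ∀ k, pr (k+1) = ((pr k).2, nxt (pr k).2 (pr k).1) := by
    intro k; simp only [pr, Function.iterate_succ_apply']
  have prr : ∀ k, (pr k).2 ∈ rot (pr k).1 := by
    intro k
    induction k with
    | zero => exact hv1
    | succ k ih =>
      rw [prs]
      have h1 : (pr k).1 ∈ rot (pr k).2 := by rw [hrot] at ih ⊢; exact ih.symm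
      obtain ⟨c, d, h⟩ := hnxt _ _ h1
      exact h.mem_iff.1 (by simp)
  let zz : ℕ → V := fun k => (pr k).1
  have zz2 : ∀ k, (pr k).2 = zz (k+1) := fun k => by simp only [zz, prs]
  have zadj : ∀ k, zz (k+1) ∈ rot (zz k) := fun k => by rw [← zz2]; exact prr k
  have zrot : ∀ k, ∃ c d, [zz (k+2), c, d, zz k] ~r rot (zz (k+1)) := by
    intro k
    have h1 : (pr k).1 ∈ rot (pr k).2 := by have := prr k; rw [hrot] at this ⊢; exact this.symm
    obtain ⟨c, d, h⟩ := hnxt _ _ h1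
    refine ⟨c, d, ?_⟩
    rw [← zz2 (k+1), prs, ← zz2 k]
    exact h
  have hex : ∃ j, ∃ i < j, zz i = zz j := by
    obtain ⟨i, j, hij, h⟩ := Finite.exists_ne_map_eq_of_infinite zz
    rcases lt_or_gt_of_ne hij with h' | h'
    · exact ⟨j, i, h', h⟩
    · exact ⟨i, j, h', h.symm⟩
  obtain ⟨i, hij, hz⟩ := Nat.find_spec hex
  have hmin : ∀ m < Nat.find hex, ∀ i < m, zz i ≠ zz m := fun m hm i hi h => Nat.find_min hex hm ⟨i, hi, h⟩
  set j := Nat.find hex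
  have hinj : ∀ a b, a < j → b < j → zz a = zz b → a = b := by
    intro a b ha hb h
    rcases lt_trichotomy a b with h' | h' | h'
    · exact absurd h (hmin b hb a h')
    · exact h'
    · exact absurd h.symm (hmin a ha b h')
  have h1 : j ≠ i + 1 := by
    intro h
    have := zadj i
    rw [← h, ← hz, hrot] at this
    exact G.loopless.irrefl _ this
  have h2 : j ≠ i + 2 := by
    intro h
    obtain ⟨c, d, h'⟩ := zrot i
    have := h'.nodup_iff.2 (hnd _)
    rw [← h, ← hz] at this
    simp at this
  refine ⟨j - 1 - i, fun s => zz (i + s), by omega, ?_, ?_, zadj i, ?_⟩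
  · intro a b ha hb h
    have := hinj (i+a) (i+b) (by omega) (by omega) h
    omega
  · show zz (i + (j - 1 - i + 1)) = zz (i + 0)
    rw [show i + (j - 1 - i + 1) = j by omega, ← hz]; rfl
  · intro t ht ht'
    obtain ⟨c, d, h⟩ := zrot (i + (t-1))
    refine ⟨c, d, ?_⟩
    show [zz (i + (t+1)), c, d, zz (i + (t-1))] ~r rot (zz (i + t))
    rw [show i + (t - 1) + 2 = i + (t+1) by omega, show i + (t - 1) + 1 = i + t by omega] at h
    exact h

/-- Insertion is possible at vertices which are not bad. -/
theorem Ins.of_good {V : Type*} {rot : V → List V} {G : SimpleGraph V} (hnd : ∀ v, (rot v).Nodup)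
    (hrot : ∀ v w, w ∈ rot v ↔ G.Adj v w) {par : V → V} {U : Set V} {tp : V → V → Prop} {w : V}
    (hlen : (rot w).length ≤ 4) (hadj : G.Adj w (par w)) (hcadj : ∀ x ∈ U, G.Adj x (par x))
    (htp : ∀ b, tp w b ↔ (b = par w ∨ (b ∈ U ∧ par b = w)))
    (hgood : ∀ a b, Opp rot w a b → ¬ ∀ c, (c = par w ∨ (c ∈ U ∧ par c = w)) ↔ (c = a ∨ c = b)) :
    Ins rot par U tp w := by
  obtain ⟨M, hM⟩ := rot_last ((hrot _ _).2 hadj)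
  refine ⟨M, hM, ?_⟩
  intro a x c hs ha hc hx hpx
  have hl : (M ++ [par w]).length ≤ 4 := by rw [hM.perm.length_eq]; exact hlen
  have hcp : c ≠ par w := by rintro rfl; exact hc ((htp _).2 (Or.inl rfl))
  have hsM : [a, x, c] <+ M := by
    rw [List.sublist_append_iff] at hs
    obtain ⟨l1, l2, h1, h2, h3⟩ := hs
    rcases List.sublist_singleton.1 h3 with rfl | rfl
    · simp only [List.append_nil] at h1; rw [h1]; exact h2
    · have := congrArg List.getLast? h1
      simp at this
      exact absurd this hcp
  have hMe : [a, x, c] = M := hsM.eq_of_length_le (by simp at hl ⊢; omega)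
  subst hMe
  refine hgood x (par w) ⟨c, a, ?_⟩ ?_
  · have : ([x, c, par w] ++ [a]) ~r ([a] ++ [x, c, par w]) := List.isRotated_append
    exact List.IsRotated.trans (by simpa using this) hM
  · intro y
    rw [← htp]
    constructor
    · intro hy
      have hyr : y ∈ rot w := by
        rw [hrot]
        rcases (htp y).1 hy with rfl | ⟨h1, h2⟩
        · exact hadj
        · have := hcadj y h1; rw [h2] at this; exact this.symm
      have := hM.mem_iff.2 hyr
      simp at this
      rcases this with rfl | rfl | rfl | rfl
      · exact absurd hy ha
      · exact Or.inl rfl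
      · exact absurd hy hc
      · exact Or.inr rfl
    · rintro (rfl | rfl)
      · exact (htp _).2 (Or.inr ⟨hx, hpx⟩)
      · exact (htp _).2 (Or.inl rfl)

end FP

namespace FP
open scoped List

theorem idx_pairwise {α : Type*} [BEq α] [LawfulBEq α] {r : α → α → Prop} {l : List α} (h : l.Pairwise r) {e f : α}
    (he : e ∈ l) (hf : f ∈ l) (hlt : l.idxOf e < l.idxOf f) : r e f := by
  have hs : [e, f] <+ l := sublist_of_idx _ _ (by simp [he, hf]) (by simpa using hlt)
  simpa using h.sublist hs

theorem mem_mk {V : Type*} {l : List V} {v : V} {e : V × V} : e ∈ l.map (Prod.mk v) ↔ e.1 = v ∧ e.2 ∈ l := by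
  obtain ⟨a, b⟩ := e
  simp only [List.mem_map, Prod.mk.injEq]
  constructor
  · rintro ⟨c, h1, rfl, rfl⟩; exact ⟨rfl, h1⟩
  · rintro ⟨rfl, h⟩; exact ⟨b, h, rfl, rfl⟩

theorem unmap_mk {V : Type*} {l L : List V} {v : V} (h : L.map (Prod.mk v) <+ l.map (Prod.mk v)) : L <+ l := by
  have := h.map Prod.snd
  simpa [List.map_map, Function.comp_def] using this

theorem init_root {V : Type*} [DecidableEq V] {rot : V → List V} (hnd : ∀ v, (rot v).Nodup) {par : V → V} {tp : V → V → Prop}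
    {anc : V → V} (r : V) (hlen : (rot r).length ≤ 3) (hanc : anc r ∈ rot r)
    (hch : ∀ x, x ≠ r → par x = r → tp r x ∧ x ∈ rot r) :
    ∃ E P R, Inv rot par {r}ᶜ tp anc {r} E P R := by
  obtain ⟨m, hm, hm1⟩ : ∃ m, m ~r rot r ∧ ∀ a x c, [a, x, c] <+ m → ¬ tp r a → x ≠ r → par x = r → False := by
    by_cases h : ∃ x, x ≠ r ∧ par x = r
    · obtain ⟨x, h1, h2⟩ := h
      obtain ⟨M, hM⟩ := rot_first (hch x h1 h2).2
      refine ⟨x :: M, hM, ?_⟩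
      intro a y c hs ha _ _
      have hl : (x :: M).length ≤ 3 := by rw [hM.perm.length_eq]; exact hlen
      have := hs.eq_of_length_le hl
      simp at this
      rw [this.1] at ha
      exact ha (hch x h1 h2).1
    · exact ⟨rot r, List.IsRotated.refl _, fun a x c _ _ h1 h2 => h ⟨x, h1, h2⟩⟩
  have hmnd : (m.map (Prod.mk r)).Nodup := List.Nodup.map (Prod.mk_right_injective r) (hm.nodup_iff.2 (hnd r))
  have hb : ∀ e ∈ m.map (Prod.mk r), e.1 = r := fun e he => (mem_mk.1 he).1
  refine ⟨∅, [], m.map (Prod.mk r), ?_, by simp, hmnd, hb, ?_, ?_, ?_, ?_, ?_, ?_⟩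
  · exact Con.single r m hm
  · rintro v rfl a ha _
    exact mem_mk.2 ⟨rfl, hm.mem_iff.2 ha⟩
  · rintro v rfl
    exact mem_mk.2 ⟨rfl, hm.mem_iff.2 hanc⟩
  · intro u a x c h1 h2 h3 l1 l2 t1 t2 hx hp
    obtain rfl : u = r := hb _ h1
    have hs : [a, x, c].map (Prod.mk u) <+ m.map (Prod.mk u) := by
      apply sublist_of_idx
      · simpa using ⟨(mem_mk.1 h1).2, (mem_mk.1 h2).2, (mem_mk.1 h3).2⟩
      · simp; omega
    exact hm1 a x c (unmap_mk hs) t1 hx hp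
  · intro e1 m1 e2 m2 e3 m3 e4 m4 _ _ _ _ _ n12
    exact absurd ((hb _ m1).trans (hb _ m2).symm) n12
  · intro v a c f hf h1 _ _ _ _ _ hfv
    exact hfv ((hb _ hf).trans (hb _ h1).symm)
  · rintro b rfl h
    exact absurd rfl h

theorem init_cycle {V : Type*} [DecidableEq V] {rot : V → List V} (hnd : ∀ v, (rot v).Nodup) {par : V → V} {tp : V → V → Prop}
    {anc : V → V} {U : Set V} (n : ℕ) (z : ℕ → V) (hn : 2 ≤ n) (hinj : ∀ i j, i ≤ n → j ≤ n → z i = z j → i = j)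
    (hz0 : z (n+1) = z 0) (hz1 : z 1 ∈ rot (z 0)) (hlen0 : (rot (z 0)).length = 4) (hzn : z n ∈ rot (z 0))
    (hzr : ∀ t, 1 ≤ t → t ≤ n → ∃ c d, [z (t+1), c, d, z (t-1)] ~r rot (z t))
    (hU : ∀ v, v ∉ U ↔ ∃ t, t ≤ n ∧ v = z t)
    (htp1 : ∀ t, t ≤ n → tp (z t) (z (t+1)) ∧ tp (z (t+1)) (z t))
    (htp2 : ∀ s t, s ≤ n → t ≤ n → tp (z s) (z t) → t = s + 1 ∨ s = t + 1 ∨ (s = 0 ∧ t = n) ∨ (s = n ∧ t = 0))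
    (hanc0 : anc (z 0) = z n) (hanc1 : ∀ t, 1 ≤ t → t ≤ n → anc (z t) = z (t-1)) :
    ∃ E P R, Inv rot par U tp anc Uᶜ E P R := by
  have hzU : ∀ t, t ≤ n → z t ∉ U := fun t ht => (hU _).2 ⟨t, ht, rfl⟩
  -- rotations
  obtain ⟨mm, hmm⟩ : ∃ mm : ℕ → List V, ∀ t, t ≤ n → (mm t ~r rot (z t) ∧ (∃ m', mm t = z (t+1) :: m') ∧
      (1 ≤ t → ∃ M, mm t = M ++ [z (t-1)]) ∧ ∀ a x c, [a,x,c] <+ mm t → ¬ tp (z t) a → ¬ tp (z t) c → x ∈ U → False) := by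
    have : ∀ t, ∃ m : List V, t ≤ n → (m ~r rot (z t) ∧ (∃ m', m = z (t+1) :: m') ∧
      (1 ≤ t → ∃ M, m = M ++ [z (t-1)]) ∧ ∀ a x c, [a,x,c] <+ m → ¬ tp (z t) a → ¬ tp (z t) c → x ∈ U → False) := by
      intro t
      by_cases ht : t ≤ n
      swap
      · exact ⟨[], fun h => absurd h ht⟩
      by_cases ht0 : t = 0
      · subst ht0
        obtain ⟨M, hM⟩ := rot_first hz1
        refine ⟨z 1 :: M, fun _ => ⟨hM, ⟨M, rfl⟩, by omega, ?_⟩⟩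
        intro a x c hs ha hc hx
        have t1 := (htp1 0 (by omega)).1
        have t2 := (htp1 n le_rfl).2
        rw [hz0] at t2
        have hl := hM.perm.length_eq
        rw [hlen0] at hl
        have hmem := hM.mem_iff.2 hzn
        have hne : z n ≠ z 1 := fun h => by have := hinj _ _ le_rfl (by omega) h; omega
        have hxz : x ≠ z n := by rintro rfl; exact hzU n le_rfl hx
        simp only [List.mem_cons, hne, false_or] at hmem
        have hs' : [a, x, c] <+ M := by
          rcases List.sublist_cons_iff.1 hs with h | ⟨r, h1, h2⟩
          · exact h
          · simp at h1
            rw [h1.1] at ha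
            exact absurd t1 ha
        have := hs'.eq_of_length_le (by simp at hl ⊢; omega)
        subst this
        simp at hmem
        rcases hmem with h | h | h
        · rw [h] at t2; exact ha t2
        · exact hxz h.symm
        · rw [h] at t2; exact hc t2
      · obtain ⟨c0, d0, hr⟩ := hzr t (by omega) ht
        refine ⟨[z (t+1), c0, d0, z (t-1)], fun _ => ⟨hr, ⟨_, rfl⟩, fun _ => ⟨[z (t+1), c0, d0], rfl⟩, ?_⟩⟩
        intro a x c hs ha hc hx
        have t1 := (htp1 t ht).1
        have t2 := (htp1 (t-1) (by omega)).2
        rw [show t - 1 + 1 = t by omega] at t2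
        rcases List.sublist_cons_iff.1 hs with h | ⟨r, h1, h2⟩
        · have := h.eq_of_length_le (by simp)
          simp at this
          rw [this.2.2] at hc
          exact hc t2
        · simp at h1
          rw [h1.1] at ha
          exact ha t1
    choose mm hmm using this
    exact ⟨mm, hmm⟩
  obtain ⟨J, hJ⟩ : ∃ J : V → ℕ, ∀ t, t ≤ n → J (z t) = t := by
    refine ⟨fun c => if h : ∃ i, i ≤ n ∧ z i = c then h.choose else 0, ?_⟩
    intro i hi
    have h : ∃ j, j ≤ n ∧ z j = z i := ⟨i, hi, rfl⟩
    simp only [h, dif_pos]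
    exact hinj _ _ h.choose_spec.1 hi h.choose_spec.2
  have main : ∀ t, t ≤ n → ∃ E P S, Con rot {v | ∃ s, s ≤ t ∧ v = z s} E (P ++ ((mm t).map (Prod.mk (z t)) ++ S)) ∧
      (∀ a b, (a, b) ∈ E → tp a b) ∧ ((mm t).map (Prod.mk (z t)) ++ S).Nodup ∧
      (∀ e ∈ S, ∃ s, s < t ∧ e.1 = z s) ∧
      (∀ s, s ≤ t → ∀ a ∈ rot (z s), (z s, a) ∉ (mm t).map (Prod.mk (z t)) ++ S → s < t ∧ a = z (s+1)) ∧
      ((mm t).map (Prod.mk (z t)) ++ S).Pairwise (fun e f => J f.1 ≤ J e.1) ∧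
      (∀ v a x c, [a,x,c].map (Prod.mk v) <+ (mm t).map (Prod.mk (z t)) ++ S → ¬ tp v a → ¬ tp v c → x ∈ U → False) := by
    intro t
    induction t with
    | zero =>
      intro _
      obtain ⟨q1, q2, q3, q4⟩ := hmm 0 (by omega)
      refine ⟨∅, [], [], ?_, by simp, ?_, by simp, ?_, ?_, ?_⟩
      · have := Con.single (z 0) (mm 0) q1
        have e : {v | ∃ s, s ≤ 0 ∧ v = z s} = ({z 0} : Set V) := by
          ext v; simp
        rw [e]; simpa using this
      · rw [List.append_nil]
        exact List.Nodup.map (Prod.mk_right_injective _) (q1.nodup_iff.2 (hnd _))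
      · intro s hs a ha h
        obtain rfl : s = 0 := by omega
        exfalso; apply h
        rw [List.append_nil]
        exact mem_mk.2 ⟨rfl, q1.mem_iff.2 ha⟩
      · rw [List.append_nil]
        apply List.pairwise_of_forall_mem_list
        intro e he f hf
        rw [(mem_mk.1 he).1, (mem_mk.1 hf).1]
      · intro v a x c hs
        rw [List.append_nil] at hs
        obtain rfl : v = z 0 := by
          have : (v, a) ∈ (mm 0).map (Prod.mk (z 0)) := hs.subset (by simp)
          exact (mem_mk.1 this).1
        exact q4 a x c (unmap_mk hs)
    | succ t ih =>
      intro ht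
      obtain ⟨E, P, S, hcon, hE, hnodup, hbase, hmem, hpw, hncn⟩ := ih (by omega)
      obtain ⟨p1, ⟨m', p2⟩, p3, p4⟩ := hmm t (by omega)
      obtain ⟨q1, q2, q3, q4⟩ := hmm (t+1) ht
      obtain ⟨M, hM⟩ := q3 (by omega)
      simp only [Nat.add_sub_cancel] at hM
      rw [p2, List.map_cons, List.cons_append] at hcon hnodup hpw hncn hmem
      have hbS : ∀ e ∈ m'.map (Prod.mk (z t)) ++ S, ∃ s, s < t + 1 ∧ e.1 = z s := by
        intro e he
        rcases List.mem_append.1 he with h | h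
        · exact ⟨t, by omega, (mem_mk.1 h).1⟩
        · obtain ⟨s, h1, h2⟩ := hbase e h
          exact ⟨s, by omega, h2⟩
      have hwX : z (t+1) ∉ {v | ∃ s, s ≤ t ∧ v = z s} := by
        rintro ⟨s, hs, h⟩
        have := hinj _ _ (by omega) (by omega) h
        omega
      refine ⟨E ∪ {(z t, z (t+1)), (z (t+1), z t)}, P ++ [(z t, z (t+1))], m'.map (Prod.mk (z t)) ++ S, ?_, ?_, ?_, hbS, ?_, ?_, ?_⟩
      · have := Con.leaf _ E P (m'.map (Prod.mk (z t)) ++ S) M (z t) (z (t+1)) hcon hwX (by rw [← hM]; exact q1)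
        rw [← hM] at this
        have e : {v | ∃ s, s ≤ t + 1 ∧ v = z s} = insert (z (t+1)) {v | ∃ s, s ≤ t ∧ v = z s} := by
          ext v
          simp only [mem_ofPred_eq, mem_insert_iff]
          constructor
          · rintro ⟨s, hs, rfl⟩
            by_cases h : s = t + 1
            · left; rw [h]
            · exact Or.inr ⟨s, by omega, rfl⟩
          · rintro (rfl | ⟨s, hs, rfl⟩)
            · exact ⟨t+1, le_rfl, rfl⟩
            · exact ⟨s, by omega, rfl⟩
        rw [e]
        simpa using this
      · rintro a b (h | h)
        · exact hE a b h
        · simp only [mem_insert_iff, mem_singleton_iff, Prod.mk.injEq] at h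
          rcases h with ⟨rfl, rfl⟩ | ⟨rfl, rfl⟩
          · exact (htp1 t (by omega)).1
          · exact (htp1 t (by omega)).2
      · rw [List.nodup_append]
        refine ⟨List.Nodup.map (Prod.mk_right_injective _) (q1.nodup_iff.2 (hnd _)), (List.nodup_cons.1 hnodup).2, ?_⟩
        rintro e he f hf rfl
        obtain ⟨s, h1, h2⟩ := hbS e hf
        rw [(mem_mk.1 he).1] at h2
        have := hinj _ _ ht (by omega) h2
        omega
      · intro s hs a ha h
        rw [List.mem_append, not_or] at h
        by_cases hst : s = t + 1
        · subst hst
          exact absurd (mem_mk.2 ⟨rfl, q1.mem_iff.2 ha⟩) h.1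
        · by_cases hin : (z s, a) ∈ (z t, z (t+1)) :: (m'.map (Prod.mk (z t)) ++ S)
          · rcases List.mem_cons.1 hin with h' | h'
            · simp only [Prod.mk.injEq] at h'
              have := hinj _ _ (by omega) (by omega) h'.1
              subst this
              exact ⟨by omega, h'.2⟩
            · exact absurd h' h.2
          · have := hmem s (by omega) a ha hin
            exact ⟨by omega, this.2⟩
      · rw [List.pairwise_append]
        refine ⟨?_, (List.pairwise_cons.1 hpw).2, ?_⟩
        · apply List.pairwise_of_forall_mem_list
          intro e he f hf
          rw [(mem_mk.1 he).1, (mem_mk.1 hf).1]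
        · intro e he f hf
          obtain ⟨s, h1, h2⟩ := hbS f hf
          rw [(mem_mk.1 he).1, h2, hJ _ ht, hJ _ (by omega)]
          omega
      · intro v a x c hs
        by_cases hv : v = z (t+1)
        · subst hv
          apply q4 a x c
          rw [List.sublist_append_iff] at hs
          obtain ⟨l1, l2, h1, h2, h3⟩ := hs
          have : l2 = [] := by
            apply List.eq_nil_iff_forall_not_mem.2
            intro e he
            obtain ⟨s, g1, g2⟩ := hbS e (h3.subset he)
            have : e ∈ [a,x,c].map (Prod.mk (z (t+1))) := by rw [h1]; exact List.mem_append_right _ he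
            rw [(mem_mk.1 this).1] at g2
            have := hinj _ _ ht (by omega) g2
            omega
          rw [this, List.append_nil] at h1
          rw [← h1] at h2
          exact unmap_mk h2
        · apply hncn v a x c
          rw [List.sublist_append_iff] at hs
          obtain ⟨l1, l2, h1, h2, h3⟩ := hs
          have : l1 = [] := by
            apply List.eq_nil_iff_forall_not_mem.2
            intro e he
            have g := (mem_mk.1 (h2.subset he)).1
            have : e ∈ [a,x,c].map (Prod.mk v) := by rw [h1]; exact List.mem_append_left _ he
            rw [(mem_mk.1 this).1] at g
            exact hv g
          rw [this, List.nil_append] at h1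
          rw [h1]
          exact h3.trans (List.sublist_cons_self _ _)
  obtain ⟨E, P, S, hcon, hE, hnodup, hbase, hmem, hpw, hncn⟩ := main n le_rfl
  set R := (mm n).map (Prod.mk (z n)) ++ S with hR
  have hX : {v | ∃ s, s ≤ n ∧ v = z s} = Uᶜ := by
    ext v; simp only [mem_ofPred_eq, mem_compl_iff, hU]
  have hb : ∀ e ∈ R, ∃ s, s ≤ n ∧ e.1 = z s := by
    intro e he
    rcases List.mem_append.1 he with h | h
    · exact ⟨n, le_rfl, (mem_mk.1 h).1⟩
    · obtain ⟨s, h1, h2⟩ := hbase e h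
      exact ⟨s, by omega, h2⟩
  refine ⟨E, P, R, ?_, hE, hnodup, ?_, ?_, ?_, ?_, ?_, ?_, ?_⟩
  · rw [← hX]; exact hcon
  · intro e he
    exact (hU _).2 (hb e he)
  · intro v hv a ha h
    obtain ⟨s, hs, rfl⟩ := (hU _).1 hv
    by_contra hnot
    obtain ⟨h1, rfl⟩ := hmem s hs a ha hnot
    rcases h with h | h
    · exact h (htp1 s hs).1
    · exact h (hzU _ (by omega))
  · intro v hv
    obtain ⟨s, hs, rfl⟩ := (hU _).1 hv
    by_contra hnot
    by_cases h0 : s = 0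
    · subst h0
      rw [hanc0] at hnot
      obtain ⟨h1, h2⟩ := hmem 0 hs _ hzn hnot
      have := hinj _ _ le_rfl (by omega) h2
      omega
    · rw [hanc1 s (by omega) hs] at hnot
      obtain ⟨c, d, hr⟩ := hzr s (by omega) hs
      obtain ⟨h1, h2⟩ := hmem s hs _ (hr.mem_iff.1 (by simp)) hnot
      have := hinj _ _ (by omega) (by omega) h2
      omega
  · intro u a x c h1 h2 h3 l1 l2 t1 t2 hx _
    refine hncn u a x c ?_ t1 t2 hx
    apply sublist_of_idx
    · simpa using ⟨h1, h2, h3⟩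
    · simp; omega
  · intro e1 m1 e2 m2 e3 m3 e4 m4 l12 l23 l34 q13 q24 n12 n14 n32 n34
    have o12 := idx_pairwise hpw m1 m2 l12
    have o23 := idx_pairwise hpw m2 m3 l23
    have o34 := idx_pairwise hpw m3 m4 l34
    obtain ⟨s1, b1, k1⟩ := hb _ m1
    obtain ⟨s2, b2, k2⟩ := hb _ m2
    obtain ⟨s3, b3, k3⟩ := hb _ m3
    obtain ⟨s4, b4, k4⟩ := hb _ m4
    rw [k1, k2] at o12
    rw [k2, k3] at o23
    rw [k3, k4] at o34
    rw [hJ _ b1, hJ _ b2] at o12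
    rw [hJ _ b2, hJ _ b3] at o23
    rw [hJ _ b3, hJ _ b4] at o34
    rw [k1, k2] at n12
    rw [k3, k2] at n32
    rw [k3, k4] at n34
    rw [k1, k3] at q13
    rw [k2, k4] at q24
    have n12' : s1 ≠ s2 := fun h => n12 (by rw [h])
    have n32' : s3 ≠ s2 := fun h => n32 (by rw [h])
    have n34' : s3 ≠ s4 := fun h => n34 (by rw [h])
    have q13' : s1 = s3 ∨ _ := q13.imp (hinj _ _ b1 b3) (htp2 _ _ b1 b3)
    have q24' : s2 = s4 ∨ _ := q24.imp (hinj _ _ b2 b4) (htp2 _ _ b2 b4)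
    omega
  · intro v a c f hf h1 h2 l1 l2 _ _ hfv
    have o1 := idx_pairwise hpw h1 hf l1
    have o2 := idx_pairwise hpw hf h2 l2
    obtain ⟨s1, b1, k1⟩ := hb _ hf
    obtain ⟨s2, b2, k2⟩ := hb _ h1
    simp only at k2 o1 o2
    rw [k1, k2, hJ _ b1, hJ _ b2] at o1 o2
    exact hfv (by rw [k1, k2, le_antisymm o1 o2])
  · intro b hb hb'
    exact absurd hb' hb

end FP

namespace FP
open scoped List

theorem boundary {V : Type*} {G : SimpleGraph V} (hG : G.Connected) (U : Finset V) (h1 : U.Nonempty) (h2 : ∃ w, w ∉ U) :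
    ∃ w, w ∉ U ∧ ∃ y ∈ U, G.Adj y w := by
  obtain ⟨y, hy⟩ := h1
  obtain ⟨w, hw⟩ := h2
  obtain ⟨p⟩ := hG.preconnected y w
  obtain ⟨d, -, hd1, hd2⟩ := p.exists_boundary_dart (U : Set V) (by simpa using hy) (by simpa using hw)
  exact ⟨d.snd, by simpa using hd2, d.fst, by simpa using hd1, d.adj⟩

theorem book_of_init {V : Type*} [Finite V] [DecidableEq V] {G : SimpleGraph V} {rot : V → List V} (hnd : ∀ v, (rot v).Nodup)
    (hrot : ∀ v w, w ∈ rot v ↔ G.Adj v w) (hlen : ∀ v, (rot v).length ≤ 4)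
    (hna : ∀ X E ℓ, Con rot X E ℓ → ∀ a b p q, (a,b) ∉ E → (p,q) ∉ E → (a,b) ≠ (p,q) → (a,b) ≠ (q,p) →
      ¬ [(a,b),(p,q),(b,a),(q,p)] <+ ℓ)
    (U : Finset V) (par : V → V) (rk : V → ℕ) (hpar : ∀ v ∈ U, G.Adj v (par v) ∧ (par v ∈ U → rk (par v) < rk v) ∧
      ∀ a b, Opp rot v a b → ¬ ∀ c, (c = par v ∨ (c ∈ U ∧ par c = v)) ↔ (c = a ∨ c = b))
    (tp C : V → V → Prop) (htp : ∀ a b, tp a b ↔ (a ∈ U ∧ b = par a) ∨ (b ∈ U ∧ par b = a) ∨ C a b)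
    (hC : ∀ a b, C a b → C b a ∧ a ∉ U) (anc : V → V) (hanc : ∀ v ∈ U, anc v = par v)
    (hinit : ∃ E P R, Inv rot par (U : Set V) tp anc (U : Set V)ᶜ E P R) : Book G := by
  have hsym : ∀ a b, tp a b → tp b a := by
    intro a b h
    rw [htp] at h ⊢
    rcases h with h | h | h
    · exact Or.inr (Or.inl ⟨h.1, h.2.symm⟩)
    · exact Or.inl ⟨h.1, h.2.symm⟩
    · exact Or.inr (Or.inr (hC _ _ h).1)
  have htpU : ∀ w ∈ U, ∀ b, tp w b ↔ (b = par w ∨ (b ∈ U ∧ par b = w)) := by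
    intro w hw b
    rw [htp]
    constructor
    · rintro (h | h | h)
      · exact Or.inl h.2
      · exact Or.inr h
      · exact absurd hw (hC _ _ h).2
    · rintro (h | h)
      · exact Or.inl ⟨hw, h⟩
      · exact Or.inr (Or.inl h)
  obtain ⟨E, P, R, hI⟩ := hinit
  obtain ⟨E', P', R', hI'⟩ := Inv.all (rk := rk) hsym (fun v hv h => (hpar v hv).2.1 h) hanc
    (fun w hw => (hrot _ _).2 (hpar w hw).1.symm) (fun w hw => (htpU w hw _).2 (Or.inl rfl))
    (fun w hw b h => ((htpU w hw b).1 h).imp id (fun h => ⟨h.2, h.1⟩)) hnd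
    (fun w hw => Ins.of_good hnd hrot (hlen w) (hpar w hw).1 (fun x hx => (hpar x hx).1) (htpU w hw) (hpar w hw).2.2)
    _ _ E P R rfl (by rw [compl_compl]) hI
  exact hI'.book hsym hrot (hna _ _ _ hI'.con)

theorem book_connected {V : Type*} [Finite V] {G : SimpleGraph V} (hG : G.Connected) (hLM : LM G)
    (hdeg : ∀ v, (G.neighborSet v).ncard ≤ 4) : Book G := by
  classical
  have := Fintype.ofFinite V
  rcases subsingleton_or_nontrivial V with hss | hnt
  · exact ⟨fun _ => 0, fun _ _ => False, fun a b _ => Subsingleton.elim a b, fun _ _ h => h,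
      fun a b p q h => absurd (Subsingleton.elim a b) h.ne⟩
  obtain ⟨rot, hnd, hrot, hna⟩ := hLM.exists_rot
  have hlen : ∀ v, (rot v).length ≤ 4 := by
    intro v
    have e : G.neighborSet v = ((rot v).toFinset : Set V) := by
      ext w; simp [hrot]
    have := hdeg v
    rw [e, Set.ncard_coe_finset, List.toFinset_card_of_nodup (hnd v)] at this
    exact this
  have hO := Opp.opRel hnd hrot
  have hT := tree_lemma hO (boundary hG)
  by_cases hr : ∃ r, (rot r).length ≤ 3
  · obtain ⟨r, hr⟩ := hr
    obtain ⟨par, rk, hpar⟩ := hT (Finset.univ.erase r) ⟨r, by simp⟩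
    obtain ⟨s, hs⟩ : ∃ s, s ∈ rot r := by
      obtain ⟨w, hw, y, hy, h⟩ := boundary hG {r} (by simp) (by
        obtain ⟨w, hw⟩ := exists_ne r; exact ⟨w, by simpa using hw⟩)
      simp at hy; subst hy
      exact ⟨w, (hrot _ _).2 h⟩
    refine book_of_init hnd hrot hlen hna (Finset.univ.erase r) par rk hpar
      (fun a b => (a ∈ Finset.univ.erase r ∧ b = par a) ∨ (b ∈ Finset.univ.erase r ∧ par b = a) ∨ False)
      (fun _ _ => False) (fun a b => Iff.rfl) (fun _ _ h => h.elim) (fun v => if v = r then s else par v) ?_ ?_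
    · intro v hv
      simp at hv
      simp [hv]
    · have e : ((Finset.univ.erase r : Finset V) : Set V) = {r}ᶜ := by ext; simp
      rw [e, compl_compl]
      apply init_root hnd r hr (by simpa using hs)
      intro x hx hp
      have hx' : x ∈ Finset.univ.erase r := by simpa using hx
      refine ⟨Or.inr (Or.inl ⟨hx', hp⟩), ?_⟩
      have := (hpar x hx').1
      rw [hp] at this
      exact (hrot _ _).2 this.symm
  · push Not at hr
    have hlen4 : ∀ v, (rot v).length = 4 := fun v => le_antisymm (hlen v) (hr v)
    obtain ⟨n, z, hn, hinj, hz0, hz1, hzr⟩ := face_cycle hnd hrot hlen4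
    let U : Finset V := Finset.univ \ (Finset.range (n+1)).image z
    have hU : ∀ v, v ∉ U ↔ ∃ t, t ≤ n ∧ v = z t := by
      intro v
      simp only [U, Finset.mem_sdiff, Finset.mem_univ, true_and, not_not, Finset.mem_image, Finset.mem_range, Nat.lt_succ_iff]
      exact exists_congr fun t => and_congr_right fun _ => eq_comm
    have hzU : ∀ t, t ≤ n → z t ∉ U := fun t ht => (hU _).2 ⟨t, ht, rfl⟩
    have hzU' : ∀ t, t ≤ n + 1 → z t ∉ U := by
      intro t ht
      by_cases h : t = n + 1
      · rw [h, hz0]; exact hzU 0 (by omega)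
      · exact hzU t (by omega)
    obtain ⟨par, rk, hpar⟩ := hT U ⟨z 0, hzU 0 (by omega)⟩
    let C : V → V → Prop := fun a b => ∃ t, t ≤ n ∧ ((a = z t ∧ b = z (t+1)) ∨ (b = z t ∧ a = z (t+1)))
    obtain ⟨J, hJ⟩ : ∃ J : V → ℕ, ∀ t, t ≤ n → J (z t) = t := by
      refine ⟨fun c => if h : ∃ i, i ≤ n ∧ z i = c then h.choose else 0, ?_⟩
      intro i hi
      have h : ∃ j, j ≤ n ∧ z j = z i := ⟨i, hi, rfl⟩
      simp only [h, dif_pos]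
      exact hinj _ _ h.choose_spec.1 hi h.choose_spec.2
    let anc : V → V := fun v => if v ∈ U then par v else if J v = 0 then z n else z (J v - 1)
    refine book_of_init hnd hrot hlen hna U par rk hpar
      (fun a b => (a ∈ U ∧ b = par a) ∨ (b ∈ U ∧ par b = a) ∨ C a b) C (fun a b => Iff.rfl) ?_ anc ?_ ?_
    · rintro a b ⟨t, ht, h⟩
      refine ⟨⟨t, ht, h.symm⟩, ?_⟩
      rcases h with ⟨rfl, rfl⟩ | ⟨rfl, rfl⟩
      · exact hzU t ht
      · exact hzU' (t+1) (by omega)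
    · intro v hv
      simp [anc, hv]
    · have hzn : z n ∈ rot (z 0) := by
        obtain ⟨c, d, h⟩ := hzr n (by omega) le_rfl
        have : z (n+1) ∈ rot (z n) := h.mem_iff.1 (by simp)
        rw [hz0, hrot] at this
        exact (hrot _ _).2 this.symm
      refine init_cycle (U := (U : Set V)) hnd n z hn hinj hz0 hz1 (hlen4 _) hzn hzr (by simpa using hU) ?_ ?_ ?_ ?_
      · intro t ht
        exact ⟨Or.inr (Or.inr ⟨t, ht, Or.inl ⟨rfl, rfl⟩⟩), Or.inr (Or.inr ⟨t, ht, Or.inr ⟨rfl, rfl⟩⟩)⟩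
      · rintro s t hs ht (h | h | ⟨i, hi, h⟩)
        · exact absurd h.1 (hzU s hs)
        · exact absurd h.1 (hzU t ht)
        · by_cases hin : i = n
          · subst hin
            rw [hz0] at h
            rcases h with ⟨h1, h2⟩ | ⟨h1, h2⟩
            · have := hinj _ _ hs hi h1; have := hinj _ _ ht (by omega) h2; omega
            · have := hinj _ _ ht hi h1; have := hinj _ _ hs (by omega) h2; omega
          · rcases h with ⟨h1, h2⟩ | ⟨h1, h2⟩
            · have := hinj _ _ hs hi h1; have := hinj _ _ ht (by omega) h2; omega
            · have := hinj _ _ ht hi h1; have := hinj _ _ hs (by omega) h2; omega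
      · simp [anc, hzU 0 (by omega), hJ 0 (by omega)]
      · intro t ht ht'
        have : t ≠ 0 := by omega
        simp [anc, hzU t ht', hJ t ht', this]

theorem LM.induce {V : Type*} {G : SimpleGraph V} (h : LM G) (s : Set V) : LM (G.induce s) := by
  obtain ⟨S, b, h1, h2, h3, h4, h5⟩ := h
  refine ⟨fun v => S v, fun v => b v, fun v => h1 v, fun v => h2 v, fun v => h3 v, ?_, ?_⟩
  · intro u v huv
    exact h4 u v (fun h => huv (Subtype.ext h))
  · intro u v huv
    exact h5 u v huv

theorem book_all {V : Type*} [Finite V] {G : SimpleGraph V} (hLM : LM G)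
    (hdeg : ∀ v, (G.neighborSet v).ncard ≤ 4) :
    ∃ (x : V → ℝ) (tp : V → V → Prop), Function.Injective x ∧ (∀ a b, tp a b → tp b a) ∧
    ∀ a b p q, G.Adj a b → G.Adj p q → (tp a b ↔ tp p q) → ¬ (x a < x p ∧ x p < x b ∧ x b < x q) := by
  classical
  have hB : ∀ c : G.ConnectedComponent, Book (G.induce c.supp) := by
    intro c
    apply book_connected
    · exact c.connected_toSimpleGraph
    · exact hLM.induce _
    · intro v
      refine le_trans ?_ (hdeg v)
      refine Set.ncard_le_ncard_of_injOn Subtype.val ?_ Subtype.val_injective.injOn (Set.toFinite _)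
      intro w hw
      exact hw
  choose xc tc hinj hsym hbook using hB
  obtain ⟨K, ⟨eK⟩⟩ := Finite.exists_equiv_fin G.ConnectedComponent
  let comp : V → G.ConnectedComponent := fun v => G.connectedComponentMk v
  let y : V → ℕ := fun v => xc (comp v) ⟨v, rfl⟩
  obtain ⟨N, hN⟩ : ∃ N : ℕ, ∀ v, y v < N := by
    obtain ⟨N, hN⟩ := (Set.finite_range y).bddAbove
    exact ⟨N+1, fun v => Nat.lt_succ_of_le (hN (Set.mem_range_self v))⟩
  let X : V → ℕ := fun v => (eK (comp v) : ℕ) * N + y v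
  have hXlt : ∀ u v, X u < X v → (eK (comp u) : ℕ) ≤ eK (comp v) := by
    intro u v h
    by_contra h'
    push Not at h'
    have h1 : ((eK (comp v) : ℕ) + 1) * N ≤ (eK (comp u) : ℕ) * N := Nat.mul_le_mul_right _ h'
    have := hN v
    simp only [X] at h
    rw [Nat.add_mul] at h1
    omega
  have hXeq : ∀ u v, X u = X v → comp u = comp v := by
    intro u v h
    have hu := hN u; have hv := hN v
    have : (eK (comp u) : ℕ) = eK (comp v) := by
      have h1 : X u / N = (eK (comp u) : ℕ) := by
        simp only [X]
        rw [Nat.add_comm, Nat.add_mul_div_right _ _ (by omega), Nat.div_eq_of_lt hu, Nat.zero_add]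
      have h2 : X v / N = (eK (comp v) : ℕ) := by
        simp only [X]
        rw [Nat.add_comm, Nat.add_mul_div_right _ _ (by omega), Nat.div_eq_of_lt hv, Nat.zero_add]
      rw [← h1, ← h2, h]
    exact eK.injective (Fin.ext this)
  have hy : ∀ (c : G.ConnectedComponent) (v : V) (hv : comp v = c), y v = xc c ⟨v, hv⟩ := by
    rintro c v rfl; rfl
  refine ⟨fun v => X v, fun a b => ∃ h : comp a = comp b, tc (comp b) ⟨a, h⟩ ⟨b, rfl⟩, ?_, ?_, ?_⟩
  · intro u v h
    have h' : X u = X v := Nat.cast_injective (R := ℝ) h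
    have hc := hXeq u v h'
    have hyy : y u = y v := by
      simp only [X, hc] at h'
      omega
    rw [hy (comp v) u hc, hy (comp v) v rfl] at hyy
    exact congrArg Subtype.val (hinj (comp v) hyy)
  · rintro a b ⟨h, ht⟩
    refine ⟨h.symm, ?_⟩
    have key : ∀ (c d : G.ConnectedComponent) (e : c = d) (ha : comp a = c) (hb : comp b = c),
        tc c ⟨a, ha⟩ ⟨b, hb⟩ → tc d ⟨b, hb.trans e⟩ ⟨a, ha.trans e⟩ := by
      rintro c d rfl ha hb h
      exact hsym _ _ _ h
    exact key _ _ h.symm h rfl ht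
  · rintro a b p q hab hpq hiff ⟨l1, l2, l3⟩
    have l1' : X a < X p := (Nat.cast_lt (α := ℝ)).1 l1
    have l2' : X p < X b := (Nat.cast_lt (α := ℝ)).1 l2
    have l3' : X b < X q := (Nat.cast_lt (α := ℝ)).1 l3
    have cab : comp a = comp b := SimpleGraph.ConnectedComponent.sound hab.reachable
    have cpq : comp p = comp q := SimpleGraph.ConnectedComponent.sound hpq.reachable
    have cpb : comp p = comp b := by
      have i1 := hXlt _ _ l1'; have i2 := hXlt _ _ l2'
      rw [cab] at i1
      exact eK.injective (Fin.ext (le_antisymm i2 i1))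
    have key : ∀ (c : G.ConnectedComponent) (ha : comp a = c) (hb : comp b = c) (hp : comp p = c) (hq : comp q = c),
        (tc c ⟨a, ha⟩ ⟨b, hb⟩ ↔ tc c ⟨p, hp⟩ ⟨q, hq⟩) → False := by
      intro c ha hb hp hq hiff
      have Xv : ∀ v, comp v = c → X v = eK c * N + y v := by
        rintro v rfl; rfl
      rw [Xv a ha, Xv p hp] at l1'
      rw [Xv p hp, Xv b hb] at l2'
      rw [Xv b hb, Xv q hq] at l3'
      rw [hy c a ha, hy c p hp] at l1'
      rw [hy c p hp, hy c b hb] at l2'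
      rw [hy c b hb, hy c q hq] at l3'
      exact hbook c ⟨a, ha⟩ ⟨b, hb⟩ ⟨p, hp⟩ ⟨q, hq⟩ hab hpq hiff ⟨by omega, by omega, by omega⟩
    have cqb : comp q = comp b := cpq.symm.trans cpb
    refine key (comp b) cab rfl cpb cqb ?_
    constructor
    · intro h
      obtain ⟨h1, h2⟩ := hiff.1 ⟨cab, h⟩
      have tr : ∀ (d : G.ConnectedComponent) (hp : comp p = d) (hq : comp q = d) (e : d = comp b),
        tc d ⟨p, hp⟩ ⟨q, hq⟩ → tc (comp b) ⟨p, cpb⟩ ⟨q, cqb⟩ := by rintro d hp hq rfl h; exact h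
      exact tr _ h1 rfl cqb h2
    · intro h
      have tr : ∀ (d : G.ConnectedComponent) (hp : comp p = d) (hq : comp q = d) (e : d = comp b),
        tc (comp b) ⟨p, cpb⟩ ⟨q, cqb⟩ → tc d ⟨p, hp⟩ ⟨q, hq⟩ := by rintro d hp hq rfl h; exact h
      exact (hiff.2 ⟨cpq, tr _ cpq rfl cqb h⟩).2

end FP

theorem four_planar_two_page_book_embedding {V : Type u} [Fintype V]
    (G : SimpleGraph V) (hplanar : G.IsPlanar) (hdeg : G.MaxDegreeLE 4) :
    ∃ (x : V → ℝ) (top : Set (Sym2 V)), Function.Injective x ∧ top ⊆ G.edgeSet ∧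
      ∀ e ∈ G.edgeSet, ∀ e' ∈ G.edgeSet, (e ∈ top ↔ e' ∈ top) →
        ¬ Alternates x e e' := by
  obtain ⟨E⟩ := hplanar
  obtain ⟨x, tp, h1, h2, h3⟩ := FP.book_all (FP.LM_of_planar E) hdeg
  refine ⟨x, {e | ∃ a b, G.Adj a b ∧ tp a b ∧ e = s(a, b)}, h1, ?_, ?_⟩
  · rintro e ⟨a, b, h, -, rfl⟩
    exact h
  · rintro e he e' he' hiff ⟨a, b, p, q, rfl, rfl, l⟩
    have key : ∀ a b, G.Adj a b → (s(a, b) ∈ {e | ∃ a b, G.Adj a b ∧ tp a b ∧ e = s(a, b)} ↔ tp a b) := by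
      intro a b hab
      constructor
      · rintro ⟨c, d, h, ht, e⟩
        rw [Sym2.eq_iff] at e
        rcases e with ⟨rfl, rfl⟩ | ⟨rfl, rfl⟩
        · exact ht
        · exact h2 _ _ ht
      · intro ht
        exact ⟨a, b, hab, ht, rfl⟩
    rw [key a b he, key p q he'] at hiff
    exact h3 a b p q he he' hiff l
end
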